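/- There exists a constant δ > 0 and N ∈ ℕ such that for all n ≥ N, n!·(c − exp(−δ·(log n · log log n)^{1/2}))^n ≤ C(n) ≤ n!·(c + exp(−δ·(log n · log log n)^{1/2}))^n. In other words, C(n) = n!·(c + exp(−Ω((log n · log log n)^{1/2})))^n. -/

import Mathlib

open Real Filter

/-- `C(n)`: the number of coprime permutations of `{1, …, n}`,
i.e. permutations `σ` with `gcd(m, σ(m)) = 1` for all `m ∈ {1, …, n}`. -/
noncomputable def coprimePermCount (n : ℕ) : ℕ :=
  Nat.card {σ : Equiv.Perm (Fin n) // ∀ m : Fin n, Nat.gcd (m.1 + 1) ((σ m).1 + 1) = 1}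

/-- The constant `c = ∏_p (p-1)^{2(1-1/p)} / (p · (p-2)^{1-2/p})`, where the factor at
`p = 2` is `1/2` (real powers, with `(0:ℝ) ^ (0:ℝ) = 1`). -/
noncomputable def coprimeConst : ℝ :=
  ∏' p : Nat.Primes,
    (((p : ℕ) : ℝ) - 1) ^ (2 * (1 - 1 / ((p : ℕ) : ℝ))) /
      (((p : ℕ) : ℝ) * (((p : ℕ) : ℝ) - 2) ^ (1 - 2 / ((p : ℕ) : ℝ)))

/-! A coprime permutation sends even numbers to odd ones, so `C(n)` is, up to negligible factors,
the square of the number of coprime matchings of the `h ≈ n / 2` even numbers with the odd ones.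
Let the type of a number be the set of odd primes `p ≤ z` dividing it. Numbers with disjoint types
are coprime except for few pairs that share a prime above `z`, so the coprimality matrix is nearly
a block matrix over pairs of types.

Give the type `t` the weight `g(t) = ∏ p ∈ t, (p - 1) / (p - 2)`. As divisibility by the small
primes is equidistributed, the numbers of type disjoint from `S` have total weight about
`h * M / g(S)`, where `M` is the mean weight; that is, the entries `g(S) * g(T) / (h * M)` on pairs
of disjoint types form a nearly doubly stochastic matrix. For the upper bound, replace each
permutation by the word of types of its values and compare the weight of the admissible words with
the product of the row sums. For the lower bound, prescribe the number of pairs in each block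
according to the doubly stochastic matrix, choose the pairs greedily, and match the few remaining
numbers by means of reserved large primes, which are coprime to almost everything. Both counts are
`(h * M / (e * G ^ 2)) ^ h` up to the error terms, `G` being the geometric mean weight, and
`M / G ^ 2` is the product of the factors of `c` at odd primes `p ≤ z`, hence close to `2 * c`.

Only types with fewer than `k` primes are used: there are at most `z ^ k` of them, which has to
stay below a power of `n`, while a proportion of about `k ^ (-k)` of all numbers is lost. Taking
`log z` a multiple of `√(log n * log (log n))` makes both this proportion and the error `1 / z`
from truncating the product for `c` as small as `exp (-Ω(√(log n * log (log n))))`. -/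

section
open Finset

theorem div_exp_one_pow_le_factorial (n : ℕ) : (n / exp 1 : ℝ) ^ n ≤ n.factorial := by
  have h := pow_div_factorial_le_exp (x := n) n.cast_nonneg n
  rw [div_le_iff₀ (by positivity)] at h
  rw [div_pow, ← exp_nat_mul, mul_one, div_le_iff₀' (exp_pos _)]
  exact h

theorem factorial_le_exp_one_mul_div_exp_one_pow {n : ℕ} (hn : n ≠ 0) :
    (n.factorial : ℝ) ≤ exp 1 * n * (n / exp 1) ^ n := by
  obtain ⟨m, rfl⟩ := Nat.exists_eq_succ_of_ne_zero hn
  have hseq : Stirling.stirlingSeq (m + 1) ≤ exp 1 / √2 := by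
    simpa [Stirling.stirlingSeq_one] using Stirling.stirlingSeq'_antitone m.zero_le
  rw [Stirling.stirlingSeq, div_le_iff₀ (by positivity)] at hseq
  calc ((m + 1).factorial : ℝ)
      ≤ exp 1 / √2 * (√(2 * (m + 1 : ℕ)) * ((m + 1 : ℕ) / exp 1) ^ (m + 1)) := hseq
    _ = exp 1 * √(m + 1 : ℕ) * ((m + 1 : ℕ) / exp 1) ^ (m + 1) := by
        rw [sqrt_mul zero_le_two]
        field_simp
    _ ≤ exp 1 * (m + 1 : ℕ) * ((m + 1 : ℕ) / exp 1) ^ (m + 1) := by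
        gcongr
        exact sqrt_le_self_iff.2 (.inr (by simp))

theorem pow_mul_factorial_le_pow_mul_descFactorial {n r : ℕ} (hr : r ≤ n) :
    n ^ r * r.factorial ≤ r ^ r * n.descFactorial r := by
  rw [← Nat.descFactorial_self, Nat.descFactorial_eq_prod_range, Nat.descFactorial_eq_prod_range,
    pow_eq_prod_const, pow_eq_prod_const, ← prod_mul_distrib, ← prod_mul_distrib]
  refine prod_le_prod' fun i _ => ?_
  rw [Nat.mul_sub, Nat.mul_sub, mul_comm n r]
  exact Nat.sub_le_sub_left (Nat.mul_le_mul_right i hr) _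

theorem div_exp_one_pow_le_descFactorial {n r : ℕ} (hr : r ≤ n) :
    (n / exp 1 : ℝ) ^ r ≤ n.descFactorial r := by
  rcases r.eq_zero_or_pos with rfl | hr0
  · simp
  have hfact := div_exp_one_pow_le_factorial r
  have hdesc : (n : ℝ) ^ r * r.factorial ≤ (r : ℝ) ^ r * n.descFactorial r := by
    exact_mod_cast pow_mul_factorial_le_pow_mul_descFactorial hr
  have hpos : (0 : ℝ) < (r : ℝ) ^ r := by positivity
  refine le_of_mul_le_mul_left ?_ hpos
  calc (r : ℝ) ^ r * (n / exp 1) ^ r = n ^ r * (r / exp 1) ^ r := by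
        rw [div_pow, div_pow]
        ring
    _ ≤ n ^ r * r.factorial := by gcongr
    _ ≤ r ^ r * n.descFactorial r := hdesc

/-- The number of perfect matchings of the bipartite graph `A` on two copies of `V`, that is, the
permanent of its 0-1 biadjacency matrix. -/
noncomputable def matchingCount {V : Type*} (A : V → V → Prop) : ℕ :=
  Nat.card {σ : Equiv.Perm V // ∀ i, A i (σ i)}

theorem matchingCount_mono {V : Type*} [Finite V] {A B : V → V → Prop}
    (h : ∀ i j, A i j → B i j) :
    matchingCount A ≤ matchingCount B :=
  Nat.card_le_card_of_injective (Subtype.map id fun σ hσ i => h i (σ i) (hσ i))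
    (Subtype.map_injective _ Function.injective_id)

section WordCounting

variable {V τ : Type*} [Fintype V] [DecidableEq τ]

theorem matchingCount_eq_card_filter [DecidableEq V] (A : V → V → Prop) [DecidableRel A] :
    matchingCount A = #{σ : Equiv.Perm V | ∀ i, A i (σ i)} := by
  rw [matchingCount, Nat.card_eq_fintype_card, Fintype.card_subtype]

theorem card_perm_comp_eq_le [DecidableEq V] (c w : V → τ) :
    #{σ : Equiv.Perm V | c ∘ σ = w} ≤ ∏ t ∈ univ.image c, (#{a | c a = t}).factorial := by
  have hstab := DomMulAct.stabilizer_card' c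
  simp only [Fintype.card_subtype] at hstab
  rw [← hstab]
  rcases ({σ : Equiv.Perm V | c ∘ σ = w} : Finset _).eq_empty_or_nonempty with hempty | ⟨σ₀, hσ₀⟩
  · simp [hempty]
  · refine card_le_card_of_injOn (· * σ₀⁻¹) (fun σ hσ => ?_) (mul_left_injective _).injOn
    simp only [coe_filter, mem_univ, true_and, Set.mem_ofPred_eq, mem_filter] at hσ hσ₀ ⊢
    ext a
    simpa using congrFun (hσ.trans hσ₀.symm) (σ₀.symm a)

theorem card_mul_prod_le_prod_sum_of_rearrangements (A : V → τ → Prop) [∀ i, DecidablePred (A i)]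
    (c : V → τ) {g : τ → ℝ} (hg : ∀ t, 0 ≤ g t) (W : Finset (V → τ))
    (hperm : ∀ w ∈ W, ∃ σ : Equiv.Perm V, c ∘ σ = w) (hW : ∀ w ∈ W, ∀ i, A i (w i)) :
    #W * ∏ j, (#{a | c a = c j} * g (c j)) ≤ ∏ i, ∑ j with A i (c j), g (c j) := by
  classical
  have hrow (i : V) : ∑ j with A i (c j), g (c j) =
      ∑ t ∈ univ.image c with A i t, #{a | c a = t} * g t := by
    rw [sum_filter, sum_filter, sum_comp (fun t => if A i t then g t else 0)]
    exact sum_congr rfl fun t _ => by rw [nsmul_eq_mul, mul_ite, mul_zero]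
  -- Each admissible rearrangement of `c` contributes the same monomial to the expanded product.
  simp_rw [hrow]
  rw [prod_univ_sum, ← nsmul_eq_mul, ← sum_const]
  calc ∑ _w ∈ W, ∏ j, (#{a | c a = c j} * g (c j))
      = ∑ w ∈ W, ∏ i, (#{a | c a = w i} * g (w i)) := by
        refine sum_congr rfl fun w hw => ?_
        obtain ⟨σ, rfl⟩ := hperm w hw
        exact (Equiv.prod_comp σ fun j => (#{a | c a = c j} * g (c j) : ℝ)).symm
    _ ≤ _ := by
        refine sum_le_sum_of_subset_of_nonneg (fun w hw => ?_) fun w _ _ =>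
          prod_nonneg fun i _ => mul_nonneg (Nat.cast_nonneg _) (hg _)
        obtain ⟨σ, rfl⟩ := hperm w hw
        exact Fintype.mem_piFinset.2 fun i => mem_filter.2
          ⟨mem_image_of_mem _ (mem_univ _), hW _ hw i⟩

theorem prod_factorial_card_fiber_le (c : V → τ) :
    ∏ t ∈ univ.image c, ((#{a | c a = t}).factorial : ℝ) ≤
      (exp 1 * Fintype.card V) ^ #(univ.image c) * exp (-Fintype.card V) *
        ∏ j, (#{a | c a = c j} : ℝ) := by
  have hexp : exp (-Fintype.card V) = ∏ t ∈ univ.image c, exp (-1) ^ #{a | c a = t} := by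
    rw [← prod_comp (fun _ => exp (-1)) c, prod_const, card_univ, ← exp_nat_mul, mul_neg_one]
  rw [hexp, prod_comp (fun t => (#{a | c a = t} : ℝ)) c, ← prod_const, ← prod_mul_distrib,
    ← prod_mul_distrib]
  refine prod_le_prod (fun _ _ => by positivity) fun t ht => ?_
  obtain ⟨j, -, rfl⟩ := mem_image.1 ht
  have hpos : 0 < #{a | c a = c j} := card_pos.2 ⟨j, by simp⟩
  refine (factorial_le_exp_one_mul_div_exp_one_pow hpos.ne').trans ?_
  rw [mul_assoc _ (exp (-1) ^ _), ← mul_pow, exp_neg, ← div_eq_inv_mul]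
  gcongr
  exact card_le_univ _

theorem matchingCount_mul_prod_le (A : V → τ → Prop) [∀ i, DecidablePred (A i)] (c : V → τ)
    {g : τ → ℝ} (hg : ∀ t, 0 ≤ g t) :
    matchingCount (fun i j => A i (c j)) * ∏ j, g (c j) ≤
      (exp 1 * Fintype.card V) ^ #(univ.image c) * exp (-Fintype.card V) *
        ∏ i, ∑ j with A i (c j), g (c j) := by
  classical
  set P : Finset (Equiv.Perm V) := {σ | ∀ i, A i (c (σ i))} with hP
  set W : Finset (V → τ) := P.image fun σ : Equiv.Perm V => c ∘ σ
  have hfibers : #P ≤ (∏ t ∈ univ.image c, (#{a | c a = t}).factorial) * #W :=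
    card_le_mul_card_image P _ fun w _ =>
      (card_le_card (filter_subset_filter _ (subset_univ P))).trans (card_perm_comp_eq_le c w)
  have hwords : #W * ∏ j, (#{a | c a = c j} * g (c j)) ≤ ∏ i, ∑ j with A i (c j), g (c j) := by
    refine card_mul_prod_le_prod_sum_of_rearrangements A c hg W (fun w hw => ?_) fun w hw => ?_
    all_goals obtain ⟨σ, hσ, rfl⟩ := mem_image.1 hw
    · exact ⟨σ, rfl⟩
    · exact (mem_filter.1 hσ).2
  have hG : 0 ≤ ∏ j, g (c j) := prod_nonneg fun _ _ => hg _
  rw [matchingCount_eq_card_filter, ← hP]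
  calc (#P : ℝ) * ∏ j, g (c j)
      ≤ (∏ t ∈ univ.image c, ((#{a | c a = t}).factorial : ℝ)) * #W * ∏ j, g (c j) := by
        gcongr
        exact_mod_cast hfibers
    _ ≤ (exp 1 * Fintype.card V) ^ #(univ.image c) * exp (-Fintype.card V) *
          (∏ j, (#{a | c a = c j} : ℝ)) * #W * ∏ j, g (c j) := by
        gcongr
        exact prod_factorial_card_fiber_le c
    _ = (exp 1 * Fintype.card V) ^ #(univ.image c) * exp (-Fintype.card V) *
          (#W * ∏ j, (#{a | c a = c j} * g (c j))) := by
        rw [prod_mul_distrib]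
        ring
    _ ≤ _ := by gcongr

end WordCounting

section DistinctReps

variable {I J τ : Type*} [Fintype I] [DecidableEq I] [DecidableEq J] [DecidableEq τ]

/-- The systems of distinct representatives of a family of finite sets. -/
def distinctReps (A : I → Finset J) : Finset (I → J) :=
  {κ ∈ Fintype.piFinset A | Function.Injective κ}

theorem mem_distinctReps {A : I → Finset J} {κ : I → J} :
    κ ∈ distinctReps A ↔ (∀ x, κ x ∈ A x) ∧ Function.Injective κ := by
  rw [distinctReps, mem_filter, Fintype.mem_piFinset]

theorem card_distinctReps_tail_mul_le {m a : ℕ} {A : Fin (m + 1) → Finset J}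
    (ha : ∀ κ ∈ distinctReps (Fin.tail A), a ≤ #(A 0 \ univ.image κ)) :
    #(distinctReps (Fin.tail A)) * a ≤ #(distinctReps A) := by
  calc #(distinctReps (Fin.tail A)) * a
      ≤ ∑ κ ∈ distinctReps (Fin.tail A), #(A 0 \ univ.image κ) := by
        rw [← smul_eq_mul]
        exact card_nsmul_le_sum _ _ _ ha
    _ = #((distinctReps (Fin.tail A)).sigma fun κ => A 0 \ univ.image κ) :=
        (card_sigma _ _).symm
    _ ≤ #(distinctReps A) := by
        refine card_le_card_of_injOn (fun y => (Fin.cons y.2 y.1 : Fin (m + 1) → J))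
          (fun y hy => ?_) fun y _ y' _ h => ?_
        · obtain ⟨hκ, hj⟩ := mem_sigma.1 (mem_coe.1 hy)
          obtain ⟨hmem, hinj⟩ := mem_distinctReps.1 hκ
          obtain ⟨hj₀, hfresh⟩ := mem_sdiff.1 hj
          refine mem_coe.2 <| mem_distinctReps.2
            ⟨Fin.cases hj₀ hmem, Fin.cons_injective_iff.2 ⟨?_, hinj⟩⟩
          rintro ⟨x, hx⟩
          exact hfresh (mem_image.2 ⟨x, mem_univ x, hx⟩)
        · obtain ⟨hhead, htail⟩ := Fin.cons_injective2 h
          exact Sigma.ext htail (heq_of_eq hhead)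

theorem prod_descFactorial_le_card_distinctReps (c : J → τ) (α : τ → ℕ) {G : Finset τ} {m : ℕ}
    {t : Fin m → τ} {A : Fin m → Finset J} (hG : ∀ x, t x ∈ G) (hA : ∀ x, ∀ j ∈ A x, c j = t x)
    (hα : ∀ x, α (t x) ≤ #(A x)) :
    ∏ T ∈ G, (α T).descFactorial #{x | t x = T} ≤ #(distinctReps A) := by
  induction m with
  | zero =>
    simp only [univ_eq_empty, filter_empty, card_empty, Nat.descFactorial_zero, prod_const_one]
    exact card_pos.2 ⟨Fin.elim0, mem_distinctReps.2 ⟨fun x => x.elim0, fun x => x.elim0⟩⟩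
  | succ m ih =>
    have hfiber (T : τ) : #{x | t x = T} = #{x | Fin.tail t x = T} + if t 0 = T then 1 else 0 := by
      rw [Fin.card_filter_univ_succ]
      split_ifs <;> rfl
    -- The representatives already chosen inside the first set all have class `t 0`.
    have hused : ∀ κ ∈ distinctReps (Fin.tail A),
        α (t 0) - #{x | Fin.tail t x = t 0} ≤ #(A 0 \ univ.image κ) := by
      intro κ hκ
      have hsub : A 0 ∩ univ.image κ ⊆ ({x | Fin.tail t x = t 0} : Finset _).image κ := by
        intro j hj
        obtain ⟨hj₀, x, -, rfl⟩ := by simpa only [mem_inter, mem_image] using hj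
        refine mem_image_of_mem _ (mem_filter.2 ⟨mem_univ _, ?_⟩)
        exact (hA _ _ ((mem_distinctReps.1 hκ).1 x)).symm.trans (hA _ _ hj₀)
      have hinter := (card_le_card hsub).trans card_image_le
      have hsplit := card_sdiff_add_card_inter (A 0) (univ.image κ)
      have := hα 0
      omega
    refine le_trans ?_ (card_distinctReps_tail_mul_le hused)
    refine le_trans ?_ (Nat.mul_le_mul_right _
      (ih (fun x => hG x.succ) (fun x => hA x.succ) fun x => hα x.succ))
    rw [← mul_prod_erase G _ (hG 0), ← mul_prod_erase G _ (hG 0), hfiber, if_pos rfl,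
      Nat.descFactorial_succ, mul_assoc, mul_comm]
    refine Nat.mul_le_mul_right _ (Nat.mul_le_mul_left _ (prod_le_prod' fun T hT => ?_))
    rw [hfiber, if_neg (ne_of_mem_erase hT).symm, add_zero]
    rfl

end DistinctReps

section PartialMatchings

variable {I V τ : Type*} {A : V → V → Prop}

/-- `R` and `R'` are *reserves* of rows and of columns: every column is compatible with all but at
most one of the reserved rows, and every row with all but at most one of the reserved columns. A
partial matching avoiding the reserves extends to a perfect one if the reserves are large. -/
structure IsReserve (A : V → V → Prop) [DecidableRel A] (R R' : Finset V) : Prop where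
  card_rows_le : ∀ j, #{i ∈ R | ¬ A i j} ≤ 1
  card_cols_le : ∀ i, #{j ∈ R' | ¬ A i j} ≤ 1

theorem IsReserve.exists_injective [DecidableRel A] {R R' U W : Finset V} (hres : IsReserve A R R')
    (hRU : R ⊆ U) (hRW : R' ⊆ W) (hUW : #U ≤ #W) (hcard : #U + 2 ≤ #R + #R') :
    ∃ f : U → V, Function.Injective f ∧ ∀ i, f i ∈ W ∧ A i (f i) := by
  classical
  suffices hall : ∀ s : Finset U, #s ≤ #(s.biUnion fun i => {j ∈ W | A i j}) by
    obtain ⟨f, hf, hfA⟩ := (all_card_le_biUnion_card_iff_exists_injective _).1 hall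
    exact ⟨f, hf, fun i => mem_filter.1 (hfA i)⟩
  intro s
  rcases s.eq_empty_or_nonempty with rfl | ⟨i₀, hi₀⟩
  · simp
  set s' : Finset V := s.map (Function.Embedding.subtype _)
  have hs' : #s' = #s := card_map _
  have hs'U : s' ⊆ U := by
    intro i hi
    obtain ⟨y, -, rfl⟩ := mem_map.1 hi
    exact y.2
  by_cases htwo : 2 ≤ #(s' ∩ R)
  · have hW : W ⊆ s.biUnion fun i => {j ∈ W | A i j} := by
      intro j hj
      by_contra hcon
      have hbad : s' ∩ R ⊆ ({i ∈ R | ¬ A i j} : Finset V) := by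
        intro i hi
        obtain ⟨his, hiR⟩ := mem_inter.1 hi
        obtain ⟨y, hy, rfl⟩ := mem_map.1 his
        exact mem_filter.2 ⟨hiR, fun hA => hcon <|
          mem_biUnion.2 ⟨y, hy, mem_filter.2 ⟨hj, hA⟩⟩⟩
      have := (card_le_card hbad).trans (hres.card_rows_le j)
      omega
    rw [← hs']
    exact (card_le_card hs'U).trans (hUW.trans (card_le_card hW))
  · have hcols : ({j ∈ R' | A i₀ j} : Finset V) ⊆ s.biUnion fun i => {j ∈ W | A i j} := by
      intro j hj
      obtain ⟨hjR, hA⟩ := mem_filter.1 hj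
      exact mem_biUnion.2 ⟨i₀, hi₀, mem_filter.2 ⟨hRW hjR, hA⟩⟩
    have hunion := card_union_add_card_inter s' R
    have hUcard := card_le_card (union_subset hs'U hRU)
    have hsplit := card_filter_add_card_filter_not (s := R') (fun j => A i₀ j)
    have hbad := hres.card_cols_le i₀
    have := card_le_card hcols
    omega

theorem IsReserve.exists_perm_extending [Fintype I] [Fintype V] [DecidableRel A] {R R' : Finset V}
    (hres : IsReserve A R R') {ρ κ : I → V} (hρ : Function.Injective ρ) (hκ : Function.Injective κ)
    (hρR : ∀ x, ρ x ∉ R) (hκR : ∀ x, κ x ∉ R') (hA : ∀ x, A (ρ x) (κ x))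
    (hcard : Fintype.card V + 2 ≤ Fintype.card I + #R + #R') :
    ∃ σ : Equiv.Perm V, (∀ x, σ (ρ x) = κ x) ∧ ∀ i, A i (σ i) := by
  classical
  have card_free {φ : I → V} (hφ : Function.Injective φ) :
      Fintype.card I + #(univ.image φ)ᶜ = Fintype.card V := by
    rw [← card_add_card_compl (univ.image φ), card_image_of_injective _ hφ, card_univ]
  have reserve_free {φ : I → V} {Q : Finset V} (hφ : ∀ x, φ x ∉ Q) : Q ⊆ (univ.image φ)ᶜ := by
    intro i hi
    simp only [mem_compl, mem_image, mem_univ, true_and, not_exists]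
    rintro x rfl
    exact hφ x hi
  have hfreeρ := card_free hρ
  have hfreeκ := card_free hκ
  obtain ⟨f, hf, hfA⟩ := hres.exists_injective (reserve_free hρR) (reserve_free hκR)
    (by omega) (by omega)
  have hcardSum : Fintype.card (I ⊕ ↥(univ.image ρ)ᶜ) = Fintype.card V := by
    rw [Fintype.card_sum, Fintype.card_coe, hfreeρ]
  have hrows : Function.Bijective (Sum.elim ρ ((↑) : ↥(univ.image ρ)ᶜ → V)) := by
    refine (Fintype.bijective_iff_injective_and_card _).2
      ⟨hρ.sumElim Subtype.val_injective fun x i h => ?_, hcardSum⟩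
    exact mem_compl.1 i.2 (h ▸ mem_image_of_mem _ (mem_univ x))
  have hcols : Function.Bijective (Sum.elim κ f) := by
    refine (Fintype.bijective_iff_injective_and_card _).2
      ⟨hκ.sumElim hf fun x i h => ?_, hcardSum⟩
    exact mem_compl.1 (hfA i).1 (h ▸ mem_image_of_mem _ (mem_univ x))
  set eρ := Equiv.ofBijective _ hrows
  refine ⟨eρ.symm.trans (Equiv.ofBijective _ hcols), fun x => ?_, eρ.surjective.forall.2 ?_⟩
  · rw [Equiv.trans_apply, show ρ x = eρ (Sum.inl x) from rfl, Equiv.symm_apply_apply]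
    rfl
  · intro y
    rw [Equiv.trans_apply, Equiv.symm_apply_apply]
    rcases y with x | i
    · exact hA x
    · exact (hfA i).2

variable [Fintype I]

theorem exists_perm_eq_comp {W : Type*} [DecidableEq W] {φ ψ : I → W} (hφ : Function.Injective φ)
    (hψ : Function.Injective ψ) (h : univ.image φ = univ.image ψ) :
    ∃ g : Equiv.Perm I, φ = ψ ∘ g := by
  have hrange : Set.range φ = Set.range ψ := by
    simpa only [coe_image, coe_univ, Set.image_univ] using congrArg ((↑) : Finset W → Set W) h
  refine ⟨(Equiv.ofInjective φ hφ).trans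
    ((Equiv.setCongr hrange).trans (Equiv.ofInjective ψ hψ).symm), funext fun x => ?_⟩
  simp only [Function.comp_apply, Equiv.trans_apply, Equiv.apply_ofInjective_symm]
  rfl

variable [DecidableEq τ]

theorem card_le_prod_factorial_mul_card_image_image {W : Type*} [DecidableEq W] (c : W → τ)
    (q : I → τ) (X : Finset (I → W)) (hinj : ∀ φ ∈ X, Function.Injective φ)
    (hq : ∀ φ ∈ X, c ∘ φ = q) :
    #X ≤ (∏ t ∈ univ.image q, (#{x | q x = t}).factorial) * #(X.image fun φ => univ.image φ) := by
  classical
  refine card_le_mul_card_image X _ fun M hM => ?_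
  obtain ⟨ψ, hψ, rfl⟩ := mem_image.1 hM
  have hsub : {φ ∈ X | univ.image φ = univ.image ψ} ⊆
      ({g : Equiv.Perm I | q ∘ g = q} : Finset _).image fun g : Equiv.Perm I => ψ ∘ g := by
    intro φ hφ
    obtain ⟨hφX, himage⟩ := mem_filter.1 hφ
    obtain ⟨g, rfl⟩ := exists_perm_eq_comp (hinj _ hφX) (hinj _ hψ) himage
    refine mem_image_of_mem _ (mem_filter.2 ⟨mem_univ _, ?_⟩)
    conv_lhs => rw [← hq _ hψ]
    exact hq _ hφX
  exact (card_le_card hsub).trans (card_image_le.trans (card_perm_comp_eq_le q q))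

variable [DecidableEq I] [Fintype V] [DecidableEq V] [DecidableRel A]

/-- The partial matchings of `A`, as indexed families of edges, that avoid the reserves `R` and `R'`
and whose `x`-th edge joins a row of class `s x` to a column of class `t x`. -/
def patternMatchings (A : V → V → Prop) [DecidableRel A] (R R' : Finset V) (r c : V → τ)
    (s t : I → τ) : Finset (I → V × V) :=
  {φ | Function.Injective (Prod.fst ∘ φ) ∧ Function.Injective (Prod.snd ∘ φ) ∧
    ∀ x, (r (φ x).1 = s x ∧ (φ x).1 ∉ R) ∧ c (φ x).2 = t x ∧ (φ x).2 ∉ R' ∧ A (φ x).1 (φ x).2}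

theorem mem_patternMatchings {R R' : Finset V} {r c : V → τ} {s t : I → τ} {φ : I → V × V} :
    φ ∈ patternMatchings A R R' r c s t ↔
      Function.Injective (Prod.fst ∘ φ) ∧ Function.Injective (Prod.snd ∘ φ) ∧
        ∀ x, (r (φ x).1 = s x ∧ (φ x).1 ∉ R) ∧
          c (φ x).2 = t x ∧ (φ x).2 ∉ R' ∧ A (φ x).1 (φ x).2 := by
  rw [patternMatchings, mem_filter_univ]

theorem prod_descFactorial_mul_prod_le_card_patternMatchings {n : ℕ} {R R' : Finset V}
    {r c : V → τ} {s t : Fin n → τ} {G : Finset τ} {ν α : τ → ℕ} (hs : ∀ x, s x ∈ G)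
    (ht : ∀ x, t x ∈ G) (hν : ∀ x, ν (s x) ≤ #{i | r i = s x ∧ i ∉ R})
    (hα : ∀ x i, r i = s x → α (t x) ≤ #{j | c j = t x ∧ j ∉ R' ∧ A i j}) :
    (∏ S ∈ G, (ν S).descFactorial #{x | s x = S}) * ∏ T ∈ G, (α T).descFactorial #{x | t x = T} ≤
      #(patternMatchings A R R' r c s t) := by
  let P := distinctReps fun x => ({i | r i = s x ∧ i ∉ R} : Finset V)
  let K (ρ : Fin n → V) := distinctReps fun x => ({j | c j = t x ∧ j ∉ R' ∧ A (ρ x) j} : Finset V)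
  have hP : ∏ S ∈ G, (ν S).descFactorial #{x | s x = S} ≤ #P :=
    prod_descFactorial_le_card_distinctReps r ν hs (fun x i hi => (mem_filter.1 hi).2.1) hν
  have hK : ∀ ρ ∈ P, ∏ T ∈ G, (α T).descFactorial #{x | t x = T} ≤ #(K ρ) := fun ρ hρ =>
    prod_descFactorial_le_card_distinctReps c α ht (fun x j hj => (mem_filter.1 hj).2.1)
      fun x => hα x (ρ x) (mem_filter.1 ((mem_distinctReps.1 hρ).1 x)).2.1
  calc _ ≤ #P * ∏ T ∈ G, (α T).descFactorial #{x | t x = T} := Nat.mul_le_mul_right _ hP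
    _ ≤ ∑ ρ ∈ P, #(K ρ) := by
        rw [← smul_eq_mul]
        exact card_nsmul_le_sum _ _ _ hK
    _ = #(P.sigma K) := (card_sigma _ _).symm
    _ ≤ _ := by
        refine card_le_card_of_injOn (fun y x => (y.1 x, y.2 x)) (fun y hy => ?_)
          fun y _ y' _ h => ?_
        · obtain ⟨hρ, hκ⟩ := mem_sigma.1 (mem_coe.1 hy)
          obtain ⟨hρmem, hρinj⟩ := mem_distinctReps.1 hρ
          obtain ⟨hκmem, hκinj⟩ := mem_distinctReps.1 hκ
          exact mem_coe.2 <| mem_patternMatchings.2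
            ⟨hρinj, hκinj, fun x => ⟨(mem_filter.1 (hρmem x)).2, (mem_filter.1 (hκmem x)).2⟩⟩
        · exact Sigma.ext (funext fun x => (Prod.ext_iff.1 (congrFun h x)).1)
            (heq_of_eq (funext fun x => (Prod.ext_iff.1 (congrFun h x)).2))

theorem IsReserve.card_graph_patternMatchings_le {R R' : Finset V} (hres : IsReserve A R R')
    (r c : V → τ) (s t : I → τ) (hcard : Fintype.card V + 2 ≤ Fintype.card I + #R + #R') :
    #((patternMatchings A R R' r c s t).image fun φ => univ.image φ) ≤
      matchingCount A * Fintype.card V ^ (Fintype.card V - Fintype.card I) := by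
  have hsub : ((patternMatchings A R R' r c s t).image fun φ => univ.image φ) ⊆
      ({σ : Equiv.Perm V | ∀ i, A i (σ i)} : Finset _).biUnion fun σ =>
        (univ.image fun i => (i, σ i)).powersetCard (Fintype.card I) := by
    intro M hM
    obtain ⟨φ, hφ, rfl⟩ := mem_image.1 hM
    obtain ⟨hρ, hκ, hφx⟩ := mem_patternMatchings.1 hφ
    obtain ⟨σ, hσφ, hσA⟩ := hres.exists_perm_extending hρ hκ (fun x => (hφx x).1.2)
      (fun x => (hφx x).2.2.1) (fun x => (hφx x).2.2.2) hcard
    refine mem_biUnion.2 ⟨σ, mem_filter.2 ⟨mem_univ _, hσA⟩, mem_powersetCard.2 ⟨?_, ?_⟩⟩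
    · exact image_subset_iff.2 fun x _ =>
        mem_image.2 ⟨(φ x).1, mem_univ _, Prod.ext rfl (hσφ x)⟩
    · rw [card_image_of_injective _ (Function.Injective.of_comp hρ), card_univ]
  rcases (patternMatchings A R R' r c s t).eq_empty_or_nonempty with hempty | ⟨φ, hφ⟩
  · rw [hempty, image_empty, card_empty]
    exact Nat.zero_le _
  have hIV : Fintype.card I ≤ Fintype.card V :=
    Fintype.card_le_of_injective _ (mem_patternMatchings.1 hφ).1
  rw [matchingCount_eq_card_filter]
  refine (card_le_card hsub).trans (card_biUnion_le_card_mul _ _ _ fun σ _ => ?_)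
  rw [card_powersetCard, card_image_of_injective _ fun a b hab => (Prod.ext_iff.1 hab).1,
    card_univ, ← Nat.choose_symm hIV]
  exact Nat.choose_le_pow _ _

theorem exists_fin_map_card_fiber {ι : Type*} [DecidableEq ι] (G : Finset ι) (m : ι → ℕ) :
    ∃ q : Fin (∑ p ∈ G, m p) → ι, (∀ x, q x ∈ G) ∧ ∀ p ∈ G, #{x | q x = p} = m p := by
  let q₀ : (Σ p : G, Fin (m p)) → ι := fun y => y.1
  have hcard : Fintype.card (Σ p : G, Fin (m p)) = ∑ p ∈ G, m p := by
    simp only [Fintype.card_sigma, Fintype.card_fin, sum_coe_sort G m]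
  let e := (Fintype.equivFinOfCardEq hcard).symm
  refine ⟨fun x => q₀ (e x), fun x => (e x).1.2, fun p hp => ?_⟩
  have hsigma : ({y | q₀ y = p} : Finset _) = ({⟨p, hp⟩} : Finset G).sigma fun _ => univ := by
    ext y
    simp only [mem_filter_univ, mem_sigma, mem_singleton, mem_univ, and_true, q₀, Subtype.ext_iff]
  calc #{x | q₀ (e x) = p} = #{y | q₀ y = p} :=
        card_equiv e fun x => by simp only [mem_filter_univ]
    _ = m p := by rw [hsigma, card_sigma, sum_singleton, card_univ, Fintype.card_fin]

theorem IsReserve.prod_descFactorial_le_matchingCount_mul {R R' : Finset V}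
    (hres : IsReserve A R R') {r c : V → τ} {G : Finset τ} {m : τ → τ → ℕ} {ν α : τ → ℕ}
    (hν : ∀ S ∈ G, ν S ≤ #{i | r i = S ∧ i ∉ R})
    (hα : ∀ i, r i ∈ G → ∀ T ∈ G, m (r i) T ≠ 0 → α T ≤ #{j | c j = T ∧ j ∉ R' ∧ A i j})
    (hcard : Fintype.card V + 2 ≤ ∑ S ∈ G, ∑ T ∈ G, m S T + #R + #R') :
    (∏ S ∈ G, (ν S).descFactorial (∑ T ∈ G, m S T)) *
        ∏ T ∈ G, (α T).descFactorial (∑ S ∈ G, m S T) ≤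
      matchingCount A * Fintype.card V ^ (Fintype.card V - ∑ S ∈ G, ∑ T ∈ G, m S T) *
        ∏ S ∈ G, ∏ T ∈ G, (m S T).factorial := by
  rw [← sum_product'] at hcard ⊢
  obtain ⟨q, hqG, hq⟩ := exists_fin_map_card_fiber (G ×ˢ G) fun p => m p.1 p.2
  have hq₁ (x) : (q x).1 ∈ G := (mem_product.1 (hqG x)).1
  have hq₂ (x) : (q x).2 ∈ G := (mem_product.1 (hqG x)).2
  have hrow : ∀ S ∈ G, #{x | (q x).1 = S} = ∑ T ∈ G, m S T := fun S hS => by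
    rw [card_eq_sum_card_fiberwise fun x _ => hq₂ x]
    refine sum_congr rfl fun T hT => ?_
    simp only [filter_filter, ← hq (S, T) (mk_mem_product hS hT), Prod.ext_iff]
  have hcol : ∀ T ∈ G, #{x | (q x).2 = T} = ∑ S ∈ G, m S T := fun T hT => by
    rw [card_eq_sum_card_fiberwise fun x _ => hq₁ x]
    refine sum_congr rfl fun S hS => ?_
    simp only [filter_filter, ← hq (S, T) (mk_mem_product hS hT), Prod.ext_iff, and_comm]
  have hm (x) : m (q x).1 (q x).2 ≠ 0 := by
    rw [← hq (q x) (hqG x)]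
    exact card_ne_zero_of_mem (mem_filter.2 ⟨mem_univ x, rfl⟩)
  set X := patternMatchings A R R' r c (fun x => (q x).1) (fun x => (q x).2)
  have hlower := prod_descFactorial_mul_prod_le_card_patternMatchings (A := A) (R := R) (R' := R')
    (r := r) (c := c) hq₁ hq₂ (fun x => hν _ (hq₁ x))
    fun x i hi => hα i (hi ▸ hq₁ x) _ (hq₂ x) (hi ▸ hm x)
  rw [prod_congr rfl fun S hS => congrArg (ν S).descFactorial (hrow S hS),
    prod_congr rfl fun T hT => congrArg (α T).descFactorial (hcol T hT)] at hlower
  have hsymm := card_le_prod_factorial_mul_card_image_image (Prod.map r c) q X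
    (fun φ hφ => Function.Injective.of_comp (mem_patternMatchings.1 hφ).1)
    fun φ hφ => funext fun x => Prod.ext ((mem_patternMatchings.1 hφ).2.2 x).1.1
      ((mem_patternMatchings.1 hφ).2.2 x).2.1
  have hfact : ∏ p ∈ univ.image q, (#{x | q x = p}).factorial ≤
      ∏ S ∈ G, ∏ T ∈ G, (m S T).factorial := by
    rw [← prod_product', ← prod_congr rfl fun p hp => congrArg Nat.factorial (hq p hp)]
    exact prod_le_prod_of_subset_of_one_le' (image_subset_iff.2 fun x _ => hqG x)
      fun p _ _ => Nat.factorial_pos _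
  have hgraph := hres.card_graph_patternMatchings_le r c (fun x => (q x).1) (fun x => (q x).2)
    (by rwa [Fintype.card_fin])
  rw [Fintype.card_fin] at hgraph
  calc _ ≤ #X := hlower
    _ ≤ _ := hsymm.trans (Nat.mul_le_mul hfact hgraph)
    _ = _ := mul_comm _ _

end PartialMatchings

section OddPrimes

/-- The odd primes up to `z`. -/
def oddPrimes (z : ℕ) : Finset ℕ := {p ∈ Icc 3 z | p.Prime}

/-- The odd primes up to `z` that divide `n`: the type of `n` in the block decomposition of the
coprimality matrix. -/
def smallOddFactors (z n : ℕ) : Finset ℕ := {p ∈ oddPrimes z | p ∣ n}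

/-- The types with fewer than `k` primes: the blocks between these carry almost all of the mass. -/
def sparseTypes (z k : ℕ) : Finset (Finset ℕ) := {t ∈ (oddPrimes z).powerset | #t < k}

/-- The weight `∏ (p - 1) / (p - 2)` of a set of odd primes. If the columns of the coprimality
matrix are weighted by the weights of their types, then the weighted row sums are approximately
inversely proportional to the weights of the rows. -/
noncomputable def primeWeight (t : Finset ℕ) : ℝ := ∏ p ∈ t, ((p : ℝ) - 1) / (p - 2)

/-- The mean of `primeWeight (smallOddFactors z n)` over all integers `n`. -/
noncomputable def meanPrimeWeight (z : ℕ) : ℝ := ∏ p ∈ oddPrimes z, (1 + 1 / ((p : ℝ) * (p - 2)))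

variable {z n p : ℕ} {t : Finset ℕ}

theorem mem_oddPrimes : p ∈ oddPrimes z ↔ 3 ≤ p ∧ p ≤ z ∧ p.Prime := by
  simp only [oddPrimes, mem_filter, mem_Icc, and_assoc]

theorem three_le_of_subset_oddPrimes (ht : t ⊆ oddPrimes z) : ∀ p ∈ t, 3 ≤ p :=
  fun _ hp => (mem_oddPrimes.1 (ht hp)).1

theorem three_le_cast_of_mem_oddPrimes (hp : p ∈ oddPrimes z) : (3 : ℝ) ≤ p :=
  Nat.ofNat_le_cast.2 (mem_oddPrimes.1 hp).1

theorem odd_of_mem_oddPrimes (hp : p ∈ oddPrimes z) : Odd p := by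
  obtain ⟨hp₃, -, hprime⟩ := mem_oddPrimes.1 hp
  exact hprime.odd_of_ne_two (by omega)

theorem odd_prod_of_subset_oddPrimes (ht : t ⊆ oddPrimes z) : Odd (∏ p ∈ t, p) :=
  prod_induction _ Odd (fun _ _ => Odd.mul) odd_one fun _ hp => odd_of_mem_oddPrimes (ht hp)

theorem prod_pos_of_subset_oddPrimes (ht : t ⊆ oddPrimes z) : 0 < ∏ p ∈ t, (p : ℝ) := by
  rw [← Nat.cast_prod]
  exact Nat.cast_pos.2 (odd_prod_of_subset_oddPrimes ht).pos

theorem prod_le_pow_card_of_subset_oddPrimes (ht : t ⊆ oddPrimes z) : ∏ p ∈ t, p ≤ z ^ #t :=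
  prod_le_pow_card _ _ _ fun _ hp => (mem_oddPrimes.1 (ht hp)).2.1

theorem mem_sparseTypes {k : ℕ} : t ∈ sparseTypes z k ↔ t ⊆ oddPrimes z ∧ #t < k := by
  rw [sparseTypes, mem_filter, mem_powerset]

theorem card_sparseTypes_le {z : ℕ} (hz : z ≠ 0) (k : ℕ) : #(sparseTypes z k) ≤ z ^ k := by
  have hIcc : z ^ k = #(Icc 1 (z ^ k)) := by rw [Nat.card_Icc, Nat.add_sub_cancel]
  have primeFactors_prod {t : Finset ℕ} (ht : t ⊆ oddPrimes z) : (∏ p ∈ t, p).primeFactors = t :=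
    Nat.primeFactors_prod fun p hp => (mem_oddPrimes.1 (ht hp)).2.2
  rw [hIcc]
  refine card_le_card_of_injOn (fun t => ∏ p ∈ t, p) (fun t ht => ?_) fun s hs t ht hst => ?_
  · obtain ⟨hsub, hcard⟩ := mem_sparseTypes.1 (mem_coe.1 ht)
    exact mem_coe.2 <| mem_Icc.2 ⟨(odd_prod_of_subset_oddPrimes hsub).pos,
      (prod_le_pow_card_of_subset_oddPrimes hsub).trans
        (Nat.pow_le_pow_right (Nat.pos_of_ne_zero hz) hcard.le)⟩
  · rw [← primeFactors_prod (mem_sparseTypes.1 (mem_coe.1 hs)).1,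
      ← primeFactors_prod (mem_sparseTypes.1 (mem_coe.1 ht)).1]
    exact congrArg Nat.primeFactors hst

theorem smallOddFactors_subset (z n : ℕ) : smallOddFactors z n ⊆ oddPrimes z := filter_subset _ _

theorem subset_smallOddFactors_iff (ht : t ⊆ oddPrimes z) :
    t ⊆ smallOddFactors z n ↔ ∏ p ∈ t, p ∣ n := by
  refine ⟨fun h => prod_primes_dvd n (fun p hp => (mem_oddPrimes.1 (ht hp)).2.2.prime)
    fun p hp => (mem_filter.1 (h hp)).2, fun h p hp => ?_⟩
  exact mem_filter.2 ⟨ht hp, (dvd_prod_of_mem _ hp).trans h⟩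

theorem prod_one_add_smallOddFactors (z n : ℕ) (κ : ℕ → ℝ) :
    ∏ p ∈ smallOddFactors z n, (1 + κ p) =
      ∑ t ∈ (oddPrimes z).powerset with ∏ p ∈ t, p ∣ n, ∏ p ∈ t, κ p := by
  rw [prod_one_add]
  congr 1
  ext t
  rw [mem_filter, mem_powerset, mem_powerset]
  exact ⟨fun ht => have ht' := ht.trans (smallOddFactors_subset z n)
      ⟨ht', (subset_smallOddFactors_iff ht').1 ht⟩,
    fun ⟨ht, hdvd⟩ => (subset_smallOddFactors_iff ht).2 hdvd⟩

theorem sum_prod_one_add_smallOddFactors {ι : Type*} [Fintype ι] (z : ℕ) (l : ι → ℕ) (κ : ℕ → ℝ) :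
    ∑ j, ∏ p ∈ smallOddFactors z (l j), (1 + κ p) =
      ∑ t ∈ (oddPrimes z).powerset, (∏ p ∈ t, κ p) * #{j | ∏ p ∈ t, p ∣ l j} := by
  simp only [prod_one_add_smallOddFactors, sum_filter]
  rw [sum_comm]
  refine sum_congr rfl fun t _ => ?_
  rw [← sum_filter, sum_const, nsmul_eq_mul, mul_comm]

theorem one_le_sub_one_div_sub_two (hp : 3 ≤ p) : 1 ≤ ((p : ℝ) - 1) / (p - 2) := by
  have : (3 : ℝ) ≤ p := Nat.ofNat_le_cast.2 hp
  rw [one_le_div (by linarith)]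
  linarith

theorem one_le_primeWeight (ht : ∀ p ∈ t, 3 ≤ p) : 1 ≤ primeWeight t :=
  prod_induction _ (fun x : ℝ => 1 ≤ x) (fun _ _ => one_le_mul_of_one_le_of_one_le)
    le_rfl fun p hp => one_le_sub_one_div_sub_two (ht p hp)

theorem primeWeight_pos (ht : ∀ p ∈ t, 3 ≤ p) : 0 < primeWeight t :=
  zero_lt_one.trans_le (one_le_primeWeight ht)

theorem primeWeight_mono {s : Finset ℕ} (hst : s ⊆ t) (ht : ∀ p ∈ t, 3 ≤ p) :
    primeWeight s ≤ primeWeight t := by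
  rw [primeWeight, primeWeight, ← prod_sdiff hst]
  exact le_mul_of_one_le_left (primeWeight_pos fun p hp => ht p (hst hp)).le
    (one_le_primeWeight fun p hp => ht p (sdiff_subset hp))

theorem primeWeight_Icc (z : ℕ) : primeWeight (Icc 3 (z + 2)) = z + 1 := by
  induction z with
  | zero => simp [primeWeight]
  | succ z ih =>
    have : (z : ℝ) + 1 ≠ 0 := by positivity
    rw [primeWeight] at ih ⊢
    rw [show z + 1 + 2 = z + 2 + 1 by ring, prod_Icc_succ_top (by omega), ih]
    push_cast
    rw [show (z : ℝ) + 2 + 1 - 2 = z + 1 by ring, mul_div_cancel₀ _ this]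
    ring

theorem primeWeight_le (hz : 2 ≤ z) (ht : t ⊆ oddPrimes z) : primeWeight t ≤ z := by
  obtain ⟨w, rfl⟩ := Nat.exists_eq_add_of_le' hz
  have hmono := primeWeight_mono (ht.trans (filter_subset _ _ : oddPrimes (w + 2) ⊆ _))
    fun p hp => (mem_Icc.1 hp).1
  rw [primeWeight_Icc] at hmono
  push_cast
  linarith

theorem one_le_meanPrimeWeight (z : ℕ) : 1 ≤ meanPrimeWeight z := by
  refine prod_induction _ (fun x : ℝ => 1 ≤ x) (fun _ _ => one_le_mul_of_one_le_of_one_le)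
    le_rfl fun p hp => le_add_of_nonneg_right ?_
  have : (0 : ℝ) ≤ p - 2 := by linarith [three_le_cast_of_mem_oddPrimes hp]
  positivity

theorem card_primeFactors_filter_lt_le_log {a : ℕ} (ha : a ≠ 0) (z : ℕ) :
    #{q ∈ a.primeFactors | z < q} ≤ Nat.log 2 a := by
  refine Nat.le_log_of_pow_le one_lt_two ?_
  calc 2 ^ #{q ∈ a.primeFactors | z < q} ≤ 2 ^ #a.primeFactors :=
        Nat.pow_le_pow_right two_pos (card_filter_le _ _)
    _ ≤ ∏ q ∈ a.primeFactors, q := pow_card_le_prod _ _ _ fun q hq =>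
        (Nat.prime_of_mem_primeFactors hq).two_le
    _ ≤ a := Nat.le_of_dvd (Nat.pos_of_ne_zero ha) (Nat.prod_primeFactors_dvd a)

theorem prod_one_add_abs_ite_le (hz : 2 ≤ z) (ht : t ⊆ oddPrimes z) :
    ∏ p ∈ oddPrimes z, (1 + |if p ∈ t then -1 else 1 / ((p : ℝ) - 2)|) ≤ 2 ^ #t * z := by
  calc _ ≤ ∏ p ∈ oddPrimes z, (if p ∈ t then (2 : ℝ) else 1) * (((p : ℝ) - 1) / (p - 2)) := by
        refine prod_le_prod (fun p _ => by positivity) fun p hp => ?_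
        have := three_le_cast_of_mem_oddPrimes hp
        have hp₂ : (0 : ℝ) < (p : ℝ) - 2 := by linarith
        split_ifs
        · have := one_le_sub_one_div_sub_two (mem_oddPrimes.1 hp).1
          norm_num
          linarith
        · rw [abs_of_pos (by positivity), one_mul, one_add_div hp₂.ne']
          gcongr
          linarith
    _ = 2 ^ #t * primeWeight (oddPrimes z) := by
        rw [prod_mul_distrib, prod_ite_mem, inter_eq_right.2 ht, prod_const]
        rfl
    _ ≤ _ := by gcongr; exact primeWeight_le hz subset_rfl

end OddPrimes

/-- Labels in `[1, 2h + 1]` of which about a proportion `1 / d` is divisible by `d`, for every odd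
`d`. The odd numbers up to `n` and the halves of the even ones are of this form. -/
structure OddEquidistributed {h : ℕ} (l : Fin h → ℕ) : Prop where
  injective : Function.Injective l
  one_le : ∀ j, 1 ≤ l j
  le_two_mul_add_one : ∀ j, l j ≤ 2 * h + 1
  abs_card_dvd_sub_le : ∀ d, Odd d → |(#{j | d ∣ l j} : ℝ) - h / d| ≤ 1

namespace OddEquidistributed

variable {h : ℕ} {l : Fin h → ℕ} (hl : OddEquidistributed l)

include hl

theorem card_dvd_le {d : ℕ} (hd : Odd d) : (#{j | d ∣ l j} : ℝ) ≤ 3 * h / d := by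
  rcases ({j | d ∣ l j} : Finset (Fin h)).eq_empty_or_nonempty with hempty | ⟨j, hj⟩
  · rw [hempty, card_empty, Nat.cast_zero]
    positivity
  have hd₀ : (0 : ℝ) < d := Nat.cast_pos.2 hd.pos
  have hh : 1 ≤ h := Fin.pos j
  have hdvd : d ∣ l j := (mem_filter.1 hj).2
  have hdle := (Nat.le_of_dvd (hl.one_le j) hdvd).trans (hl.le_two_mul_add_one j)
  rw [le_div_iff₀ hd₀]
  rcases Nat.lt_or_eq_of_le hdle with hlt | rfl
  · have hcount := (abs_le.1 (hl.abs_card_dvd_sub_le d hd)).2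
    have hd₂ : (d : ℝ) ≤ 2 * h := by exact_mod_cast Nat.lt_succ_iff.1 hlt
    have : (h : ℝ) / d * d = h := div_mul_cancel₀ _ hd₀.ne'
    nlinarith
  · have hle : #{j | 2 * h + 1 ∣ l j} ≤ 1 := by
      refine card_le_one.2 fun i hi j hj => hl.injective ?_
      have eq_of_mem {k : Fin h} (hk : k ∈ ({j | 2 * h + 1 ∣ l j} : Finset _)) :
          l k = 2 * h + 1 :=
        (hl.le_two_mul_add_one k).antisymm (Nat.le_of_dvd (hl.one_le k) (mem_filter.1 hk).2)
      rw [eq_of_mem hi, eq_of_mem hj]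
    have : #{j | 2 * h + 1 ∣ l j} * (2 * h + 1) ≤ 3 * h := by nlinarith
    exact_mod_cast this

theorem abs_sum_prod_sub_le (z : ℕ) (κ : ℕ → ℝ) :
    |∑ j, ∏ p ∈ smallOddFactors z (l j), (1 + κ p) - h * ∏ p ∈ oddPrimes z, (1 + κ p / p)| ≤
      ∏ p ∈ oddPrimes z, (1 + |κ p|) := by
  rw [sum_prod_one_add_smallOddFactors, prod_one_add, mul_sum, ← sum_sub_distrib, prod_one_add]
  refine (abs_sum_le_sum_abs _ _).trans (sum_le_sum fun t ht => ?_)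
  have hcount := hl.abs_card_dvd_sub_le _ (odd_prod_of_subset_oddPrimes (mem_powerset.1 ht))
  rw [prod_div_distrib, ← abs_prod, ← Nat.cast_prod]
  calc _ = |∏ p ∈ t, κ p| * |(#{j | ∏ p ∈ t, p ∣ l j} : ℝ) - h / (∏ p ∈ t, p : ℕ)| := by
        rw [← abs_mul]
        congr 1
        ring
    _ ≤ _ := mul_le_of_le_one_right (abs_nonneg _) hcount

theorem sum_prod_one_add_le (z : ℕ) {κ : ℕ → ℝ} (hκ : ∀ p, 0 ≤ κ p) :
    ∑ j, ∏ p ∈ smallOddFactors z (l j), (1 + κ p) ≤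
      3 * h * ∏ p ∈ oddPrimes z, (1 + κ p / p) := by
  rw [sum_prod_one_add_smallOddFactors, prod_one_add, mul_sum]
  refine sum_le_sum fun t ht => ?_
  have hcount := hl.card_dvd_le (odd_prod_of_subset_oddPrimes (mem_powerset.1 ht))
  rw [prod_div_distrib, ← Nat.cast_prod, mul_div_left_comm]
  exact mul_le_mul_of_nonneg_left hcount (prod_nonneg fun p _ => hκ p)

theorem sum_pow_card_le (z : ℕ) {y : ℝ} (hy : 1 ≤ y) :
    ∑ j, y ^ #(smallOddFactors z (l j)) ≤ 3 * h * exp (y * ∑ p ∈ oddPrimes z, 1 / (p : ℝ)) := by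
  have hprod : ∏ p ∈ oddPrimes z, (1 + (y - 1) / (p : ℝ)) ≤
      exp (y * ∑ p ∈ oddPrimes z, 1 / (p : ℝ)) := by
    have hκ (p : ℕ) : 0 ≤ (y - 1) / (p : ℝ) := div_nonneg (by linarith) (Nat.cast_nonneg p)
    rw [mul_sum, exp_sum]
    refine prod_le_prod (fun p _ => by linarith [hκ p]) fun p _ => ?_
    rw [add_comm, mul_one_div]
    refine (add_one_le_exp _).trans (exp_le_exp.2 ?_)
    gcongr
    linarith
  have hsum := hl.sum_prod_one_add_le z (κ := fun _ => y - 1) fun _ => by linarith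
  simp only [add_sub_cancel, prod_const] at hsum
  exact hsum.trans (mul_le_mul_of_nonneg_left hprod (by positivity))

theorem card_le_card_smallOddFactors_le (z k : ℕ) {y : ℝ} (hy : 1 ≤ y) :
    (#{j | k ≤ #(smallOddFactors z (l j))} : ℝ) ≤
      3 * h * exp (y * ∑ p ∈ oddPrimes z, 1 / (p : ℝ)) / y ^ k := by
  rw [le_div_iff₀ (by positivity)]
  refine le_trans ?_ (hl.sum_pow_card_le z hy)
  rw [← nsmul_eq_mul, ← sum_const]
  exact (sum_le_sum fun j hj => pow_le_pow_right₀ hy (mem_filter.1 hj).2).trans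
    (sum_le_sum_of_subset_of_nonneg (filter_subset _ _) fun j _ _ => by positivity)

theorem abs_sum_disjoint_primeWeight_sub_le {z : ℕ} (hz : 2 ≤ z) {S : Finset ℕ}
    (hS : S ⊆ oddPrimes z) :
    |∑ j with Disjoint S (smallOddFactors z (l j)), primeWeight (smallOddFactors z (l j)) -
      h * (meanPrimeWeight z / primeWeight S)| ≤ 2 ^ #S * z := by
  -- The factor `1 + κ p` is the weight of `p`, except that it vanishes for `p ∈ S`.
  set κ : ℕ → ℝ := fun p => if p ∈ S then -1 else 1 / ((p : ℝ) - 2) with hκ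
  have hsum : ∑ j, ∏ p ∈ smallOddFactors z (l j), (1 + κ p) =
      ∑ j with Disjoint S (smallOddFactors z (l j)), primeWeight (smallOddFactors z (l j)) := by
    rw [sum_filter]
    refine sum_congr rfl fun j _ => ?_
    split_ifs with hdisj
    · refine prod_congr rfl fun p hp => ?_
      have := three_le_cast_of_mem_oddPrimes (smallOddFactors_subset _ _ hp)
      have : (p : ℝ) - 2 ≠ 0 := by linarith
      simp only [hκ, if_neg fun hpS => disjoint_left.1 hdisj hpS hp]
      field_simp
      ring
    · obtain ⟨p, hpS, hp⟩ := not_disjoint_iff.1 hdisj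
      exact prod_eq_zero hp (by simp only [hκ, if_pos hpS, add_neg_cancel])
  have hmain : ∏ p ∈ oddPrimes z, (1 + κ p / p) = meanPrimeWeight z / primeWeight S := by
    rw [eq_div_iff (primeWeight_pos (three_le_of_subset_oddPrimes hS)).ne', meanPrimeWeight,
      primeWeight, ← inter_eq_right.2 hS, ← prod_ite_mem, ← prod_mul_distrib]
    refine prod_congr rfl fun p hp => ?_
    have := three_le_cast_of_mem_oddPrimes hp
    have : (p : ℝ) - 2 ≠ 0 := by linarith
    have : (p : ℝ) ≠ 0 := by linarith
    simp only [hκ]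
    split_ifs
    · field_simp
      ring
    · rw [mul_one, div_div, mul_comm (p : ℝ)]
  have := hl.abs_sum_prod_sub_le z κ
  rw [hsum, hmain] at this
  exact this.trans (prod_one_add_abs_ite_le hz hS)

theorem card_shared_large_prime_le {z a : ℕ} (hz : 2 ≤ z) (ha : a ≠ 0) {T : Finset ℕ}
    (hT : T ⊆ oddPrimes z) :
    (#{j | smallOddFactors z (l j) = T ∧ ∃ q ∈ a.primeFactors, z < q ∧ q ∣ l j} : ℝ) ≤
      Nat.log 2 a * (3 * h / (z * ∏ p ∈ T, (p : ℝ))) := by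
  set Q := {q ∈ a.primeFactors | z < q}
  have hsub : ({j | smallOddFactors z (l j) = T ∧ ∃ q ∈ a.primeFactors, z < q ∧ q ∣ l j} :
      Finset (Fin h)) ⊆ Q.biUnion fun q => {j | q * ∏ p ∈ T, p ∣ l j} := by
    intro j hj
    obtain ⟨-, rfl, q, hqa, hzq, hql⟩ := mem_filter.1 hj
    refine mem_biUnion.2 ⟨q, mem_filter.2 ⟨hqa, hzq⟩, mem_filter.2 ⟨mem_univ _, ?_⟩⟩
    refine Nat.Coprime.mul_dvd_of_dvd_of_dvd (Nat.Coprime.prod_right fun p hp => ?_) hql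
      ((subset_smallOddFactors_iff hT).1 subset_rfl)
    obtain ⟨-, hpz, hprime⟩ := mem_oddPrimes.1 (hT hp)
    exact (Nat.coprime_primes (Nat.prime_of_mem_primeFactors hqa) hprime).2 (by omega)
  have hfiber : ∀ q ∈ Q, (#{j | q * ∏ p ∈ T, p ∣ l j} : ℝ) ≤ 3 * h / (z * ∏ p ∈ T, (p : ℝ)) := by
    intro q hq
    obtain ⟨hqa, hzq⟩ := mem_filter.1 hq
    have hodd : Odd q := (Nat.prime_of_mem_primeFactors hqa).odd_of_ne_two (by omega)
    have hzq' : (z : ℝ) ≤ q := Nat.cast_le.2 hzq.le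
    have : (0 : ℝ) < z := Nat.cast_pos.2 (by omega)
    have hT₀ := prod_pos_of_subset_oddPrimes hT
    refine (hl.card_dvd_le (hodd.mul (odd_prod_of_subset_oddPrimes hT))).trans ?_
    push_cast
    gcongr
  calc _ ≤ (#(Q.biUnion fun q => {j | q * ∏ p ∈ T, p ∣ l j}) : ℝ) :=
        Nat.cast_le.2 (card_le_card hsub)
    _ ≤ ∑ q ∈ Q, (#{j | q * ∏ p ∈ T, p ∣ l j} : ℝ) := by exact_mod_cast card_biUnion_le
    _ ≤ #Q * (3 * h / (z * ∏ p ∈ T, (p : ℝ))) := by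
        rw [← nsmul_eq_mul]
        exact sum_le_card_nsmul _ _ _ hfiber
    _ ≤ _ := by
        have hT₀ := prod_pos_of_subset_oddPrimes hT
        gcongr
        exact card_primeFactors_filter_lt_le_log ha z

end OddEquidistributed

section BlockShare

variable {τ : Type*}

/-- The real number of pairs that a matching of rows with columns should place in the block
`(S, T)`: proportional to the weights and sizes of the two classes if they are compatible
(`dis S T`), and zero otherwise. Here `ν` and `α` are the row and column class sizes and `w` is the
normalization. -/
noncomputable def blockShare (g : τ → ℝ) (dis : τ → τ → Prop) [DecidableRel dis] (ν α : τ → ℕ)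
    (w : ℝ) (S T : τ) : ℝ :=
  if dis S T then g S * g T * ν S * α T / w else 0

variable {g : τ → ℝ} {dis : τ → τ → Prop} [DecidableRel dis] {ν α μ Δ : τ → ℕ} {w : ℝ}
  {G : Finset τ} {S T : τ}

theorem blockShare_swap :
    blockShare g dis ν α w S T = blockShare g (fun T S => dis S T) α ν w T S := by
  unfold blockShare
  split_ifs
  · ring
  · rfl

theorem blockShare_nonneg (hg : ∀ t, 0 ≤ g t) (hw : 0 ≤ w) : 0 ≤ blockShare g dis ν α w S T := by
  unfold blockShare
  split_ifs
  · have hS := hg S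
    have hT := hg T
    positivity
  · rfl

theorem dis_of_floor_blockShare_ne_zero (h : ⌊blockShare g dis ν α w S T⌋₊ ≠ 0) : dis S T := by
  by_contra hST
  simp [blockShare, hST] at h

theorem floor_blockShare_mul_le (hg : ∀ t, 0 ≤ g t) (hw : 0 < w) :
    ⌊blockShare g dis ν α w S T⌋₊ * w ≤ g S * g T * ν S * α T := by
  refine (mul_le_mul_of_nonneg_right (Nat.floor_le (blockShare_nonneg hg hw.le)) hw.le).trans ?_
  unfold blockShare
  split_ifs
  · exact (div_mul_cancel₀ _ hw.ne').le
  · have hS := hg S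
    have hT := hg T
    rw [zero_mul]
    positivity

theorem sum_blockShare_eq :
    ∑ T ∈ G, blockShare g dis ν α w S T =
      ν S / w * (g S * ∑ T ∈ G with dis S T, g T * α T) := by
  simp only [blockShare, ← sum_filter, mul_sum]
  exact sum_congr rfl fun T _ => by ring

theorem sum_blockShare_le (hw : 0 < w) (hrow : g S * ∑ T ∈ G with dis S T, g T * α T ≤ w) :
    ∑ T ∈ G, blockShare g dis ν α w S T ≤ ν S := by
  rw [sum_blockShare_eq]
  calc _ ≤ ν S / w * w := by gcongr
    _ = ν S := div_mul_cancel₀ _ hw.ne'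

theorem sum_floor_blockShare_le (hg : ∀ t, 0 ≤ g t) (hw : 0 < w)
    (hrow : g S * ∑ T ∈ G with dis S T, g T * α T ≤ w) :
    ∑ T ∈ G, ⌊blockShare g dis ν α w S T⌋₊ ≤ ν S := by
  rw [← Nat.cast_le (α := ℝ), Nat.cast_sum]
  exact (sum_le_sum fun T _ => Nat.floor_le (blockShare_nonneg hg hw.le)).trans
    (sum_blockShare_le hw hrow)

theorem sum_floor_blockShare_le' (hg : ∀ t, 0 ≤ g t) (hw : 0 < w)
    (hcol : g T * ∑ S ∈ G with dis S T, g S * ν S ≤ w) :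
    ∑ S ∈ G, ⌊blockShare g dis ν α w S T⌋₊ ≤ α T := by
  simp_rw [blockShare_swap (S := _) (T := T)]
  exact sum_floor_blockShare_le hg hw hcol

theorem sum_blockShare_sub_le_sum_floor :
    ∑ S ∈ G, ∑ T ∈ G, blockShare g dis ν α w S T - (#G : ℝ) ^ 2 ≤
      ∑ S ∈ G, ∑ T ∈ G, (⌊blockShare g dis ν α w S T⌋₊ : ℝ) := by
  rw [sub_le_iff_le_add]
  calc _ ≤ ∑ S ∈ G, ∑ T ∈ G, ((⌊blockShare g dis ν α w S T⌋₊ : ℝ) + 1) :=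
        sum_le_sum fun S _ => sum_le_sum fun T _ => (Nat.lt_floor_add_one _).le
    _ = _ := by simp only [sum_add_distrib, sum_const, nsmul_eq_mul, mul_one]; ring

theorem sum_blockShare_sub_le_of_le_add (hg : ∀ t, 0 ≤ g t) (hw : 0 < w)
    (hμ : ∀ T, μ T ≤ α T + Δ T) (hcol : ∀ T ∈ G, g T * ∑ S ∈ G with dis S T, g S * ν S ≤ w) :
    ∑ S ∈ G, ∑ T ∈ G, blockShare g dis ν μ w S T - ∑ T ∈ G, (Δ T : ℝ) ≤
      ∑ S ∈ G, ∑ T ∈ G, blockShare g dis ν α w S T := by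
  have hsplit : ∀ S T, blockShare g dis ν μ w S T ≤
      blockShare g dis ν α w S T + blockShare g dis ν Δ w S T := by
    intro S T
    unfold blockShare
    split_ifs
    · have hS := hg S
      have hT := hg T
      rw [← add_div, ← mul_add]
      gcongr
      exact_mod_cast hμ T
    · simp
  have hloss : ∑ S ∈ G, ∑ T ∈ G, blockShare g dis ν Δ w S T ≤ ∑ T ∈ G, (Δ T : ℝ) := by
    rw [sum_comm]
    refine sum_le_sum fun T hT => ?_
    simp_rw [blockShare_swap (S := _) (T := T)]
    exact sum_blockShare_le hw (hcol T hT)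
  have htotal := sum_le_sum fun S (_ : S ∈ G) => sum_le_sum fun T (_ : T ∈ G) => hsplit S T
  simp only [sum_add_distrib] at htotal
  linarith

end BlockShare

section Entropy

variable {τ : Type*} {g : τ → ℝ} {G : Finset τ} {ν α : τ → ℕ} {m : τ → τ → ℕ} {w : ℝ} {N : ℕ}

theorem factorial_mul_div_exp_one_pow_le {k a b : ℕ} {s t : ℝ} (hw : 0 ≤ w) (hN : N ≠ 0)
    (hk : k ≤ N) (hkw : k * w ≤ s * t * a * b) :
    (k.factorial : ℝ) * (w / exp 1) ^ k ≤
      exp 1 * N * ((a / exp 1) ^ k * (b / exp 1) ^ k * (s ^ k * t ^ k)) := by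
  have hfactorial : (k.factorial : ℝ) ≤ exp 1 * N * (k / exp 1) ^ k := by
    rcases eq_or_ne k 0 with rfl | hk0
    · have : (1 : ℝ) ≤ N := by exact_mod_cast Nat.one_le_iff_ne_zero.2 hN
      simpa using one_le_mul_of_one_le_of_one_le (one_le_exp zero_le_one) this
    · exact (factorial_le_exp_one_mul_div_exp_one_pow hk0).trans (by gcongr)
  calc _ ≤ exp 1 * N * (k / exp 1) ^ k * (w / exp 1) ^ k := by gcongr
    _ = exp 1 * N * (k * w / (exp 1 * exp 1)) ^ k := by
        rw [mul_assoc, ← mul_pow, div_mul_div_comm]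
    _ ≤ exp 1 * N * (s * t * a * b / (exp 1 * exp 1)) ^ k := by gcongr
    _ = _ := by
        simp only [← mul_pow]
        congr 2
        ring

theorem prod_factorial_mul_div_exp_one_pow_le (hg : ∀ t, 0 ≤ g t) (hw : 0 ≤ w) (hN : N ≠ 0)
    (hm : ∀ S T, m S T * w ≤ g S * g T * ν S * α T) (hν : ∀ S, ν S ≤ N)
    (hrow : ∀ S ∈ G, ∑ T ∈ G, m S T ≤ ν S) (hcol : ∀ T ∈ G, ∑ S ∈ G, m S T ≤ α T) :
    (∏ S ∈ G, ∏ T ∈ G, ((m S T).factorial : ℝ)) * (w / exp 1) ^ ∑ S ∈ G, ∑ T ∈ G, m S T ≤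
      (exp 1 * N) ^ #G ^ 2 *
      (((∏ S ∈ G, ((ν S).descFactorial (∑ T ∈ G, m S T) : ℝ)) *
        ∏ T ∈ G, ((α T).descFactorial (∑ S ∈ G, m S T) : ℝ)) *
      ((∏ S ∈ G, g S ^ ∑ T ∈ G, m S T) * ∏ T ∈ G, g T ^ ∑ S ∈ G, m S T)) := by
  have hmN : ∀ S ∈ G, ∀ T ∈ G, m S T ≤ N := fun S hS T hT =>
    ((single_le_sum (f := m S) (fun _ _ => Nat.zero_le _) hT).trans (hrow S hS)).trans (hν S)
  calc (∏ S ∈ G, ∏ T ∈ G, ((m S T).factorial : ℝ)) * (w / exp 1) ^ ∑ S ∈ G, ∑ T ∈ G, m S T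
      = ∏ S ∈ G, ∏ T ∈ G, (((m S T).factorial : ℝ) * (w / exp 1) ^ m S T) := by
        simp only [prod_mul_distrib, prod_pow_eq_pow_sum]
    _ ≤ ∏ S ∈ G, ∏ T ∈ G, (exp 1 * N * ((ν S / exp 1) ^ m S T * (α T / exp 1) ^ m S T *
          (g S ^ m S T * g T ^ m S T))) :=
        prod_le_prod (fun S _ => prod_nonneg fun T _ => by positivity) fun S hS =>
          prod_le_prod (fun T _ => by positivity) fun T hT =>
            factorial_mul_div_exp_one_pow_le hw hN (hmN S hS T hT) (hm S T)
    _ = (exp 1 * N) ^ #G ^ 2 *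
          (((∏ S ∈ G, (ν S / exp 1) ^ ∑ T ∈ G, m S T) * ∏ T ∈ G, (α T / exp 1) ^ ∑ S ∈ G, m S T) *
          ((∏ S ∈ G, g S ^ ∑ T ∈ G, m S T) * ∏ T ∈ G, g T ^ ∑ S ∈ G, m S T)) := by
        simp only [prod_mul_distrib, prod_const]
        rw [prod_comm (f := fun S T => (α T / exp 1) ^ m S T),
          prod_comm (f := fun S T => g T ^ m S T)]
        simp only [prod_pow_eq_pow_sum]
        ring
    _ ≤ _ := by
        have hgS := prod_nonneg fun S (_ : S ∈ G) => pow_nonneg (hg S) (∑ T ∈ G, m S T)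
        have hgT := prod_nonneg fun T (_ : T ∈ G) => pow_nonneg (hg T) (∑ S ∈ G, m S T)
        gcongr with S hS T hT
        · exact div_exp_one_pow_le_descFactorial (hrow S hS)
        · exact div_exp_one_pow_le_descFactorial (hcol T hT)

theorem prod_descFactorial_add_le {a δ : τ → ℕ} (hν : ∀ S ∈ G, ν S ≤ N) :
    ∏ S ∈ G, (ν S).descFactorial (a S + δ S) ≤
      N ^ (∑ S ∈ G, δ S) * ∏ S ∈ G, (ν S - δ S).descFactorial (a S) := by
  rw [← prod_pow_eq_pow_sum, ← prod_mul_distrib]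
  refine prod_le_prod' fun S hS => ?_
  rw [← Nat.descFactorial_mul_descFactorial (Nat.le_add_left (δ S) (a S)), Nat.add_sub_cancel,
    mul_comm]
  gcongr
  exact (Nat.descFactorial_le_pow _ _).trans (Nat.pow_le_pow_left (hν S hS) _)

theorem prod_descFactorial_mul_prod_descFactorial_le [DecidableEq τ] {m' : τ → τ → ℕ} {t₀ : τ}
    {k : ℕ} (ht₀ : t₀ ∈ G) (hm : ∀ S T, m S T = m' S T + if S = t₀ ∧ T = t₀ then k else 0)
    (hν : ∀ S ∈ G, ν S ≤ N) (hα : ∀ T ∈ G, α T ≤ N) :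
    (∏ S ∈ G, (ν S).descFactorial (∑ T ∈ G, m S T)) *
        ∏ T ∈ G, (α T).descFactorial (∑ S ∈ G, m S T) ≤
      N ^ (2 * k) * ((∏ S ∈ G, (ν S - if S = t₀ then k else 0).descFactorial (∑ T ∈ G, m' S T)) *
        ∏ T ∈ G, (α T - if T = t₀ then k else 0).descFactorial (∑ S ∈ G, m' S T)) := by
  let δ : τ → ℕ := fun S => if S = t₀ then k else 0
  have hrow : ∀ S, ∑ T ∈ G, m S T = ∑ T ∈ G, m' S T + δ S := fun S => by
    simp_rw [hm, sum_add_distrib]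
    by_cases h : S = t₀ <;> simp [δ, h, ht₀]
  have hcol : ∀ T, ∑ S ∈ G, m S T = ∑ S ∈ G, m' S T + δ T := fun T => by
    simp_rw [hm, sum_add_distrib]
    by_cases h : T = t₀ <;> simp [δ, h, ht₀]
  have hδ : ∑ S ∈ G, δ S = k := by simp [δ, ht₀]
  simp_rw [hrow, hcol]
  refine (Nat.mul_le_mul (prod_descFactorial_add_le hν) (prod_descFactorial_add_le hα)).trans_eq ?_
  rw [hδ]
  ring

end Entropy

section WeightedLowerBound

variable {V τ : Type*} [Fintype V] [DecidableEq τ]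

theorem sum_mul_card_fiber_eq (c : V → τ) (G : Finset τ) (f : τ → ℝ) :
    ∑ T ∈ G, f T * #{j | c j = T} = ∑ j with c j ∈ G, f (c j) := by
  rw [← sum_fiberwise_eq_sum_filter]
  refine sum_congr rfl fun T _ => ?_
  rw [sum_congr rfl fun j hj => by rw [(mem_filter.1 hj).2], sum_const, nsmul_eq_mul, mul_comm]

theorem prod_pow_le_prod_comp {c : V → τ} {G : Finset τ} {g : τ → ℝ} (hg : ∀ t, 1 ≤ g t)
    {k : τ → ℕ} (hk : ∀ T ∈ G, k T ≤ #{j | c j = T}) :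
    ∏ T ∈ G, g T ^ k T ≤ ∏ j, g (c j) := by
  have hg0 : ∀ t, 0 ≤ g t := fun t => zero_le_one.trans (hg t)
  calc ∏ T ∈ G, g T ^ k T ≤ ∏ T ∈ G, ∏ j with c j = T, g (c j) := by
        refine prod_le_prod (fun T _ => pow_nonneg (hg0 T) _) fun T hT => ?_
        rw [prod_congr rfl fun j hj => by rw [(mem_filter.1 hj).2], prod_const]
        exact pow_le_pow_right₀ (hg T) (hk T hT)
    _ = ∏ j with c j ∈ G, g (c j) := prod_fiberwise_eq_prod_filter _ _ _ _
    _ ≤ ∏ j, g (c j) := prod_le_prod_of_subset_of_one_le (filter_subset _ _)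
        (fun j _ => hg0 _) fun j _ _ => hg _

theorem mul_sum_card_fiber_le {c : V → τ} {G : Finset τ} {g : τ → ℝ} (hg : ∀ t, 0 ≤ g t)
    {p : τ → Prop} [DecidablePred p] {s w : ℝ} (hs : 0 ≤ s)
    (h : s * ∑ j with p (c j), g (c j) ≤ w) :
    s * ∑ T ∈ G with p T, g T * #{j | c j = T} ≤ w := by
  rw [sum_mul_card_fiber_eq]
  refine (mul_le_mul_of_nonneg_left ?_ hs).trans h
  exact sum_le_sum_of_subset_of_nonneg
    (monotone_filter_right _ fun _ _ hj => (mem_filter.1 hj).2) fun _ _ _ => hg _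

theorem sum_sum_blockShare_card_fiber (r c : V → τ) (G : Finset τ) (g : τ → ℝ)
    (dis : τ → τ → Prop) [DecidableRel dis] (w : ℝ) :
    ∑ S ∈ G, ∑ T ∈ G, blockShare g dis (fun S => #{i | r i = S}) (fun T => #{j | c j = T}) w S T =
      (∑ i with r i ∈ G, ∑ j with c j ∈ G ∧ dis (r i) (c j), g (r i) * g (c j)) / w := by
  have hcols : ∀ S, ∑ T ∈ G with dis S T, g T * #{j | c j = T} =
      ∑ j with c j ∈ G ∧ dis S (c j), g (c j) := fun S => by
    simp only [sum_mul_card_fiber_eq, mem_filter]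
  simp_rw [sum_blockShare_eq, hcols, ← mul_sum]
  rw [← sum_mul_card_fiber_eq r G fun S => g S * ∑ j with c j ∈ G ∧ dis S (c j), g (c j), sum_div]
  exact sum_congr rfl fun S _ => by ring

theorem sum_blockShare_card_fiber_sub_le_sum_floor {r c : V → τ} {G : Finset τ} {g : τ → ℝ}
    (hg : ∀ t, 0 ≤ g t) {dis : τ → τ → Prop} [DecidableRel dis] {Δ : τ → ℕ} {w : ℝ} (hw : 0 < w)
    (hcol : ∀ T ∈ G, g T * ∑ i with dis (r i) T, g (r i) ≤ w) :
    (∑ i with r i ∈ G, ∑ j with c j ∈ G ∧ dis (r i) (c j), g (r i) * g (c j)) / w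
        - ∑ T ∈ G, (Δ T : ℝ) - (#G : ℝ) ^ 2 ≤
      ∑ S ∈ G, ∑ T ∈ G,
        (⌊blockShare g dis (fun S => #{i | r i = S}) (fun T => #{j | c j = T} - Δ T)
          w S T⌋₊ : ℝ) := by
  let ν : τ → ℕ := fun S => #{i | r i = S}
  let α : τ → ℕ := fun T => #{j | c j = T} - Δ T
  have hloss := sum_blockShare_sub_le_of_le_add (ν := ν) (α := α) hg hw
    (fun T => le_tsub_add (a := Δ T) (b := #{j | c j = T}))
    fun T hT => mul_sum_card_fiber_le (p := (dis · T)) (G := G) hg (hg T) (hcol T hT)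
  have hfloor := sum_blockShare_sub_le_sum_floor (g := g) (dis := dis) (ν := ν) (α := α) (w := w)
    (G := G)
  rw [sum_sum_blockShare_card_fiber] at hloss
  linarith

theorem sum_card_fiber_le (r : V → τ) (G : Finset τ) :
    ∑ S ∈ G, #{i | r i = S} ≤ Fintype.card V := by
  rw [sum_card_fiberwise_eq_card_filter]
  exact card_le_univ _

theorem card_fiber_sub_ite_le [DecidableEq V] {c : V → τ} {R : Finset V} {t₀ : τ}
    (hR : ∀ j ∈ R, c j = t₀) (p : V → Prop) [DecidablePred p] (T : τ) :
    #{j | c j = T ∧ p j} - (if T = t₀ then #R else 0) ≤ #{j | c j = T ∧ j ∉ R ∧ p j} := by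
  split_ifs with hT
  · refine (le_card_sdiff _ _).trans (card_le_card fun j hj => ?_)
    simp only [Finset.mem_sdiff, mem_filter, mem_univ, true_and] at hj ⊢
    exact ⟨hj.1.1, hj.2, hj.1.2⟩
  · refine card_le_card fun j hj => ?_
    simp only [mem_filter, mem_univ, true_and] at hj ⊢
    exact ⟨hj.1, fun hjR => hT (hj.1.symm.trans (hR j hjR)), hj.2⟩

variable {A : V → V → Prop} [DecidableRel A] {r c : V → τ} {R R' : Finset V}
  {G : Finset τ} {t₀ : τ} {k : ℕ}

/-- The reserves are carved out of the block `(t₀, t₀)`, whose size therefore drops by `k`. -/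
theorem IsReserve.prod_descFactorial_le_matchingCount_mul_pow (hres : IsReserve A R R')
    (ht₀ : t₀ ∈ G) (hR : ∀ i ∈ R, r i = t₀) (hR' : ∀ j ∈ R', c j = t₀) (hRk : #R = k)
    (hRk' : #R' = k) {m : τ → τ → ℕ} {α : τ → ℕ} (hk : k ≤ m t₀ t₀)
    (hα : ∀ i, r i ∈ G → ∀ T ∈ G, m (r i) T ≠ 0 → α T ≤ #{j | c j = T ∧ A i j})
    (hαV : ∀ T ∈ G, α T ≤ Fintype.card V)
    (hmV : ∑ S ∈ G, ∑ T ∈ G, m S T ≤ Fintype.card V)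
    (hcard : Fintype.card V + 2 ≤ ∑ S ∈ G, ∑ T ∈ G, m S T + k) :
    (∏ S ∈ G, (#{i | r i = S}).descFactorial (∑ T ∈ G, m S T)) *
        ∏ T ∈ G, (α T).descFactorial (∑ S ∈ G, m S T) ≤
      matchingCount A * Fintype.card V ^ (4 * k) * ∏ S ∈ G, ∏ T ∈ G, (m S T).factorial := by
  classical
  let N := Fintype.card V
  let m' : τ → τ → ℕ := fun S T => m S T - if S = t₀ ∧ T = t₀ then k else 0
  have hm'm : ∀ S T, m' S T ≤ m S T := fun S T => Nat.sub_le _ _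
  have hm : ∀ S T, m S T = m' S T + if S = t₀ ∧ T = t₀ then k else 0 := fun S T => by
    refine (Nat.sub_add_cancel ?_).symm
    split_ifs with h
    · rwa [h.1, h.2]
    · exact Nat.zero_le _
  have htotal : ∑ S ∈ G, ∑ T ∈ G, m S T = ∑ S ∈ G, ∑ T ∈ G, m' S T + k := by
    simp_rw [hm, sum_add_distrib, ite_and, sum_ite_irrel, sum_const_zero, sum_ite_eq', ht₀, if_true]
  have hN : 1 < N := by
    have hkN : #R ≤ N := card_le_univ R
    omega
  have hcore := hres.prod_descFactorial_le_matchingCount_mul (r := r) (c := c) (G := G) (m := m')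
    (ν := fun S => #{i | r i = S} - if S = t₀ then k else 0)
    (α := fun T => α T - if T = t₀ then k else 0)
    (fun S _ => by simpa [hRk] using card_fiber_sub_ite_le hR (fun _ => True) S)
    (fun i hi T hT hmT => by
      have hαT := hα i hi T hT (Nat.ne_zero_of_lt ((Nat.pos_of_ne_zero hmT).trans_le (hm'm _ _)))
      have hRT := card_fiber_sub_ite_le hR' (A i) T
      rw [hRk'] at hRT
      exact (Nat.sub_le_sub_right hαT _).trans hRT)
    (by omega)
  calc _ ≤ N ^ (2 * k) * _ :=
        prod_descFactorial_mul_prod_descFactorial_le ht₀ hm (fun S _ => card_le_univ _) hαV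
    _ ≤ N ^ (2 * k) * (matchingCount A * N ^ (N - ∑ S ∈ G, ∑ T ∈ G, m' S T) *
        ∏ S ∈ G, ∏ T ∈ G, (m' S T).factorial) := Nat.mul_le_mul_left _ hcore
    _ ≤ N ^ (2 * k) * (matchingCount A * N ^ (2 * k) * ∏ S ∈ G, ∏ T ∈ G, (m S T).factorial) := by
        gcongr with S _ T _
        · exact Nat.zero_lt_of_lt hN
        · omega
        · exact hm'm S T
    _ = _ := by ring

theorem pow_le_mul_three_mul_pow_of_pow_le {N M a E : ℕ} {x P : ℝ} (hN : N ≠ 0) (hx : 0 ≤ x)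
    (hxN : x ≤ 3 * N) (hMN : M ≤ N) (hNM : N ≤ M + k) (ha : a ≤ k) (hP : 0 ≤ P)
    (h : x ^ M ≤ (exp 1 * N) ^ a * (E * N ^ (4 * k) * P)) :
    x ^ N ≤ E * (3 * N : ℝ) ^ (6 * k) * P := by
  have hN1 : (1 : ℝ) ≤ N := by exact_mod_cast Nat.one_le_iff_ne_zero.2 hN
  have h3N : (1 : ℝ) ≤ 3 * N := by linarith
  have he : exp 1 ≤ 3 := by linarith [exp_one_lt_d9]
  calc x ^ N = x ^ M * x ^ (N - M) := by rw [← pow_add, Nat.add_sub_cancel' hMN]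
    _ ≤ (exp 1 * N) ^ a * (E * N ^ (4 * k) * P) * (3 * N) ^ (N - M) := by gcongr
    _ ≤ (3 * N) ^ k * (E * (3 * N) ^ (4 * k) * P) * (3 * N) ^ k := by
        gcongr ?_ * (_ * ?_ * _) * ?_
        · exact (pow_le_pow_left₀ (by positivity) (by gcongr) _).trans (pow_le_pow_right₀ h3N ha)
        · gcongr
          linarith
        · exact pow_le_pow_right₀ h3N (by omega)
    _ = _ := by ring

/-- Once the block sizes are proportional to the weighted class sizes, falling factorials of the
class sizes divided by the block factorials are at least `(w / e) ^ M` up to the weights, by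
Stirling's formula. -/
theorem IsReserve.div_exp_one_pow_le_matchingCount_mul (hres : IsReserve A R R')
    (ht₀ : t₀ ∈ G) (hR : ∀ i ∈ R, r i = t₀) (hR' : ∀ j ∈ R', c j = t₀) (hRk : #R = k)
    (hRk' : #R' = k) {g : τ → ℝ} (hg : ∀ t, 1 ≤ g t) {m : τ → τ → ℕ} {α : τ → ℕ} {w : ℝ}
    (hw : 0 ≤ w) (hk : k ≤ m t₀ t₀) (hm : ∀ S T, m S T * w ≤ g S * g T * #{i | r i = S} * α T)
    (hrow : ∀ S ∈ G, ∑ T ∈ G, m S T ≤ #{i | r i = S}) (hcol : ∀ T ∈ G, ∑ S ∈ G, m S T ≤ α T)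
    (hα : ∀ i, r i ∈ G → ∀ T ∈ G, m (r i) T ≠ 0 → α T ≤ #{j | c j = T ∧ A i j})
    (hαc : ∀ T ∈ G, α T ≤ #{j | c j = T})
    (hcard : Fintype.card V + 2 ≤ ∑ S ∈ G, ∑ T ∈ G, m S T + k) :
    (w / exp 1) ^ (∑ S ∈ G, ∑ T ∈ G, m S T) ≤
      (exp 1 * Fintype.card V) ^ #G ^ 2 * (matchingCount A * Fintype.card V ^ (4 * k) *
        ((∏ i, g (r i)) * ∏ j, g (c j))) := by
  classical
  let N := Fintype.card V
  have hg0 : ∀ t, 0 ≤ g t := fun t => zero_le_one.trans (hg t)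
  have hmN : ∑ S ∈ G, ∑ T ∈ G, m S T ≤ N := (sum_le_sum hrow).trans (sum_card_fiber_le r G)
  have hN : N ≠ 0 := by
    have hkN : #R ≤ N := card_le_univ R
    omega
  have hcount := hres.prod_descFactorial_le_matchingCount_mul_pow ht₀ hR hR' hRk hRk' hk hα
    (fun T hT => (hαc T hT).trans (card_le_univ _)) hmN hcard
  rw [← Nat.cast_le (α := ℝ)] at hcount
  push_cast at hcount
  have hentropy := prod_factorial_mul_div_exp_one_pow_le hg0 hw hN hm (fun S => card_le_univ _)
    hrow hcol
  have hfactorial : 0 < ∏ S ∈ G, ∏ T ∈ G, ((m S T).factorial : ℝ) :=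
    prod_pos fun S _ => prod_pos fun T _ => by positivity
  have hgr := prod_pow_le_prod_comp (c := r) hg hrow
  have hgc := prod_pow_le_prod_comp (c := c) hg fun T hT => (hcol T hT).trans (hαc T hT)
  have hgrow := prod_nonneg fun S (_ : S ∈ G) => pow_nonneg (hg0 S) (∑ T ∈ G, m S T)
  have hgcol := prod_nonneg fun T (_ : T ∈ G) => pow_nonneg (hg0 T) (∑ S ∈ G, m S T)
  refine le_of_mul_le_mul_left (hentropy.trans ?_) hfactorial
  calc _ ≤ (exp 1 * N) ^ #G ^ 2 * ((matchingCount A * N ^ (4 * k) *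
        ∏ S ∈ G, ∏ T ∈ G, ((m S T).factorial : ℝ)) * ((∏ i, g (r i)) * ∏ j, g (c j))) := by
        gcongr
        exact hgrow.trans hgr
    _ = _ := by ring

theorem IsReserve.div_exp_one_pow_card_le_matchingCount_mul
    (hres : IsReserve A R R') (ht₀ : t₀ ∈ G) (hR : ∀ i ∈ R, r i = t₀) (hR' : ∀ j ∈ R', c j = t₀)
    (hRk : #R = k) (hRk' : #R' = k) {g : τ → ℝ} (hg : ∀ t, 1 ≤ g t) {dis : τ → τ → Prop}
    [DecidableRel dis] {Δ : τ → ℕ} {w : ℝ} (hw : 0 < w) (hdis : dis t₀ t₀)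
    (hrow : ∀ S ∈ G, g S * ∑ j with dis S (c j), g (c j) ≤ w)
    (hcol : ∀ T ∈ G, g T * ∑ i with dis (r i) T, g (r i) ≤ w)
    (hΔ : ∀ i, ∀ T ∈ G, r i ∈ G → dis (r i) T → #{j | c j = T ∧ ¬ A i j} ≤ Δ T)
    (hwV : w ≤ exp 1 * (3 * Fintype.card V))
    (hk : (k + 1) * w ≤ #{i | r i = t₀} * (#{j | c j = t₀} - Δ t₀ : ℕ)) (hG : #G ^ 2 ≤ k)
    (hcard : (Fintype.card V : ℝ) + 2 ≤
      (∑ i with r i ∈ G, ∑ j with c j ∈ G ∧ dis (r i) (c j), g (r i) * g (c j)) / w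
        - ∑ T ∈ G, (Δ T : ℝ) - (#G : ℝ) ^ 2 + k) :
    (w / exp 1) ^ Fintype.card V ≤
      matchingCount A * (3 * Fintype.card V : ℝ) ^ (6 * k) * ((∏ i, g (r i)) * ∏ j, g (c j)) := by
  let N := Fintype.card V
  let ν : τ → ℕ := fun S => #{i | r i = S}
  let α : τ → ℕ := fun T => #{j | c j = T} - Δ T
  let m : τ → τ → ℕ := fun S T => ⌊blockShare g dis ν α w S T⌋₊
  let M := ∑ S ∈ G, ∑ T ∈ G, m S T
  have hg0 : ∀ t, 0 ≤ g t := fun t => zero_le_one.trans (hg t)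
  have hαc : ∀ T, α T ≤ #{j | c j = T} := fun T => Nat.sub_le _ _
  have hrow' : ∀ S ∈ G, ∑ T ∈ G, m S T ≤ ν S := fun S hS => by
    refine sum_floor_blockShare_le hg0 hw ((mul_le_mul_of_nonneg_left ?_ (hg0 S)).trans
      (mul_sum_card_fiber_le (G := G) hg0 (hg0 S) (hrow S hS)))
    exact sum_le_sum fun T _ => mul_le_mul_of_nonneg_left (Nat.cast_le.2 (hαc T)) (hg0 T)
  have hM : N + 2 ≤ M + k := by
    have hmass := sum_blockShare_card_fiber_sub_le_sum_floor (c := c) (Δ := Δ) hg0 hw hcol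
    rw [← Nat.cast_le (α := ℝ)]
    simp only [M, m]
    push_cast
    linarith
  have hMN : M ≤ N := (sum_le_sum hrow').trans (sum_card_fiber_le r G)
  have hkm : k ≤ m t₀ t₀ := by
    refine Nat.le_floor ?_
    rw [blockShare, if_pos hdis, le_div_iff₀ hw, mul_assoc]
    have hgg := one_le_mul_of_one_le_of_one_le (hg t₀) (hg t₀)
    calc k * w ≤ (k + 1) * w := by gcongr; linarith
      _ ≤ ν t₀ * α t₀ := hk
      _ ≤ g t₀ * g t₀ * (ν t₀ * α t₀) := le_mul_of_one_le_left (by positivity) hgg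
  have hmain := hres.div_exp_one_pow_le_matchingCount_mul ht₀ hR hR' hRk hRk' hg hw.le hkm
    (fun S T => floor_blockShare_mul_le hg0 hw) hrow'
    (fun T hT => sum_floor_blockShare_le' hg0 hw (mul_sum_card_fiber_le hg0 (hg0 T) (hcol T hT)))
    (fun i hi T hT hmT => by
      have hbad := hΔ i T hT hi (dis_of_floor_blockShare_ne_zero hmT)
      have hsplit := card_filter_add_card_filter_not (s := {j | c j = T}) (A i)
      simp only [filter_filter] at hsplit
      simp only [α]
      omega)
    (fun T _ => hαc T) hM
  have hN : N ≠ 0 := by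
    have hkN : #R ≤ N := card_le_univ R
    omega
  exact pow_le_mul_three_mul_pow_of_pow_le hN (div_nonneg hw.le (exp_pos 1).le)
    ((div_le_iff₀' (exp_pos 1)).2 hwV) hMN (by omega) hG
    (mul_nonneg (prod_nonneg fun _ _ => hg0 _) (prod_nonneg fun _ _ => hg0 _)) hmain

end WeightedLowerBound

section GeomMean

/-- The geometric mean of `primeWeight (smallOddFactors z n)` over all integers `n`. -/
noncomputable def geomMeanPrimeWeight (z : ℕ) : ℝ :=
  ∏ p ∈ oddPrimes z, (((p : ℝ) - 1) / (p - 2)) ^ (1 / (p : ℝ))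

variable {z : ℕ}

theorem prod_primeWeight_smallOddFactors {ι : Type*} [Fintype ι] (l : ι → ℕ) (z : ℕ) :
    ∏ j, primeWeight (smallOddFactors z (l j)) =
      ∏ p ∈ oddPrimes z, (((p : ℝ) - 1) / (p - 2)) ^ (#{j | p ∣ l j} : ℝ) := by
  simp_rw [primeWeight, smallOddFactors, prod_filter]
  rw [Finset.prod_comm]
  refine prod_congr rfl fun p _ => ?_
  rw [← prod_filter, prod_const, rpow_natCast]

theorem geomMeanPrimeWeight_pow (z h : ℕ) :
    geomMeanPrimeWeight z ^ h =
      ∏ p ∈ oddPrimes z, (((p : ℝ) - 1) / (p - 2)) ^ ((h : ℝ) / p) := by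
  rw [geomMeanPrimeWeight, ← prod_pow]
  refine prod_congr rfl fun p hp => ?_
  have hbase := one_le_sub_one_div_sub_two (mem_oddPrimes.1 hp).1
  rw [← rpow_mul_natCast (zero_le_one.trans hbase), one_div_mul_eq_div]

theorem prod_rpow_le_prod_rpow_mul (hz : 2 ≤ z) {e f : ℕ → ℝ}
    (hef : ∀ p ∈ oddPrimes z, e p ≤ f p + 1) :
    ∏ p ∈ oddPrimes z, (((p : ℝ) - 1) / (p - 2)) ^ e p ≤
      (∏ p ∈ oddPrimes z, (((p : ℝ) - 1) / (p - 2)) ^ f p) * z := by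
  have hbase : ∀ p ∈ oddPrimes z, 1 ≤ ((p : ℝ) - 1) / (p - 2) :=
    fun p hp => one_le_sub_one_div_sub_two (mem_oddPrimes.1 hp).1
  have hnonneg (g : ℕ → ℝ) : ∀ p ∈ oddPrimes z, 0 ≤ (((p : ℝ) - 1) / (p - 2)) ^ g p :=
    fun p hp => rpow_nonneg (zero_le_one.trans (hbase p hp)) _
  calc _ ≤ ∏ p ∈ oddPrimes z, (((p : ℝ) - 1) / (p - 2)) ^ (f p + 1) :=
        prod_le_prod (hnonneg e) fun p hp =>
          rpow_le_rpow_of_exponent_le (hbase p hp) (hef p hp)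
    _ = (∏ p ∈ oddPrimes z, (((p : ℝ) - 1) / (p - 2)) ^ f p) * primeWeight (oddPrimes z) := by
        rw [primeWeight, ← prod_mul_distrib]
        exact prod_congr rfl fun p hp => rpow_add_one (zero_lt_one.trans_le (hbase p hp)).ne' _
    _ ≤ _ := mul_le_mul_of_nonneg_left (primeWeight_le hz subset_rfl) (prod_nonneg (hnonneg f))

theorem OddEquidistributed.prod_primeWeight_le {h : ℕ} {l : Fin h → ℕ}
    (hl : OddEquidistributed l) (hz : 2 ≤ z) :
    ∏ j, primeWeight (smallOddFactors z (l j)) ≤ geomMeanPrimeWeight z ^ h * z := by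
  rw [prod_primeWeight_smallOddFactors, geomMeanPrimeWeight_pow]
  refine prod_rpow_le_prod_rpow_mul hz fun p hp => ?_
  linarith [(abs_le.1 (hl.abs_card_dvd_sub_le p (odd_of_mem_oddPrimes hp))).2]

theorem OddEquidistributed.geomMeanPrimeWeight_pow_le {h : ℕ} {l : Fin h → ℕ}
    (hl : OddEquidistributed l) (hz : 2 ≤ z) :
    geomMeanPrimeWeight z ^ h ≤ (∏ j, primeWeight (smallOddFactors z (l j))) * z := by
  rw [prod_primeWeight_smallOddFactors, geomMeanPrimeWeight_pow]
  refine prod_rpow_le_prod_rpow_mul hz fun p hp => ?_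
  linarith [(abs_le.1 (hl.abs_card_dvd_sub_le p (odd_of_mem_oddPrimes hp))).1]

theorem prod_Icc_three_one_add_one_div (z : ℕ) :
    ∏ p ∈ Icc 3 (z + 2), (1 + 1 / ((p : ℝ) * (p - 2))) = 2 * (z + 1) / (z + 2) := by
  induction z with
  | zero => norm_num
  | succ z ih =>
    rw [show z + 1 + 2 = (z + 2) + 1 by ring, prod_Icc_succ_top (by omega), ih]
    push_cast
    rw [show (z : ℝ) + 2 + 1 - 2 = z + 1 by ring]
    field_simp
    ring

theorem meanPrimeWeight_le_two (z : ℕ) : meanPrimeWeight z ≤ 2 := by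
  have hfactor : ∀ p ∈ Icc 3 (z + 2), 1 ≤ 1 + 1 / ((p : ℝ) * (p - 2)) := fun p hp => by
    have : (3 : ℝ) ≤ p := Nat.ofNat_le_cast.2 (mem_Icc.1 hp).1
    have : (0 : ℝ) ≤ p - 2 := by linarith
    exact le_add_of_nonneg_right (by positivity)
  have hsub : oddPrimes z ⊆ Icc 3 (z + 2) :=
    (filter_subset _ _).trans (Icc_subset_Icc_right (Nat.le_add_right z 2))
  calc meanPrimeWeight z ≤ ∏ p ∈ Icc 3 (z + 2), (1 + 1 / ((p : ℝ) * (p - 2))) := by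
        refine Finset.prod_le_prod_of_subset_of_one_le hsub (fun p hp => ?_)
          fun p hp _ => hfactor p hp
        exact zero_le_one.trans (hfactor p (hsub hp))
    _ ≤ 2 := by
        rw [prod_Icc_three_one_add_one_div, div_le_iff₀ (by positivity)]
        linarith

end GeomMean

section Types

variable {z k h n p : ℕ} {S T : Finset ℕ} {y s : ℝ} {l : Fin h → ℕ}

theorem smallOddFactors_mem_sparseTypes :
    smallOddFactors z n ∈ sparseTypes z k ↔ #(smallOddFactors z n) < k := by
  rw [mem_sparseTypes, and_iff_right (smallOddFactors_subset z n)]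

theorem one_le_primeWeight_of_subset_oddPrimes (hT : T ⊆ oddPrimes z) : 1 ≤ primeWeight T :=
  one_le_primeWeight (three_le_of_subset_oddPrimes hT)

theorem one_le_primeWeight_smallOddFactors (z n : ℕ) :
    1 ≤ primeWeight (smallOddFactors z n) :=
  one_le_primeWeight_of_subset_oddPrimes (smallOddFactors_subset z n)

theorem primeWeight_smallOddFactors_le (hz : 2 ≤ z) (n : ℕ) :
    primeWeight (smallOddFactors z n) ≤ z :=
  primeWeight_le hz (smallOddFactors_subset z n)

theorem smallOddFactors_eq_empty_of_prime (hp : p.Prime) (hzp : z < p) :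
    smallOddFactors z p = ∅ := by
  refine filter_eq_empty_iff.2 fun q hq hqp => ?_
  obtain ⟨-, hqz, hprime⟩ := mem_oddPrimes.1 hq
  exact (hqz.trans_lt hzp).ne ((Nat.prime_dvd_prime_iff_eq hprime hp).1 hqp)

theorem disjoint_smallOddFactors_of_coprime {m : ℕ} (hmn : m.Coprime n) :
    Disjoint (smallOddFactors z m) (smallOddFactors z n) := by
  refine disjoint_left.2 fun p hpm hpn => ?_
  obtain ⟨hp, hpm⟩ := mem_filter.1 hpm
  exact Nat.not_coprime_of_dvd_of_dvd (mem_oddPrimes.1 hp).2.2.one_lt hpm (mem_filter.1 hpn).2 hmn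

theorem exists_large_prime_dvd_of_not_coprime {m : ℕ} (hn : Odd n) (hmn : ¬ m.Coprime n)
    (hdisj : Disjoint (smallOddFactors z m) (smallOddFactors z n)) :
    ∃ q, q.Prime ∧ z < q ∧ q ∣ m ∧ q ∣ n := by
  obtain ⟨q, hq, hqm, hqn⟩ := Nat.Prime.not_coprime_iff_dvd.1 hmn
  refine ⟨q, hq, ?_, hqm, hqn⟩
  by_contra! hqz
  have hq₂ : q ≠ 2 := fun hq₂ => Nat.not_even_iff_odd.2 hn (even_iff_two_dvd.2 (hq₂ ▸ hqn))
  have hqmem : q ∈ oddPrimes z := mem_oddPrimes.2 ⟨by have := hq.two_le; omega, hqz, hq⟩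
  exact disjoint_left.1 hdisj (mem_filter.2 ⟨hqmem, hqm⟩) (mem_filter.2 ⟨hqmem, hqn⟩)

namespace OddEquidistributed

variable (hl : OddEquidistributed l)

include hl

theorem abs_primeWeight_mul_sum_disjoint_sub_le (hz : 2 ≤ z) (hS : S ∈ sparseTypes z k) :
    |primeWeight S * (∑ j with Disjoint S (smallOddFactors z (l j)),
      primeWeight (smallOddFactors z (l j))) - h * meanPrimeWeight z| ≤ 2 ^ k * (z : ℝ) ^ 2 := by
  obtain ⟨hS, hSk⟩ := mem_sparseTypes.1 hS
  have hw := zero_lt_one.trans_le (one_le_primeWeight_of_subset_oddPrimes hS)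
  calc _ = primeWeight S * |∑ j with Disjoint S (smallOddFactors z (l j)),
          primeWeight (smallOddFactors z (l j)) - h * (meanPrimeWeight z / primeWeight S)| := by
        nth_rewrite 2 [← abs_of_pos hw]
        rw [← abs_mul, mul_sub, mul_left_comm _ (h : ℝ), mul_div_cancel₀ _ hw.ne']
    _ ≤ z * (2 ^ #S * z) := mul_le_mul (primeWeight_le hz hS)
        (hl.abs_sum_disjoint_primeWeight_sub_le hz hS) (abs_nonneg _) (Nat.cast_nonneg z)
    _ ≤ z * (2 ^ k * z) := by
        gcongr
        norm_num
    _ = 2 ^ k * (z : ℝ) ^ 2 := by ring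

theorem card_notMem_sparseTypes_le (hy : 1 ≤ y) (hs : ∑ p ∈ oddPrimes z, 1 / (p : ℝ) ≤ s) :
    (#{j | smallOddFactors z (l j) ∉ sparseTypes z k} : ℝ) ≤ 3 * h * exp (y * s) / y ^ k := by
  simp_rw [smallOddFactors_mem_sparseTypes, not_lt]
  refine (hl.card_le_card_smallOddFactors_le z k hy).trans ?_
  gcongr

theorem le_sum_primeWeight_mul_primeWeight {E : ℝ} (hz : 2 ≤ z) (hS : S ∈ sparseTypes z k)
    (hE : (#{j | smallOddFactors z (l j) ∉ sparseTypes z k} : ℝ) ≤ E) :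
    h * meanPrimeWeight z - 2 ^ k * (z : ℝ) ^ 2 - (z : ℝ) ^ 2 * E ≤
      ∑ j with smallOddFactors z (l j) ∈ sparseTypes z k ∧ Disjoint S (smallOddFactors z (l j)),
        primeWeight S * primeWeight (smallOddFactors z (l j)) := by
  have hdisj := (abs_le.1 (hl.abs_primeWeight_mul_sum_disjoint_sub_le hz hS)).1
  have hSsub := (mem_sparseTypes.1 hS).1
  have hsplit := sum_filter_add_sum_filter_not
    {j | Disjoint S (smallOddFactors z (l j))} (fun j => smallOddFactors z (l j) ∈ sparseTypes z k)
    fun j => primeWeight S * primeWeight (smallOddFactors z (l j))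
  simp only [filter_filter] at hsplit
  have hrest : ∑ j with Disjoint S (smallOddFactors z (l j)) ∧
      smallOddFactors z (l j) ∉ sparseTypes z k,
        primeWeight S * primeWeight (smallOddFactors z (l j)) ≤ (z : ℝ) ^ 2 * E := by
    calc _ ≤ #{j | Disjoint S (smallOddFactors z (l j)) ∧
          smallOddFactors z (l j) ∉ sparseTypes z k} • ((z : ℝ) * z) :=
          sum_le_card_nsmul _ _ _ fun j _ => mul_le_mul (primeWeight_le hz hSsub)
            (primeWeight_smallOddFactors_le hz _)
            (zero_le_one.trans (one_le_primeWeight_smallOddFactors z _)) (Nat.cast_nonneg z)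
      _ ≤ #{j | smallOddFactors z (l j) ∉ sparseTypes z k} • ((z : ℝ) * z) := by
          gcongr with j
          exact And.right
      _ ≤ (z : ℝ) ^ 2 * E := by
          rw [nsmul_eq_mul, mul_comm, ← sq]
          gcongr
  simp only [and_comm (b := Disjoint S _)]
  rw [mul_sum, ← hsplit] at hdisj
  linarith

end OddEquidistributed

theorem le_sum_sum_primeWeight_mul_primeWeight {a b : Fin h → ℕ} {E : ℝ}
    (hb : OddEquidistributed b) (hz : 2 ≤ z) (he : 2 ^ k * (z : ℝ) ^ 2 ≤ h)
    (hEa : (#{i | smallOddFactors z (a i) ∉ sparseTypes z k} : ℝ) ≤ E)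
    (hEb : (#{j | smallOddFactors z (b j) ∉ sparseTypes z k} : ℝ) ≤ E) :
    (h - E) * (h * meanPrimeWeight z - 2 ^ k * (z : ℝ) ^ 2) - h * ((z : ℝ) ^ 2 * E) ≤
      ∑ i with smallOddFactors z (a i) ∈ sparseTypes z k,
        ∑ j with smallOddFactors z (b j) ∈ sparseTypes z k ∧
            Disjoint (smallOddFactors z (a i)) (smallOddFactors z (b j)),
          primeWeight (smallOddFactors z (a i)) * primeWeight (smallOddFactors z (b j)) := by
  set M : ℝ := h * meanPrimeWeight z - 2 ^ k * (z : ℝ) ^ 2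
  have hM : 0 ≤ M := sub_nonneg.2 <| he.trans <|
    le_mul_of_one_le_right (Nat.cast_nonneg h) (one_le_meanPrimeWeight z)
  have hE : 0 ≤ (z : ℝ) ^ 2 * E := mul_nonneg (by positivity) ((Nat.cast_nonneg _).trans hEa)
  have hcard : (#{i | smallOddFactors z (a i) ∈ sparseTypes z k} : ℝ) +
      #{i | smallOddFactors z (a i) ∉ sparseTypes z k} = h := by
    have := card_filter_add_card_filter_not (s := (univ : Finset (Fin h)))
      fun i => smallOddFactors z (a i) ∈ sparseTypes z k
    rw [card_univ, Fintype.card_fin] at this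
    exact_mod_cast this
  calc _ ≤ #{i | smallOddFactors z (a i) ∈ sparseTypes z k} * M -
          #{i | smallOddFactors z (a i) ∈ sparseTypes z k} * ((z : ℝ) ^ 2 * E) := by
        gcongr
        · linarith
        · exact_mod_cast hcard ▸ le_add_of_nonneg_right (Nat.cast_nonneg _)
    _ = ∑ i with smallOddFactors z (a i) ∈ sparseTypes z k, (M - (z : ℝ) ^ 2 * E) := by
        rw [sum_const, nsmul_eq_mul, ← mul_sub]
    _ ≤ _ := sum_le_sum fun i hi =>
        hb.le_sum_primeWeight_mul_primeWeight hz (mem_filter.1 hi).2 hEb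

end Types

section LargePrimes

variable {z h n : ℕ} {l : Fin h → ℕ} {P Q : Finset ℕ}

/-- `P` is a set of primes that are values of `l` and exceed both `z` and `√(2h + 1)`. An integer
up to `2h + 1` has at most one prime factor in `P`, so that such primes may serve as reserves. -/
structure IsLargePrimeSet {h : ℕ} (l : Fin h → ℕ) (z : ℕ) (P : Finset ℕ) : Prop where
  prime : ∀ p ∈ P, p.Prime
  lt : ∀ p ∈ P, z < p
  lt_mul_self : ∀ p ∈ P, 2 * h + 1 < p * p
  exists_eq : ∀ p ∈ P, ∃ i, l i = p

namespace IsLargePrimeSet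

theorem mono (hP : IsLargePrimeSet l z P) (hQP : Q ⊆ P) : IsLargePrimeSet l z Q :=
  ⟨fun p hp => hP.prime p (hQP hp), fun p hp => hP.lt p (hQP hp),
    fun p hp => hP.lt_mul_self p (hQP hp), fun p hp => hP.exists_eq p (hQP hp)⟩

variable (hP : IsLargePrimeSet l z P)

include hP

theorem smallOddFactors_eq_empty {i : Fin h} (hi : l i ∈ P) : smallOddFactors z (l i) = ∅ :=
  smallOddFactors_eq_empty_of_prime (hP.prime _ hi) (hP.lt _ hi)

theorem card_filter_mem (hl : Function.Injective l) : #{i | l i ∈ P} = #P := by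
  rw [← card_image_of_injective _ hl]
  congr 1
  ext p
  simp only [mem_image, mem_filter_univ]
  refine ⟨?_, fun hp => ?_⟩
  · rintro ⟨i, hi, rfl⟩
    exact hi
  · obtain ⟨i, rfl⟩ := hP.exists_eq p hp
    exact ⟨i, hp, rfl⟩

theorem card_le_card_filter_smallOddFactors_eq_empty (hl : Function.Injective l) :
    #P ≤ #{i | smallOddFactors z (l i) = ∅} := by
  rw [← hP.card_filter_mem hl]
  exact card_le_card (monotone_filter_right _ fun _ _ hi => hP.smallOddFactors_eq_empty hi)

theorem card_filter_not_coprime_le_one (hl : Function.Injective l) (hn₀ : 1 ≤ n)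
    (hn : n ≤ 2 * h + 1) : #{i ∈ {i | l i ∈ P} | ¬ (l i).Coprime n} ≤ 1 := by
  have hdvd {i} (hi : i ∈ ({i ∈ {i | l i ∈ P} | ¬ (l i).Coprime n} : Finset (Fin h))) :
      l i ∈ P ∧ l i ∣ n := by
    rw [mem_filter, mem_filter_univ] at hi
    exact ⟨hi.1, (hP.prime _ hi.1).dvd_iff_not_coprime.2 hi.2⟩
  refine card_le_one.2 fun i hi j hj => hl ?_
  obtain ⟨hiP, hin⟩ := hdvd hi
  obtain ⟨hjP, hjn⟩ := hdvd hj
  by_contra hne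
  have hcop := (Nat.coprime_primes (hP.prime _ hiP) (hP.prime _ hjP)).2 hne
  have hmul := (Nat.le_of_dvd hn₀ (hcop.mul_dvd_of_dvd_of_dvd hin hjn)).trans hn
  rcases le_total (l i) (l j) with hle | hle
  · exact (hP.lt_mul_self _ hiP).not_ge ((Nat.mul_le_mul_left _ hle).trans hmul)
  · exact (hP.lt_mul_self _ hjP).not_ge ((Nat.mul_le_mul_right _ hle).trans hmul)

end IsLargePrimeSet

theorem IsLargePrimeSet.isReserve {a b : Fin h → ℕ} (ha : OddEquidistributed a)
    (hb : OddEquidistributed b) (hPa : IsLargePrimeSet a z P) (hPb : IsLargePrimeSet b z P) :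
    IsReserve (fun i j => (a i).Coprime (b j)) {i | a i ∈ P} {j | b j ∈ P} where
  card_rows_le j :=
    hPa.card_filter_not_coprime_le_one ha.injective (hb.one_le j) (hb.le_two_mul_add_one j)
  card_cols_le i := by
    simp_rw [Nat.coprime_comm (n := a i)]
    exact hPb.card_filter_not_coprime_le_one hb.injective (ha.one_le i) (ha.le_two_mul_add_one i)

end LargePrimes

section Conflicts

variable {z k h : ℕ} {s : ℝ} {T : Finset ℕ} {b : Fin h → ℕ}

/-- An upper bound for the number of odd labels of type `T` that share a prime factor, necessarily
larger than `z`, with a given label whose type is disjoint from `T`. -/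
noncomputable def conflictBound (h z : ℕ) (T : Finset ℕ) : ℕ :=
  ⌊(Nat.log 2 (2 * h + 1) * (3 * h / (z * ∏ p ∈ T, (p : ℝ))) : ℝ)⌋₊

theorem conflictBound_le (h z : ℕ) (T : Finset ℕ) :
    (conflictBound h z T : ℝ) ≤
      Nat.log 2 (2 * h + 1) * (3 * h / (z : ℝ)) * ∏ p ∈ T, 1 / (p : ℝ) := by
  refine (Nat.floor_le (by positivity)).trans_eq ?_
  rw [prod_div_distrib, prod_const_one]
  ring

theorem sum_conflictBound_le (hs : ∑ p ∈ oddPrimes z, 1 / (p : ℝ) ≤ s) :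
    ∑ T ∈ sparseTypes z k, (conflictBound h z T : ℝ) ≤
      Nat.log 2 (2 * h + 1) * (3 * h / (z : ℝ)) * exp s := by
  calc _ ≤ ∑ T ∈ sparseTypes z k,
          Nat.log 2 (2 * h + 1) * (3 * h / (z : ℝ)) * ∏ p ∈ T, 1 / (p : ℝ) :=
        sum_le_sum fun T _ => conflictBound_le h z T
    _ ≤ Nat.log 2 (2 * h + 1) * (3 * h / (z : ℝ)) * ∏ p ∈ oddPrimes z, (1 + 1 / (p : ℝ)) := by
        rw [← mul_sum, prod_one_add]
        gcongr
        exact filter_subset _ _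
    _ ≤ _ := by
        gcongr
        refine le_trans ?_ (exp_le_exp.2 hs)
        rw [exp_sum]
        exact prod_le_prod (fun _ _ => by positivity) fun p _ => by
          rw [add_comm]
          exact add_one_le_exp _

theorem OddEquidistributed.card_not_coprime_le_conflictBound (hb : OddEquidistributed b)
    (hodd : ∀ j, Odd (b j)) (hz : 2 ≤ z) {n : ℕ} (hn₀ : 1 ≤ n) (hn : n ≤ 2 * h + 1)
    (hT : T ⊆ oddPrimes z) (hdisj : Disjoint (smallOddFactors z n) T) :
    #{j | smallOddFactors z (b j) = T ∧ ¬ n.Coprime (b j)} ≤ conflictBound h z T := by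
  refine Nat.le_floor ?_
  calc (#{j | smallOddFactors z (b j) = T ∧ ¬ n.Coprime (b j)} : ℝ)
      ≤ #{j | smallOddFactors z (b j) = T ∧ ∃ q ∈ n.primeFactors, z < q ∧ q ∣ b j} := by
        refine Nat.cast_le.2 <| card_le_card <| monotone_filter_right _ ?_
        rintro j - ⟨rfl, hnb⟩
        obtain ⟨q, hq, hzq, hqn, hqb⟩ := exists_large_prime_dvd_of_not_coprime (hodd j) hnb hdisj
        exact ⟨rfl, q, Nat.mem_primeFactors.2 ⟨hq, hqn, by omega⟩, hzq, hqb⟩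
    _ ≤ Nat.log 2 n * (3 * h / (z * ∏ p ∈ T, (p : ℝ))) :=
        hb.card_shared_large_prime_le hz (by omega) hT
    _ ≤ _ := by
        have := prod_pos_of_subset_oddPrimes hT
        gcongr

end Conflicts

section CoprimeMatchings

variable {h z k : ℕ} {a b : Fin h → ℕ}

theorem primeWeight_nonneg (T : Finset ℕ) : 0 ≤ primeWeight T := by
  refine prod_nonneg ?_
  rintro (_ | _ | q) -
  · norm_num
  · norm_num
  · rw [show ((q + 1 + 1 : ℕ) : ℝ) = q + 2 by push_cast; ring, add_sub_cancel_right]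
    exact div_nonneg (by linarith [q.cast_nonneg (α := ℝ)]) q.cast_nonneg

theorem geomMeanPrimeWeight_pos (z : ℕ) : 0 < geomMeanPrimeWeight z :=
  prod_pos fun _ hp => rpow_pos_of_pos
    (zero_lt_one.trans_le (one_le_sub_one_div_sub_two (mem_oddPrimes.1 hp).1)) _

theorem card_image_smallOddFactors_le (hz : z ≠ 0) (b : Fin h → ℕ) :
    #(univ.image fun j => smallOddFactors z (b j)) ≤
      z ^ k + #{j | smallOddFactors z (b j) ∉ sparseTypes z k} := by
  have hsub : (univ.image fun j => smallOddFactors z (b j)) ⊆ sparseTypes z k ∪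
      ({j | smallOddFactors z (b j) ∉ sparseTypes z k} : Finset (Fin h)).image
        fun j => smallOddFactors z (b j) := by
    intro t ht
    obtain ⟨j, -, rfl⟩ := mem_image.1 ht
    by_cases hj : smallOddFactors z (b j) ∈ sparseTypes z k
    · exact mem_union_left _ hj
    · exact mem_union_right _ (mem_image.2 ⟨j, (mem_filter_univ j).2 hj, rfl⟩)
  exact (card_le_card hsub).trans <| (card_union_le _ _).trans <|
    add_le_add (card_sparseTypes_le hz k) card_image_le

theorem sum_primeWeight_mul_primeWeight_le (hz : 2 ≤ z) (b : Fin h → ℕ) (n : ℕ)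
    (J : Finset (Fin h)) :
    (∑ j ∈ J, primeWeight (smallOddFactors z (b j))) * primeWeight (smallOddFactors z n) ≤
      h * (z : ℝ) ^ 2 := by
  calc _ ≤ (∑ _j : Fin h, (z : ℝ)) * z := by
        refine mul_le_mul ?_ (primeWeight_smallOddFactors_le hz n) (primeWeight_nonneg _)
          (by positivity)
        exact (sum_le_sum_of_subset_of_nonneg (subset_univ J) fun j _ _ =>
          primeWeight_nonneg _).trans
          (sum_le_sum fun j _ => primeWeight_smallOddFactors_le hz (b j))
    _ = h * (z : ℝ) ^ 2 := by
        rw [sum_const, card_univ, Fintype.card_fin, nsmul_eq_mul]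
        ring

theorem OddEquidistributed.prod_sum_primeWeight_mul_le (hb : OddEquidistributed b) (hz : 2 ≤ z)
    (i₀ : Fin h) {E : ℕ} (hE : #{i | smallOddFactors z (a i) ∉ sparseTypes z k} ≤ E) :
    ∏ i, ((∑ j with i = i₀ ∨ Disjoint (smallOddFactors z (a i)) (smallOddFactors z (b j)),
        primeWeight (smallOddFactors z (b j))) * primeWeight (smallOddFactors z (a i))) ≤
      (h * meanPrimeWeight z + 2 ^ k * (z : ℝ) ^ 2) ^ h * ((z : ℝ) ^ 2) ^ (E + 1) := by
  set w : ℝ := h * meanPrimeWeight z + 2 ^ k * (z : ℝ) ^ 2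
  have hhw : (h : ℝ) ≤ w := (le_mul_of_one_le_right (Nat.cast_nonneg h)
    (one_le_meanPrimeWeight z)).trans (le_add_of_nonneg_right (by positivity))
  set X : Finset (Fin h) := {i | i = i₀ ∨ smallOddFactors z (a i) ∉ sparseTypes z k}
  have hX : #X ≤ E + 1 := by
    rw [show X = _ from filter_or _ _ _, add_comm]
    refine (card_union_le _ _).trans (add_le_add ?_ hE)
    rw [filter_eq' univ i₀, if_pos (mem_univ i₀), card_singleton]
  calc _ ≤ ∏ i, w * (if i ∈ X then (z : ℝ) ^ 2 else 1) := by
        refine prod_le_prod (fun i _ => mul_nonneg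
          (sum_nonneg fun j _ => primeWeight_nonneg _) (primeWeight_nonneg _)) fun i _ => ?_
        split_ifs with hi
        · exact (sum_primeWeight_mul_primeWeight_le hz b (a i) _).trans (by gcongr)
        · simp only [X, mem_filter_univ, not_or, not_not] at hi
          simp only [hi.1, false_or, mul_one]
          rw [mul_comm]
          linarith [(abs_le.1 (hb.abs_primeWeight_mul_sum_disjoint_sub_le hz hi.2)).2]
    _ = w ^ h * ((z : ℝ) ^ 2) ^ #X := by
        rw [prod_mul_distrib, prod_ite_mem, univ_inter, prod_const, prod_const, card_univ,
          Fintype.card_fin]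
    _ ≤ w ^ h * ((z : ℝ) ^ 2) ^ (E + 1) := by
        have : (1 : ℝ) ≤ (z : ℝ) ^ 2 := one_le_pow₀ (Nat.one_le_cast.2 (by omega))
        have : 0 ≤ w := (Nat.cast_nonneg h).trans hhw
        gcongr

theorem OddEquidistributed.matchingCount_coprime_mul_le (ha : OddEquidistributed a)
    (hb : OddEquidistributed b) (i₀ : Fin h) (hz : 2 ≤ z) {E : ℕ}
    (hEa : #{i | smallOddFactors z (a i) ∉ sparseTypes z k} ≤ E)
    (hEb : #{j | smallOddFactors z (b j) ∉ sparseTypes z k} ≤ E) :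
    matchingCount (fun i j => i = i₀ ∨ (a i).Coprime (b j)) *
        (geomMeanPrimeWeight z ^ h * geomMeanPrimeWeight z ^ h) ≤
      (exp 1 * h) ^ (z ^ k + E) * exp (-h) *
        (h * meanPrimeWeight z + 2 ^ k * (z : ℝ) ^ 2) ^ h * (z : ℝ) ^ (2 * E + 4) := by
  set wa := ∏ i, primeWeight (smallOddFactors z (a i))
  set wb := ∏ j, primeWeight (smallOddFactors z (b j))
  set F : Fin h → ℝ := fun i =>
    ∑ j with i = i₀ ∨ Disjoint (smallOddFactors z (a i)) (smallOddFactors z (b j)),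
      primeWeight (smallOddFactors z (b j))
  set N := matchingCount fun i j =>
    i = i₀ ∨ Disjoint (smallOddFactors z (a i)) (smallOddFactors z (b j))
  have hwa : 0 ≤ wa := prod_nonneg fun i _ => primeWeight_nonneg _
  have hcount : matchingCount (fun i j => i = i₀ ∨ (a i).Coprime (b j)) ≤ N :=
    matchingCount_mono fun i j => Or.imp_right disjoint_smallOddFactors_of_coprime
  have hbase : 1 ≤ exp 1 * h := one_le_mul_of_one_le_of_one_le (one_le_exp zero_le_one)
    (Nat.one_le_cast.2 i₀.pos)
  have htypes := (card_image_smallOddFactors_le (by omega) b).trans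
    (Nat.add_le_add_left hEb (z ^ k))
  have hmatch : N * wb ≤ (exp 1 * h) ^ (z ^ k + E) * exp (-h) * ∏ i, F i := by
    have := matchingCount_mul_prod_le (fun i t => i = i₀ ∨ Disjoint (smallOddFactors z (a i)) t)
      (fun j => smallOddFactors z (b j)) primeWeight_nonneg
    rw [Fintype.card_fin] at this
    refine this.trans ?_
    have hF₀ : 0 ≤ ∏ i, F i := prod_nonneg fun i _ => sum_nonneg fun j _ => primeWeight_nonneg _
    gcongr
  calc _ ≤ N * ((wa * z) * (wb * z)) := by
        have := (geomMeanPrimeWeight_pos z).le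
        gcongr
        · exact ha.geomMeanPrimeWeight_pow_le hz
        · exact hb.geomMeanPrimeWeight_pow_le hz
    _ = N * wb * wa * (z : ℝ) ^ 2 := by ring
    _ ≤ (exp 1 * h) ^ (z ^ k + E) * exp (-h) * (∏ i, F i) * wa * (z : ℝ) ^ 2 := by gcongr
    _ = (exp 1 * h) ^ (z ^ k + E) * exp (-h) *
        (∏ i, F i * primeWeight (smallOddFactors z (a i))) * (z : ℝ) ^ 2 := by
        rw [prod_mul_distrib, mul_assoc (_ * exp _)]
    _ ≤ (exp 1 * h) ^ (z ^ k + E) * exp (-h) *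
        ((h * meanPrimeWeight z + 2 ^ k * (z : ℝ) ^ 2) ^ h * ((z : ℝ) ^ 2) ^ (E + 1)) *
        (z : ℝ) ^ 2 := by
        gcongr
        exact hb.prod_sum_primeWeight_mul_le hz i₀ hEa
    _ = _ := by
        rw [← pow_mul]
        ring

/-- Side conditions on the sieve parameters and on the size `R` of the reserves under which coprime
matchings of labels can be counted from below. Here `E` bounds the number of labels outside the
sparse types, `s` bounds `∑ 1 / p` over the small primes, and `N` is the number of large primes
available as reserves. -/
structure AdmissibleParameters (h z k R N : ℕ) (E s : ℝ) : Prop where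
  two_le_z : 2 ≤ z
  one_le_k : 1 ≤ k
  reserve_le : R ≤ N
  error_le : 2 ^ k * (z : ℝ) ^ 2 ≤ h
  sum_one_div_le : ∑ p ∈ oddPrimes z, 1 / (p : ℝ) ≤ s
  reserve_mul_le :
    ((R : ℝ) + 1) * (3 * h) ≤ N * (N - Nat.log 2 (2 * h + 1) * (3 * h / (z : ℝ)))
  loss_le : 2 * (2 ^ k * (z : ℝ) ^ 2) + (1 + (z : ℝ) ^ 2) * E +
    Nat.log 2 (2 * h + 1) * (3 * h / (z : ℝ)) * exp s + (z : ℝ) ^ (2 * k) + 2 ≤ R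

namespace AdmissibleParameters

variable {R N : ℕ} {E s w : ℝ} (hpar : AdmissibleParameters h z k R N E s)

include hpar

theorem rowWeight_le : h * meanPrimeWeight z + 2 ^ k * (z : ℝ) ^ 2 ≤ 3 * h := by
  linarith [mul_le_mul_of_nonneg_left (meanPrimeWeight_le_two z) (Nat.cast_nonneg (α := ℝ) h),
    hpar.error_le]

theorem card_sparseTypes_sq_le (hE : 0 ≤ E) : #(sparseTypes z k) ^ 2 ≤ R := by
  have hcard : (#(sparseTypes z k) : ℝ) ≤ (z : ℝ) ^ k := by
    exact_mod_cast card_sparseTypes_le (by have := hpar.two_le_z; omega) k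
  have : 0 ≤ Nat.log 2 (2 * h + 1) * (3 * h / (z : ℝ)) * exp s := by positivity
  have : 0 ≤ 2 * (2 ^ k * (z : ℝ) ^ 2) := by positivity
  have : 0 ≤ (1 + (z : ℝ) ^ 2) * E := by positivity
  rw [← Nat.cast_le (α := ℝ), Nat.cast_pow]
  calc (#(sparseTypes z k) : ℝ) ^ 2 ≤ ((z : ℝ) ^ k) ^ 2 := by gcongr
    _ = (z : ℝ) ^ (2 * k) := by rw [← pow_mul, mul_comm]
    _ ≤ R := by linarith [hpar.loss_le]

theorem card_add_two_le (hE : 0 ≤ E) {m : ℝ}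
    (hm : (h - E) * (h * meanPrimeWeight z - 2 ^ k * (z : ℝ) ^ 2) - h * ((z : ℝ) ^ 2 * E) ≤ m) :
    (h : ℝ) + 2 ≤ m / (h * meanPrimeWeight z + 2 ^ k * (z : ℝ) ^ 2) -
      ∑ T ∈ sparseTypes z k, (conflictBound h z T : ℝ) - (#(sparseTypes z k) : ℝ) ^ 2 + R := by
  set e : ℝ := 2 ^ k * (z : ℝ) ^ 2
  set w : ℝ := h * meanPrimeWeight z + e
  have he : 0 < e := mul_pos (by positivity)
    (pow_pos (Nat.cast_pos.2 (zero_lt_two.trans_le hpar.two_le_z)) 2)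
  have hhw : (h : ℝ) ≤ w := (le_mul_of_one_le_right (Nat.cast_nonneg h)
    (one_le_meanPrimeWeight z)).trans (le_add_of_nonneg_right he.le)
  have hw : 0 < w := add_pos_of_nonneg_of_pos
    (mul_nonneg (Nat.cast_nonneg h) (zero_le_one.trans (one_le_meanPrimeWeight z))) he
  have hmass : (h : ℝ) - E - 2 * e - (z : ℝ) ^ 2 * E ≤ m / w := by
    refine le_trans ?_ (div_le_div_of_nonneg_right hm hw.le)
    rw [le_div_iff₀ hw, show (h : ℝ) * meanPrimeWeight z = w - e by simp only [w]; ring]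
    have hzE := mul_le_mul_of_nonneg_right hhw (show 0 ≤ (z : ℝ) ^ 2 * E by positivity)
    have hhe := mul_le_mul_of_nonneg_right hhw he.le
    have hEe := mul_nonneg hE he.le
    linarith
  have hcard : (#(sparseTypes z k) : ℝ) ^ 2 ≤ (z : ℝ) ^ (2 * k) := by
    rw [mul_comm, pow_mul]
    gcongr
    exact_mod_cast card_sparseTypes_le (by have := hpar.two_le_z; omega) k
  linarith [sum_conflictBound_le (k := k) (h := h) hpar.sum_one_div_le, hpar.loss_le]

theorem reserve_add_one_mul_le {x y : ℕ} (hx : N ≤ x) (hy : N ≤ y) :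
    (R + 1) * (h * meanPrimeWeight z + 2 ^ k * (z : ℝ) ^ 2) ≤
      x * (y - conflictBound h z ∅ : ℕ) := by
  have hconf := conflictBound_le h z ∅
  rw [prod_empty, mul_one] at hconf
  have hsub : (y : ℝ) ≤ (y - conflictBound h z ∅ : ℕ) + conflictBound h z ∅ := by
    exact_mod_cast le_tsub_add
  have hyN : (N : ℝ) ≤ y := Nat.cast_le.2 hy
  calc _ ≤ (R + 1) * (3 * h : ℝ) := by
        gcongr
        exact hpar.rowWeight_le
    _ ≤ N * (N - Nat.log 2 (2 * h + 1) * (3 * h / (z : ℝ))) := hpar.reserve_mul_le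
    _ ≤ N * (y - conflictBound h z ∅ : ℕ) :=
        mul_le_mul_of_nonneg_left (by linarith) (Nat.cast_nonneg N)
    _ ≤ _ := by gcongr

end AdmissibleParameters

theorem OddEquidistributed.pow_le_matchingCount_coprime_mul_prod (ha : OddEquidistributed a)
    (hb : OddEquidistributed b) (hodd : ∀ j, Odd (b j)) {R : ℕ} {P : Finset ℕ} {E s : ℝ}
    (hPa : IsLargePrimeSet a z P) (hPb : IsLargePrimeSet b z P)
    (hpar : AdmissibleParameters h z k R #P E s)
    (hEa : (#{i | smallOddFactors z (a i) ∉ sparseTypes z k} : ℝ) ≤ E)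
    (hEb : (#{j | smallOddFactors z (b j) ∉ sparseTypes z k} : ℝ) ≤ E) :
    ((h * meanPrimeWeight z + 2 ^ k * (z : ℝ) ^ 2) / exp 1) ^ h ≤
      matchingCount (fun i j => (a i).Coprime (b j)) * (3 * h : ℝ) ^ (6 * R) *
        ((∏ i, primeWeight (smallOddFactors z (a i))) *
          ∏ j, primeWeight (smallOddFactors z (b j))) := by
  have hz := hpar.two_le_z
  have hE : 0 ≤ E := (Nat.cast_nonneg _).trans hEa
  have hmean := one_le_meanPrimeWeight z
  set w : ℝ := h * meanPrimeWeight z + 2 ^ k * (z : ℝ) ^ 2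
  have hw : 0 < w := by
    have : (0 : ℝ) < z := Nat.cast_pos.2 (by omega)
    positivity
  -- The weights have to be at least `1` even at sets that are not types.
  set g : Finset ℕ → ℝ := fun t => max 1 (primeWeight t)
  have hgs {T} (hT : T ⊆ oddPrimes z) : g T = primeWeight T :=
    max_eq_right (one_le_primeWeight_of_subset_oddPrimes hT)
  have hg (n) : g (smallOddFactors z n) = primeWeight (smallOddFactors z n) :=
    hgs (smallOddFactors_subset z n)
  have hrow {l : Fin h → ℕ} (hl : OddEquidistributed l) {S} (hS : S ∈ sparseTypes z k) :
      g S * ∑ j with Disjoint S (smallOddFactors z (l j)), g (smallOddFactors z (l j)) ≤ w := by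
    simp only [hg, hgs (mem_sparseTypes.1 hS).1]
    linarith [(abs_le.1 (hl.abs_primeWeight_mul_sum_disjoint_sub_le hz hS)).2]
  obtain ⟨Q, hQP, hQ⟩ := exists_subset_card_eq hpar.reserve_le
  have hQa := hPa.mono hQP
  have hQb := hPb.mono hQP
  have hmain := (hQa.isReserve ha hb hQb).div_exp_one_pow_card_le_matchingCount_mul
    (G := sparseTypes z k) (t₀ := ∅) (r := fun i => smallOddFactors z (a i))
    (c := fun j => smallOddFactors z (b j)) (dis := Disjoint) (Δ := conflictBound h z)
    (g := g) (w := w) (k := R) (mem_sparseTypes.2 ⟨empty_subset _, hpar.one_le_k⟩)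
    (fun i hi => hQa.smallOddFactors_eq_empty ((mem_filter_univ i).1 hi))
    (fun j hj => hQb.smallOddFactors_eq_empty ((mem_filter_univ j).1 hj))
    ((hQa.card_filter_mem ha.injective).trans hQ) ((hQb.card_filter_mem hb.injective).trans hQ)
    (fun t => le_max_left _ _) hw (disjoint_empty_left _) (fun S hS => hrow hb hS)
    (fun T hT => by simpa only [disjoint_comm (b := T)] using hrow ha hT)
    (fun i T hT _ => hb.card_not_coprime_le_conflictBound hodd hz (ha.one_le i)
      (ha.le_two_mul_add_one i) (mem_sparseTypes.1 hT).1)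
  simp only [hg, Fintype.card_fin] at hmain
  exact hmain
    (hpar.rowWeight_le.trans (le_mul_of_one_le_left (by positivity) (one_le_exp zero_le_one)))
    (hpar.reserve_add_one_mul_le
      (hPa.card_le_card_filter_smallOddFactors_eq_empty ha.injective)
      (hPb.card_le_card_filter_smallOddFactors_eq_empty hb.injective))
    (hpar.card_sparseTypes_sq_le hE)
    (hpar.card_add_two_le hE
      (le_sum_sum_primeWeight_mul_primeWeight hb hz hpar.error_le hEa hEb))

theorem OddEquidistributed.le_matchingCount_coprime_mul (ha : OddEquidistributed a)
    (hb : OddEquidistributed b) (hodd : ∀ j, Odd (b j)) {R : ℕ} {P : Finset ℕ} {E s : ℝ}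
    (hPa : IsLargePrimeSet a z P) (hPb : IsLargePrimeSet b z P)
    (hpar : AdmissibleParameters h z k R #P E s)
    (hEa : (#{i | smallOddFactors z (a i) ∉ sparseTypes z k} : ℝ) ≤ E)
    (hEb : (#{j | smallOddFactors z (b j) ∉ sparseTypes z k} : ℝ) ≤ E) :
    (h * meanPrimeWeight z / exp 1) ^ h ≤
      matchingCount (fun i j => (a i).Coprime (b j)) * (3 * h : ℝ) ^ (6 * R) *
        ((geomMeanPrimeWeight z ^ h * z) * (geomMeanPrimeWeight z ^ h * z)) := by
  have hwa := ha.prod_primeWeight_le hpar.two_le_z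
  have hwb := hb.prod_primeWeight_le hpar.two_le_z
  have hwa₀ : 0 ≤ ∏ i, primeWeight (smallOddFactors z (a i)) :=
    prod_nonneg fun i _ => primeWeight_nonneg _
  have hwb₀ : 0 ≤ ∏ j, primeWeight (smallOddFactors z (b j)) :=
    prod_nonneg fun j _ => primeWeight_nonneg _
  have hmean := one_le_meanPrimeWeight z
  calc _ ≤ ((h * meanPrimeWeight z + 2 ^ k * (z : ℝ) ^ 2) / exp 1) ^ h := by
        gcongr
        exact le_add_of_nonneg_right (by positivity)
    _ ≤ _ := ha.pow_le_matchingCount_coprime_mul_prod hb hodd hPa hPb hpar hEa hEb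
    _ ≤ _ := mul_le_mul_of_nonneg_left
        (mul_le_mul hwa hwb hwb₀ (hwa₀.trans hwa)) (by positivity)

end CoprimeMatchings

section Progressions

theorem abs_count_modEq_sub_le (h v : ℕ) {d : ℕ} (hd : 0 < d) :
    |(Nat.count (· ≡ v [MOD d]) h : ℝ) - h / d| ≤ 1 := by
  have hdiv : (h : ℝ) / d = (h / d : ℕ) + (h % d : ℕ) / (d : ℝ) := by
    have : (d : ℝ) ≠ 0 := Nat.cast_ne_zero.2 hd.ne'
    nth_rewrite 1 [← Nat.div_add_mod h d]
    push_cast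
    field_simp
  have hfract_nonneg : 0 ≤ (h % d : ℕ) / (d : ℝ) := by positivity
  have hfract_le : (h % d : ℕ) / (d : ℝ) ≤ 1 :=
    div_le_one_of_le₀ (Nat.cast_le.2 (Nat.mod_lt h hd).le) d.cast_nonneg
  rw [Nat.count_modEq_card h hd v, hdiv, abs_le]
  push_cast
  split_ifs <;> constructor <;> linarith

theorem card_filter_fin_eq_count (h : ℕ) (p : ℕ → Prop) [DecidablePred p] :
    #{i : Fin h | p i} = Nat.count p h := by
  rw [Nat.count_eq_card_filter_range, card_filter, card_filter,
    Fin.sum_univ_eq_sum_range fun i => if p i then 1 else 0]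

theorem exists_dvd_mul_add_iff_modEq {a d : ℕ} (hd : d ≠ 0) (had : a.Coprime d) (b : ℕ) :
    ∃ v, ∀ j, d ∣ a * j + b ↔ j ≡ v [MOD d] := by
  have := NeZero.mk hd
  set u := ZMod.unitOfCoprime a had with hu
  refine ⟨(↑u⁻¹ * -b : ZMod d).val, fun j => ?_⟩
  rw [← ZMod.natCast_eq_zero_iff, ← ZMod.natCast_eq_natCast_iff, ZMod.natCast_zmod_val]
  push_cast
  rw [← ZMod.coe_unitOfCoprime a had, ← hu, add_eq_zero_iff_eq_neg, Units.eq_inv_mul_iff_mul_eq]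

theorem oddEquidistributed_mul_add {h a b : ℕ} (ha : ∀ d, Odd d → a.Coprime d) (hb : 1 ≤ b)
    (hle : ∀ j : Fin h, a * j + b ≤ 2 * h + 1) : OddEquidistributed fun j : Fin h => a * j + b where
  injective i j hij := by
    have ha₀ : a ≠ 0 := by
      rintro rfl
      exact absurd (ha 3 (by decide)) (by decide)
    exact Fin.ext (Nat.eq_of_mul_eq_mul_left (Nat.pos_of_ne_zero ha₀) (Nat.add_right_cancel hij))
  one_le _ := hb.trans (Nat.le_add_left _ _)
  le_two_mul_add_one := hle
  abs_card_dvd_sub_le d hd := by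
    obtain ⟨v, hv⟩ := exists_dvd_mul_add_iff_modEq hd.pos.ne' (ha d hd) b
    simp_rw [hv]
    rw [card_filter_fin_eq_count h (· ≡ v [MOD d])]
    exact abs_count_modEq_sub_le h v hd.pos

theorem oddEquidistributed_add_one (h : ℕ) : OddEquidistributed fun i : Fin h => (i : ℕ) + 1 := by
  simpa only [one_mul] using oddEquidistributed_mul_add (h := h) (fun d _ => d.coprime_one_left)
    le_rfl fun j => by omega

theorem oddEquidistributed_two_mul_add {h c : ℕ} (hc : 1 ≤ c) (hc' : c ≤ 3) :
    OddEquidistributed fun j : Fin h => 2 * (j : ℕ) + c :=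
  oddEquidistributed_mul_add (fun _ => Nat.coprime_two_left.2) hc fun j => by omega

end Progressions

section Primes

/-- The primes in `(max z √(2h + 1), h]`: each of them labels both a row and a column of the
coprimality matrix, so that they provide the reserves. -/
def reservedPrimes (z h : ℕ) : Finset ℕ := {p ∈ Icc 1 h | p.Prime ∧ z < p ∧ 2 * h + 1 < p * p}

theorem le_card_reservedPrimes (z h : ℕ) :
    (h * log 2 - log (h + 1)) / log h - z - √(2 * h + 1) ≤ #(reservedPrimes z h) := by
  have hsub : Nat.primesBelow (h + 1) ⊆
      reservedPrimes z h ∪ (Icc 1 z ∪ Icc 1 (Nat.sqrt (2 * h + 1))) := by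
    intro p hp
    have hlt := Nat.lt_of_mem_primesBelow hp
    have hprime := Nat.prime_of_mem_primesBelow hp
    simp only [mem_union, mem_Icc, Nat.le_sqrt, reservedPrimes, mem_filter, hprime, true_and]
    have := hprime.one_lt
    omega
  have hcard : Nat.primeCounting h ≤ #(reservedPrimes z h) + (z + Nat.sqrt (2 * h + 1)) := by
    have := (card_le_card hsub).trans ((card_union_le _ _).trans
      (Nat.add_le_add_left (card_union_le _ _) _))
    rwa [Nat.primesBelow_card_eq_primeCounting', Nat.card_Icc, Nat.card_Icc] at this
  have hcard' : (Nat.primeCounting h : ℝ) ≤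
      #(reservedPrimes z h) + (z + (Nat.sqrt (2 * h + 1) : ℝ)) := mod_cast hcard
  have hsqrt : (Nat.sqrt (2 * h + 1) : ℝ) ≤ √(2 * h + 1) := mod_cast Real.nat_sqrt_le_real_sqrt
  linarith [Chebyshev.pi_ge h]

theorem isLargePrimeSet_reservedPrimes {h z : ℕ} {l : Fin h → ℕ}
    (hl : ∀ p ≤ h, p.Prime → z < p → ∃ i, l i = p) : IsLargePrimeSet l z (reservedPrimes z h) where
  prime _ hp := (mem_filter.1 hp).2.1
  lt _ hp := (mem_filter.1 hp).2.2.1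
  lt_mul_self _ hp := (mem_filter.1 hp).2.2.2
  exists_eq p hp :=
    have ⟨hle, hprime, hlt, _⟩ := mem_filter.1 hp
    hl p (mem_Icc.1 hle).2 hprime hlt

theorem isLargePrimeSet_reservedPrimes_add_one (h z : ℕ) :
    IsLargePrimeSet (fun i : Fin h => (i : ℕ) + 1) z (reservedPrimes z h) :=
  isLargePrimeSet_reservedPrimes fun p hle hprime _ =>
    ⟨⟨p - 1, by have := hprime.pos; omega⟩, Nat.sub_add_cancel hprime.one_le⟩

theorem isLargePrimeSet_reservedPrimes_two_mul_add {h z c : ℕ} (hz : 2 ≤ z) (hc : Odd c)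
    (hc' : c ≤ 3) :
    IsLargePrimeSet (fun j : Fin h => 2 * (j : ℕ) + c) z (reservedPrimes z h) :=
  isLargePrimeSet_reservedPrimes fun p hle hprime hlt => by
    obtain ⟨m, rfl⟩ := hprime.odd_of_ne_two (by omega)
    obtain ⟨e, rfl⟩ := hc
    exact ⟨⟨m - e, by omega⟩, by dsimp only; omega⟩

/-- The primes in `(2 ^ L, 2 ^ (L + 1)]`. -/
def dyadicPrimes (L : ℕ) : Finset ℕ := {p ∈ Ioc (2 ^ L) (2 ^ (L + 1)) | p.Prime}

theorem mem_dyadicPrimes {L p : ℕ} :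
    p ∈ dyadicPrimes L ↔ (2 ^ L < p ∧ p ≤ 2 ^ (L + 1)) ∧ p.Prime := by
  rw [dyadicPrimes, mem_filter, mem_Ioc]

theorem card_dyadicPrimes_mul_le (L : ℕ) : (#(dyadicPrimes L) : ℝ) * L ≤ 4 * 2 ^ L := by
  have hlog_le {p : ℕ} (hp : p ∈ dyadicPrimes L) : L * log 2 ≤ log p := by
    rw [← log_pow]
    exact log_le_log (by positivity) (mod_cast (mem_dyadicPrimes.1 hp).1.1.le)
  have hsub : dyadicPrimes L ⊆ {p ∈ Icc 0 (2 ^ (L + 1)) | p.Prime} :=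
    filter_subset_filter _ fun _ hp => mem_Icc.2 ⟨zero_le, (mem_Ioc.1 hp).2⟩
  have htheta := Chebyshev.theta_le_log4_mul_x (x := (2 ^ (L + 1) : ℕ)) (Nat.cast_nonneg _)
  rw [Chebyshev.theta_eq_sum_Icc, Nat.floor_natCast] at htheta
  refine le_of_mul_le_mul_right ?_ (log_pos one_lt_two)
  calc #(dyadicPrimes L) * (L : ℝ) * log 2
    _ = #(dyadicPrimes L) • (L * log 2) := by rw [nsmul_eq_mul, mul_assoc]
    _ ≤ ∑ p ∈ dyadicPrimes L, log p := card_nsmul_le_sum _ _ _ fun _ hp => hlog_le hp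
    _ ≤ ∑ p ∈ Icc 0 (2 ^ (L + 1)) with Nat.Prime p, log p :=
        sum_le_sum_of_subset_of_nonneg hsub fun p _ _ => log_natCast_nonneg p
    _ ≤ 4 * 2 ^ L * log 2 := by
        refine htheta.trans_eq ?_
        rw [show (4 : ℝ) = 2 ^ 2 by norm_num, log_pow]
        push_cast
        ring

theorem sum_dyadicPrimes_one_div_le {L : ℕ} (hL : L ≠ 0) :
    ∑ p ∈ dyadicPrimes L, 1 / (p : ℝ) ≤ 4 / L := by
  calc ∑ p ∈ dyadicPrimes L, 1 / (p : ℝ)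
    _ ≤ ∑ p ∈ dyadicPrimes L, 1 / (2 : ℝ) ^ L := by
        refine sum_le_sum fun p hp => one_div_le_one_div_of_le (by positivity) ?_
        exact_mod_cast (mem_dyadicPrimes.1 hp).1.1.le
    _ = #(dyadicPrimes L) / (2 : ℝ) ^ L := by rw [sum_const, nsmul_eq_mul, mul_one_div]
    _ ≤ 4 / L := by
        rw [div_le_div_iff₀ (by positivity) (by positivity)]
        exact card_dyadicPrimes_mul_le L

theorem oddPrimes_two_pow_succ_subset (L : ℕ) :
    oddPrimes (2 ^ (L + 1)) ⊆ oddPrimes (2 ^ L) ∪ dyadicPrimes L := by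
  intro p
  simp only [mem_union, mem_oddPrimes, mem_dyadicPrimes]
  rintro ⟨hthree, hle, hprime⟩
  rcases le_or_gt p (2 ^ L) with hp | hp
  · exact Or.inl ⟨hthree, hp, hprime⟩
  · exact Or.inr ⟨⟨hp, hle⟩, hprime⟩

theorem sum_oddPrimes_two_pow_one_div_le_harmonic (L : ℕ) :
    ∑ p ∈ oddPrimes (2 ^ (L + 1)), 1 / (p : ℝ) ≤ 4 * harmonic L := by
  induction L with
  | zero =>
    rw [show oddPrimes (2 ^ (0 + 1)) = ∅ from rfl]
    simp
  | succ L ih =>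
    have hnonneg (p : ℕ) : 0 ≤ 1 / (p : ℝ) := by positivity
    calc ∑ p ∈ oddPrimes (2 ^ (L + 1 + 1)), 1 / (p : ℝ)
      _ ≤ ∑ p ∈ oddPrimes (2 ^ (L + 1)) ∪ dyadicPrimes (L + 1), 1 / (p : ℝ) :=
          sum_le_sum_of_subset_of_nonneg (oddPrimes_two_pow_succ_subset _) fun p _ _ => hnonneg p
      _ ≤ ∑ p ∈ oddPrimes (2 ^ (L + 1)), 1 / (p : ℝ) +
            ∑ p ∈ dyadicPrimes (L + 1), 1 / (p : ℝ) := by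
          rw [← sum_union_inter]
          exact le_add_of_nonneg_right (sum_nonneg fun p _ => hnonneg p)
      _ ≤ 4 * harmonic L + 4 / (L + 1 : ℕ) :=
          add_le_add ih (sum_dyadicPrimes_one_div_le L.succ_ne_zero)
      _ = 4 * harmonic (L + 1) := by
          rw [harmonic_succ]
          push_cast
          ring

theorem sum_oddPrimes_two_pow_one_div_le (L : ℕ) :
    ∑ p ∈ oddPrimes (2 ^ (L + 1)), 1 / (p : ℝ) ≤ 4 * (1 + log L) := by
  linarith [harmonic_le_one_add_log L, sum_oddPrimes_two_pow_one_div_le_harmonic L]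

end Primes

section CoprimeConst

/-- The factor of `coprimeConst` at `x = p`, as a function of a real variable. -/
noncomputable def coprimeFactor (x : ℝ) : ℝ :=
  (x - 1) ^ (2 * (1 - 1 / x)) / (x * (x - 2) ^ (1 - 2 / x))

variable {x : ℝ} {z : ℕ}

theorem coprimeFactor_two : coprimeFactor 2 = 1 / 2 := by
  norm_num [coprimeFactor]

theorem coprimeFactor_eq (hx : 2 < x) :
    coprimeFactor x = (1 + 1 / (x * (x - 2))) * ((x - 1) / (x - 2)) ^ (-(2 / x)) := by
  have hx₁ : 0 < x - 1 := by linarith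
  have hx₂ : 0 < x - 2 := by linarith
  rw [coprimeFactor, div_rpow hx₁.le hx₂.le, show 2 * (1 - 1 / x) = 2 + -(2 / x) by ring,
    rpow_add hx₁, show 1 - 2 / x = 1 + -(2 / x) by ring, rpow_add hx₂, rpow_one, rpow_two]
  have := rpow_pos_of_pos hx₂ (-(2 / x))
  field_simp
  ring

theorem coprimeFactor_pos (hx : 2 ≤ x) : 0 < coprimeFactor x := by
  rcases hx.eq_or_lt with rfl | hx
  · rw [coprimeFactor_two]
    exact one_half_pos
  · have hx₁ : 0 < x - 1 := by linarith
    have : 0 < x - 2 := by linarith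
    rw [coprimeFactor_eq hx]
    positivity

theorem log_coprimeFactor (hx : 2 < x) : log (coprimeFactor x) =
    log (1 + 1 / (x * (x - 2))) - 2 / x * log ((x - 1) / (x - 2)) := by
  have hx₁ : 0 < x - 1 := by linarith
  have : 0 < x - 2 := by linarith
  rw [coprimeFactor_eq hx, log_mul (by positivity) (by positivity), log_rpow (by positivity)]
  ring

theorem log_coprimeFactor_nonpos (hx : 3 ≤ x) : log (coprimeFactor x) ≤ 0 := by
  have hx₁ : 0 < x - 1 := by linarith
  have hx₂ : 0 < x - 2 := by linarith
  rw [log_coprimeFactor (by linarith), sub_nonpos]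
  calc log (1 + 1 / (x * (x - 2)))
    _ ≤ 1 / (x * (x - 2)) := by
        linarith [log_le_sub_one_of_pos (show 0 < 1 + 1 / (x * (x - 2)) by positivity)]
    _ ≤ 2 / x * (1 - ((x - 1) / (x - 2))⁻¹) := by
        rw [inv_div, one_sub_div hx₁.ne', div_mul_div_comm,
          div_le_div_iff₀ (by positivity) (by positivity)]
        nlinarith [mul_pos (show 0 < x by linarith) hx₂]
    _ ≤ 2 / x * log ((x - 1) / (x - 2)) := by
        gcongr
        exact one_sub_inv_le_log_of_pos (by positivity)

theorem neg_log_coprimeFactor_le (hx : 2 < x) :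
    -log (coprimeFactor x) ≤ 1 / (x - 2) - 1 / x := by
  have hx₁ : 0 < x - 1 := by linarith
  have hx₂ : 0 < x - 2 := by linarith
  have hlog : 0 ≤ log (1 + 1 / (x * (x - 2))) :=
    log_nonneg (le_add_of_nonneg_right (by positivity))
  calc -log (coprimeFactor x)
    _ ≤ 2 / x * log ((x - 1) / (x - 2)) := by
        rw [log_coprimeFactor hx]
        linarith
    _ ≤ 2 / x * ((x - 1) / (x - 2) - 1) := by
        gcongr
        exact log_le_sub_one_of_pos (by positivity)
    _ = 1 / (x - 2) - 1 / x := by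
        field_simp
        ring

/-- The negative logarithm of the factor of `coprimeConst` at `n` if `n` is prime, and `0`
otherwise, so that `coprimeConst` becomes the exponential of a series over `ℕ`. -/
noncomputable def coprimeDefect (n : ℕ) : ℝ := if n.Prime then -log (coprimeFactor n) else 0

theorem coprimeDefect_nonneg (n : ℕ) : 0 ≤ coprimeDefect n := by
  rw [coprimeDefect]
  split_ifs with hn
  · rw [neg_nonneg]
    rcases hn.two_le.eq_or_lt with rfl | hn
    · rw [Nat.cast_ofNat, coprimeFactor_two]
      exact log_nonpos one_half_pos.le one_half_lt_one.le
    · exact log_coprimeFactor_nonpos (mod_cast hn)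
  · exact le_rfl

theorem coprimeDefect_le {n : ℕ} (hn : 2 < n) :
    coprimeDefect n ≤ 1 / ((n : ℝ) - 2) - 1 / n := by
  have hn' : (2 : ℝ) < n := mod_cast hn
  rw [coprimeDefect]
  split_ifs
  · exact neg_log_coprimeFactor_le hn'
  · exact sub_nonneg.2 (one_div_le_one_div_of_le (by linarith) (by linarith))

theorem sum_coprimeDefect_add_le (hz : 2 ≤ z) (m : ℕ) :
    ∑ n ∈ range (z + 1 + m), coprimeDefect n ≤ ∑ n ∈ range (z + 1), coprimeDefect n +
      (1 / ((z : ℝ) - 1) + 1 / z - (1 / (z + m - 1) + 1 / (z + m))) := by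
  induction m with
  | zero => simp
  | succ m ih =>
    have hdefect := coprimeDefect_le (n := z + 1 + m) (by omega)
    rw [← add_assoc, sum_range_succ]
    push_cast at hdefect ⊢
    rw [show (z : ℝ) + 1 + m - 2 = z + m - 1 by ring, show (z : ℝ) + 1 + m = z + (m + 1) by ring]
      at hdefect
    rw [show (z : ℝ) + (m + 1) - 1 = z + m by ring]
    linarith

theorem sum_range_coprimeDefect_le (hz : 2 ≤ z) (N : ℕ) :
    ∑ n ∈ range N, coprimeDefect n ≤
      ∑ n ∈ range (z + 1), coprimeDefect n + 2 / ((z : ℝ) - 1) := by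
  have hz' : (2 : ℝ) ≤ z := mod_cast hz
  have : (0 : ℝ) ≤ N := N.cast_nonneg
  calc ∑ n ∈ range N, coprimeDefect n
    _ ≤ ∑ n ∈ range (z + 1 + N), coprimeDefect n :=
        sum_le_sum_of_subset_of_nonneg (range_subset_range.2 (Nat.le_add_left _ _))
          fun n _ _ => coprimeDefect_nonneg n
    _ ≤ _ := sum_coprimeDefect_add_le hz N
    _ ≤ ∑ n ∈ range (z + 1), coprimeDefect n + (1 / ((z : ℝ) - 1) + 1 / (z - 1)) := by
        have hsub : 0 ≤ 1 / ((z : ℝ) + N - 1) := one_div_nonneg.2 (by linarith)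
        have hadd : 0 ≤ 1 / ((z : ℝ) + N) := by positivity
        have hle : 1 / (z : ℝ) ≤ 1 / (z - 1) := one_div_le_one_div_of_le (by linarith) (by linarith)
        linarith
    _ = _ := by ring

theorem summable_coprimeDefect : Summable coprimeDefect :=
  summable_of_sum_range_le coprimeDefect_nonneg (sum_range_coprimeDefect_le le_rfl)

theorem coprimeConst_eq_exp : coprimeConst = exp (-∑' n, coprimeDefect n) := by
  have hsupport : Function.support coprimeDefect ⊆ {n | n.Prime} :=
    fun _ hn => of_not_not fun hprime => hn (if_neg hprime)
  have hsum : HasSum (fun p : Nat.Primes => coprimeDefect p) (∑' n, coprimeDefect n) :=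
    (hasSum_subtype_iff_of_support_subset (s := {n | n.Prime}) (f := coprimeDefect)
      hsupport).2 summable_coprimeDefect.hasSum
  rw [← hsum.neg.rexp.tprod_eq, coprimeConst]
  refine tprod_congr fun p => ?_
  simp only [Function.comp, coprimeDefect, p.2, if_true, neg_neg]
  rw [exp_log (coprimeFactor_pos (mod_cast p.2.two_le)), coprimeFactor]

theorem coprimeConst_pos : 0 < coprimeConst := by
  rw [coprimeConst_eq_exp]
  exact exp_pos _

theorem coprimeConst_le_one : coprimeConst ≤ 1 := by
  rw [coprimeConst_eq_exp, exp_le_one_iff, neg_nonpos]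
  exact tsum_nonneg coprimeDefect_nonneg

theorem filter_prime_range_succ (hz : 2 ≤ z) :
    {p ∈ range (z + 1) | p.Prime} = insert 2 (oddPrimes z) := by
  ext p
  rw [mem_insert, mem_oddPrimes, mem_filter, mem_range]
  refine ⟨fun ⟨_, hprime⟩ => ?_, ?_⟩
  · have := hprime.two_le
    rw [and_iff_left hprime]
    omega
  · rintro (rfl | ⟨-, hp, hprime⟩)
    · exact ⟨by omega, Nat.prime_two⟩
    · exact ⟨by omega, hprime⟩

theorem coprimeFactor_mul_rpow_sq {p : ℕ} (hp : 3 ≤ p) :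
    coprimeFactor p * ((((p : ℝ) - 1) / (p - 2)) ^ (1 / (p : ℝ))) ^ 2 =
      1 + 1 / ((p : ℝ) * (p - 2)) := by
  have hbase := zero_lt_one.trans_le (one_le_sub_one_div_sub_two hp)
  rw [coprimeFactor_eq (mod_cast hp), mul_assoc, ← rpow_mul_natCast hbase.le, ← rpow_add hbase]
  rw [show -(2 / (p : ℝ)) + 1 / p * (2 : ℕ) = 0 by push_cast; ring, rpow_zero, mul_one]

theorem prod_coprimeFactor_oddPrimes_mul (z : ℕ) :
    (∏ p ∈ oddPrimes z, coprimeFactor p) * geomMeanPrimeWeight z ^ 2 = meanPrimeWeight z := by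
  rw [geomMeanPrimeWeight, meanPrimeWeight, ← prod_pow, ← prod_mul_distrib]
  exact prod_congr rfl fun p hp => coprimeFactor_mul_rpow_sq (mem_oddPrimes.1 hp).1

theorem exp_neg_sum_coprimeDefect (N : ℕ) :
    exp (-∑ n ∈ range N, coprimeDefect n) = ∏ p ∈ range N with p.Prime, coprimeFactor p := by
  rw [← sum_neg_distrib, exp_sum, prod_filter]
  refine prod_congr rfl fun n _ => ?_
  rw [coprimeDefect]
  split_ifs with hn
  · rw [neg_neg, exp_log (coprimeFactor_pos (mod_cast hn.two_le))]
  · rw [neg_zero, exp_zero]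

theorem meanPrimeWeight_eq (hz : 2 ≤ z) :
    meanPrimeWeight z =
      2 * exp (-∑ n ∈ range (z + 1), coprimeDefect n) * geomMeanPrimeWeight z ^ 2 := by
  have htwo : 2 ∉ oddPrimes z := fun h => absurd (mem_oddPrimes.1 h).1 (by decide)
  rw [exp_neg_sum_coprimeDefect, filter_prime_range_succ hz, prod_insert htwo, Nat.cast_ofNat,
    coprimeFactor_two, ← prod_coprimeFactor_oddPrimes_mul]
  ring

theorem two_mul_coprimeConst_mul_le_meanPrimeWeight (hz : 2 ≤ z) :
    2 * coprimeConst * geomMeanPrimeWeight z ^ 2 ≤ meanPrimeWeight z := by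
  rw [meanPrimeWeight_eq hz, coprimeConst_eq_exp]
  gcongr
  exact summable_coprimeDefect.sum_le_tsum _ fun n _ => coprimeDefect_nonneg n

theorem meanPrimeWeight_le_two_mul_coprimeConst_mul (hz : 2 ≤ z) :
    meanPrimeWeight z ≤
      2 * coprimeConst * exp (2 / ((z : ℝ) - 1)) * geomMeanPrimeWeight z ^ 2 := by
  have htsum := summable_coprimeDefect.tsum_le_of_sum_range_le (sum_range_coprimeDefect_le hz)
  rw [meanPrimeWeight_eq hz, coprimeConst_eq_exp, mul_assoc 2 (exp _) (exp _), ← exp_add]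
  gcongr
  linarith

end CoprimeConst

section Parity

theorem perm_eq_of_card_le {V : Type*} [Fintype V] {σ τ : Equiv.Perm V}
    {s : Finset V} (hs : Fintype.card V ≤ #s + 1) (h : ∀ i ∈ s, σ i = τ i) : σ = τ := by
  classical
  rw [eq_comm, ← inv_mul_eq_one, ← Equiv.Perm.card_support_le_one]
  have hsub : (τ⁻¹ * σ).support ⊆ sᶜ := by
    intro i hi
    rw [mem_compl]
    intro his
    rw [Equiv.Perm.mem_support, Equiv.Perm.mul_apply, h i his] at hi
    exact hi (τ.symm_apply_apply i)
  have := card_le_card hsub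
  rw [card_compl] at this
  omega

/-- The number of matchings of `ι`, placed in `V` by `v`, into `V` along the graph `A`. -/
noncomputable def partialMatchingCount {ι V : Type*} (v : ι ↪ V) (A : V → V → Prop) : ℕ :=
  Nat.card {f : ι ↪ V // ∀ i, A (v i) (f i)}

theorem matchingCount_le_partialMatchingCount_sq {ι V : Type*} [Fintype ι] [Fintype V] (v : ι ↪ V)
    {A : V → V → Prop} (hsymm : ∀ i j, A i j → A j i) (hindep : ∀ i j, ¬ A (v i) (v j))
    (hcard : Fintype.card V ≤ 2 * Fintype.card ι + 1) :
    matchingCount A ≤ partialMatchingCount v A ^ 2 := by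
  classical
  let F (σ : {σ : Equiv.Perm V // ∀ i, A i (σ i)}) :
      {f : ι ↪ V // ∀ i, A (v i) (f i)} × {f : ι ↪ V // ∀ i, A (v i) (f i)} :=
    (⟨v.trans σ.1.toEmbedding, fun i => σ.2 (v i)⟩,
      ⟨v.trans σ.1.symm.toEmbedding, fun i => hsymm _ _ <| by
        simpa using σ.2 (σ.1.symm (v i))⟩)
  have hF : Function.Injective F := by
    rintro ⟨σ, hσ⟩ ⟨τ, hτ⟩ hστ
    have happly (i : ι) : σ (v i) = τ (v i) :=
      DFunLike.congr_fun (congrArg (fun p => p.1.1) hστ) i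
    have happly_symm (i : ι) : σ.symm (v i) = τ.symm (v i) :=
      DFunLike.congr_fun (congrArg (fun p => p.2.1) hστ) i
    have hdisj : Disjoint (univ.map v) (univ.map (v.trans σ.symm.toEmbedding)) := by
      rw [disjoint_left]
      intro x hx hx'
      obtain ⟨i, -, rfl⟩ := mem_map.1 hx
      obtain ⟨j, -, hij⟩ := mem_map.1 hx'
      refine hindep i j ?_
      have := hσ (v i)
      rwa [← hij, show σ ((v.trans σ.symm.toEmbedding) j) = v j from σ.apply_symm_apply _,
        hij] at this
    refine Subtype.ext <| perm_eq_of_card_le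
      (s := univ.map v ∪ univ.map (v.trans σ.symm.toEmbedding)) ?_ fun x hx => ?_
    · rwa [card_union_of_disjoint hdisj, card_map, card_map, card_univ, ← two_mul]
    · rcases mem_union.1 hx with hx | hx <;> obtain ⟨i, -, rfl⟩ := mem_map.1 hx
      · exact happly i
      · change σ (σ.symm (v i)) = τ (σ.symm (v i))
        rw [σ.apply_symm_apply, happly_symm, τ.apply_symm_apply]
  rw [matchingCount, partialMatchingCount, sq, ← Nat.card_prod]
  exact Nat.card_le_card_of_injective F hF

theorem matchingCount_comp_equiv {V W : Type*} (e : V ≃ W) (A : W → W → Prop) :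
    matchingCount (fun i j => A (e i) (e j)) = matchingCount A :=
  Nat.card_congr <| e.permCongr.subtypeEquiv fun σ => by
    simp [e.forall_congr_left]

theorem sq_matchingCount_le_matchingCount_sum {α γ : Type*} [Finite α] [Finite γ]
    {A : α → α → Prop} {B : (α ⊕ α) ⊕ γ → (α ⊕ α) ⊕ γ → Prop} (hsymm : ∀ x y, B x y → B y x)
    (hAB : ∀ i j, A i j → B (.inl (.inl i)) (.inl (.inr j)))
    (hγ : ∀ k, B (.inr k) (.inr k)) : matchingCount A ^ 2 ≤ matchingCount B := by
  let F (p : {σ : Equiv.Perm α // ∀ i, A i (σ i)} × {σ : Equiv.Perm α // ∀ i, A i (σ i)}) :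
      {σ : Equiv.Perm ((α ⊕ α) ⊕ γ) // ∀ x, B x (σ x)} :=
    ⟨((p.1.1.sumCongr p.2.1.symm).trans (Equiv.sumComm α α)).sumCongr (Equiv.refl γ), by
      rintro ((i | j) | k)
      · exact hAB _ _ (p.1.2 i)
      · refine hsymm _ _ (hAB _ _ ?_)
        simpa using p.2.2 (p.2.1.symm j)
      · exact hγ k⟩
  have hF : Function.Injective F := by
    rintro ⟨⟨f, hf⟩, ⟨f', hf'⟩⟩ ⟨⟨g, hg⟩, ⟨g', hg'⟩⟩ hfg
    have happly (x) : (F ⟨⟨f, hf⟩, ⟨f', hf'⟩⟩).1 x = (F ⟨⟨g, hg⟩, ⟨g', hg'⟩⟩).1 x := by rw [hfg]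
    have hfg₁ : f = g := Equiv.ext fun i => by simpa [F] using happly (.inl (.inl i))
    have hfg₂ : f'.symm = g'.symm := Equiv.ext fun i => by simpa [F] using happly (.inl (.inr i))
    have hfg₃ : f' = g' := by rw [← f'.symm_symm, hfg₂, g'.symm_symm]
    subst hfg₁ hfg₃
    rfl
  rw [sq, matchingCount, matchingCount, ← Nat.card_prod]
  exact Nat.card_le_card_of_injective F hF

/-- The elements of `Fin n` that stand for the even numbers in `{1, …, n}`. -/
def evenIndex (n : ℕ) : Fin (n / 2) ↪ Fin n where
  toFun i := ⟨2 * i + 1, by omega⟩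
  inj' i j hij := Fin.ext (by have := congrArg Fin.val hij; dsimp only at this; omega)

theorem evenIndex_apply {n : ℕ} (i : Fin (n / 2)) : (evenIndex n i : ℕ) = 2 * i + 1 :=
  rfl

theorem coprimePermCount_eq_matchingCount (n : ℕ) :
    coprimePermCount n = matchingCount fun i j : Fin n => ((i : ℕ) + 1).Coprime (j + 1) :=
  rfl

theorem partialMatchingCount_evenIndex_le {n : ℕ} (i₀ : Fin ((n + 1) / 2))
    (hi₀ : (i₀ : ℕ) + 1 = (n + 1) / 2) :
    partialMatchingCount (evenIndex n) (fun i j : Fin n => ((i : ℕ) + 1).Coprime (j + 1)) ≤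
      matchingCount fun i j : Fin ((n + 1) / 2) =>
        i = i₀ ∨ ((i : ℕ) + 1).Coprime (2 * (j : ℕ) + 1) := by
  let C := {f : Fin (n / 2) ↪ Fin n //
    ∀ i, ((evenIndex n i : ℕ) + 1).Coprime ((f i : ℕ) + 1)}
  have heven (f : C) (i : Fin (n / 2)) : 2 * ((f.1 i : ℕ) / 2) = f.1 i := by
    refine Nat.two_mul_div_two_of_even ?_
    have := Nat.Coprime.coprime_dvd_left (show 2 ∣ 2 * (i : ℕ) + 1 + 1 by omega) (f.2 i)
    rwa [Nat.coprime_two_left, Nat.odd_add_one, Nat.not_odd_iff_even] at this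
  let u : Fin (n / 2) ↪ Fin ((n + 1) / 2) := Fin.castLEEmb (by omega)
  let half (f : C) : Fin (n / 2) ↪ Fin ((n + 1) / 2) :=
    ⟨fun i => ⟨f.1 i / 2, by omega⟩, fun i j hij => f.1.injective <| Fin.ext <| by
      rw [← heven f i, ← heven f j, Fin.mk.inj hij]⟩
  have hexists (f : C) : ∃ σ : Equiv.Perm (Fin ((n + 1) / 2)), ∀ i, σ (u i) = half f i :=
    Equiv.Perm.exists_extending_pair _ _ u.injective (half f).injective
  choose F hF using hexists
  have hFu (f : C) (i : Fin (n / 2)) : (f.1 i : ℕ) = 2 * (F f (u i) : ℕ) := by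
    rw [← heven f i]
    exact congrArg (2 * ·) (congrArg Fin.val (hF f i)).symm
  refine Nat.card_le_card_of_injective (fun f : C => ⟨F f, fun i => ?_⟩) fun f g hfg => ?_
  · refine or_iff_not_imp_left.2 fun hi => ?_
    have hlt : (i : ℕ) < n / 2 := by
      have : (i : ℕ) ≠ i₀ := fun h => hi (Fin.ext h)
      omega
    have hcop := f.2 ⟨i, hlt⟩
    rw [hFu f ⟨i, hlt⟩] at hcop
    exact hcop.coprime_dvd_left ⟨2, by rw [evenIndex_apply]; ring⟩
  · refine Subtype.ext <| DFunLike.ext _ _ fun i => Fin.ext ?_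
    rw [hFu f i, hFu g i, (Subtype.mk.inj hfg : F f = F g)]

theorem coprimePermCount_le_sq {n : ℕ} (i₀ : Fin ((n + 1) / 2))
    (hi₀ : (i₀ : ℕ) + 1 = (n + 1) / 2) :
    coprimePermCount n ≤ (matchingCount fun i j : Fin ((n + 1) / 2) =>
      i = i₀ ∨ ((i : ℕ) + 1).Coprime (2 * (j : ℕ) + 1)) ^ 2 := by
  rw [coprimePermCount_eq_matchingCount]
  refine (matchingCount_le_partialMatchingCount_sq (evenIndex n) (fun _ _ => Nat.Coprime.symm)
    (fun i j hij => ?_) ?_).trans (Nat.pow_le_pow_left (partialMatchingCount_evenIndex_le i₀ hi₀) 2)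
  · exact Nat.not_coprime_of_dvd_of_dvd one_lt_two (Dvd.intro (i + 1 : ℕ) rfl)
      (Dvd.intro (j + 1 : ℕ) rfl) hij
  · rw [Fintype.card_fin, Fintype.card_fin]
    omega

/-- The positions in `Fin n` of the even numbers in `{1, …, n}`, of as many odd numbers, and of the
number `1` if `n` is odd. -/
noncomputable def parityEquiv (n : ℕ) : (Fin (n / 2) ⊕ Fin (n / 2)) ⊕ Fin (n % 2) ≃ Fin n :=
  Equiv.ofBijective
    (Sum.elim (Sum.elim (evenIndex n) fun j => ⟨2 * j + 2 * (n % 2), by omega⟩)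
      fun k => ⟨0, by have := k.2; omega⟩) <| by
    rw [Fintype.bijective_iff_injective_and_card]
    constructor
    · rintro ((i | i) | i) ((j | j) | j) hij <;>
        simp only [Sum.elim_inl, Sum.elim_inr, Fin.ext_iff, evenIndex_apply] at hij <;>
        simp only [Sum.inl.injEq, Sum.inr.injEq, reduceCtorEq, Fin.ext_iff] <;>
        have := i.2 <;> have := j.2 <;> omega
    · simp only [Fintype.card_sum, Fintype.card_fin]
      omega

theorem sq_le_coprimePermCount (n : ℕ) :
    (matchingCount fun i j : Fin (n / 2) =>
      ((i : ℕ) + 1).Coprime (2 * (j : ℕ) + (2 * (n % 2) + 1))) ^ 2 ≤ coprimePermCount n := by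
  rw [coprimePermCount_eq_matchingCount, ← matchingCount_comp_equiv (parityEquiv n)]
  refine sq_matchingCount_le_matchingCount_sum (fun _ _ => Nat.Coprime.symm) (fun i j hij => ?_)
    fun k => Nat.coprime_one_left _
  change (2 * (i : ℕ) + 1 + 1).Coprime (2 * j + 2 * (n % 2) + 1)
  rw [show 2 * (i : ℕ) + 1 + 1 = 2 * (i + 1) by ring, add_assoc]
  exact Nat.Coprime.mul_left (Nat.coprime_two_left.2 ⟨j + n % 2, by ring⟩) hij

theorem factorial_sq_mul_centralBinom (h : ℕ) :
    h.centralBinom * h.factorial ^ 2 = (2 * h).factorial := by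
  have := Nat.choose_mul_factorial_mul_factorial (Nat.le_mul_of_pos_left h two_pos)
  rwa [show 2 * h - h = h by omega, mul_assoc, ← sq] at this

theorem four_pow_mul_factorial_sq_le {n : ℕ} (hn : 1 ≤ n) :
    4 ^ ((n + 1) / 2) * ((n + 1) / 2).factorial ^ 2 ≤ (n + 1) ^ 2 * n.factorial := by
  set h := (n + 1) / 2
  calc 4 ^ h * h.factorial ^ 2
    _ ≤ 2 * h * h.centralBinom * h.factorial ^ 2 :=
        Nat.mul_le_mul_right _ (Nat.four_pow_le_two_mul_self_mul_centralBinom h (by omega))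
    _ = 2 * h * (2 * h).factorial := by rw [← factorial_sq_mul_centralBinom h, mul_assoc]
    _ ≤ (n + 1) * (n + 1).factorial :=
        Nat.mul_le_mul (by omega) (Nat.factorial_le (by omega))
    _ = (n + 1) ^ 2 * n.factorial := by
        rw [Nat.factorial_succ]
        ring

theorem factorial_le_four_pow_mul_factorial_sq {n : ℕ} (hn : 1 ≤ n) :
    n.factorial ≤ n * (4 ^ (n / 2) * (n / 2).factorial ^ 2) := by
  have hle : n.factorial ≤ n * (2 * (n / 2)).factorial := by
    rcases Nat.even_or_odd' n with ⟨h, rfl | rfl⟩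
    · rw [Nat.mul_div_cancel_left h two_pos]
      exact Nat.le_mul_of_pos_left _ hn
    · rw [show (2 * h + 1) / 2 = h by omega, Nat.factorial_succ]
  rw [← factorial_sq_mul_centralBinom] at hle
  refine hle.trans ?_
  gcongr
  exact Nat.centralBinom_le_four_pow _

end Parity

section Bounds

theorem mul_meanPrimeWeight_add_pow_le {h z : ℕ} (hh : h ≠ 0) (hz : 2 ≤ z) {e : ℝ} (he : 0 ≤ e) :
    (h * meanPrimeWeight z + e) ^ h ≤ (h * (2 * coprimeConst)) ^ h *
      exp (2 * h / ((z : ℝ) - 1) + e) *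
        (geomMeanPrimeWeight z ^ h * geomMeanPrimeWeight z ^ h) := by
  have hh' : (h : ℝ) ≠ 0 := Nat.cast_ne_zero.2 hh
  have hmean := one_le_meanPrimeWeight z
  have hc := coprimeConst_pos
  set δ := 2 / ((z : ℝ) - 1) with hδ
  have hle : h * meanPrimeWeight z + e ≤
      h * (2 * coprimeConst) * exp (δ + e / h) * (geomMeanPrimeWeight z * geomMeanPrimeWeight z) :=
    calc h * meanPrimeWeight z + e
      _ ≤ h * meanPrimeWeight z * (e / h + 1) := by
          rw [mul_add, mul_one, mul_right_comm, mul_div_cancel₀ _ hh', add_comm]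
          gcongr
          exact le_mul_of_one_le_right he hmean
      _ ≤ h * (2 * coprimeConst * exp δ * geomMeanPrimeWeight z ^ 2) * exp (e / h) := by
          gcongr
          · exact meanPrimeWeight_le_two_mul_coprimeConst_mul hz
          · exact add_one_le_exp _
      _ = _ := by
          rw [exp_add]
          ring
  calc (h * meanPrimeWeight z + e) ^ h
    _ ≤ _ := pow_le_pow_left₀ (by positivity) hle h
    _ = (h * (2 * coprimeConst)) ^ h * exp (δ + e / h) ^ h *
          (geomMeanPrimeWeight z ^ h * geomMeanPrimeWeight z ^ h) := by
        simp only [mul_pow]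
    _ = _ := by
        rw [← exp_nat_mul, mul_add, mul_div_cancel₀ _ hh', hδ, mul_div_left_comm, mul_div_assoc]

theorem OddEquidistributed.matchingCount_coprime_le {h z k E : ℕ} {a b : Fin h → ℕ}
    (ha : OddEquidistributed a) (hb : OddEquidistributed b) (i₀ : Fin h) (hz : 2 ≤ z)
    (hEa : #{i | smallOddFactors z (a i) ∉ sparseTypes z k} ≤ E)
    (hEb : #{j | smallOddFactors z (b j) ∉ sparseTypes z k} ≤ E) :
    (matchingCount fun i j => i = i₀ ∨ (a i).Coprime (b j) : ℝ) ≤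
      (exp 1 * h) ^ (z ^ k + E) * (z : ℝ) ^ (2 * E + 4) *
        exp (2 * h / ((z : ℝ) - 1) + 2 ^ k * (z : ℝ) ^ 2) *
          (h.factorial * (2 * coprimeConst) ^ h) := by
  have hh : h ≠ 0 := i₀.pos.ne'
  have hω := geomMeanPrimeWeight_pos z
  have hc := coprimeConst_pos
  refine le_of_mul_le_mul_right ((ha.matchingCount_coprime_mul_le hb i₀ hz hEa hEb).trans ?_)
    (show 0 < geomMeanPrimeWeight z ^ h * geomMeanPrimeWeight z ^ h by positivity)
  have hfact : exp (-h) * (h : ℝ) ^ h ≤ h.factorial := by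
    refine le_trans (le_of_eq ?_) (div_exp_one_pow_le_factorial h)
    rw [div_pow, ← exp_nat_mul, mul_one, exp_neg, div_eq_inv_mul]
  calc _
    _ ≤ (exp 1 * h) ^ (z ^ k + E) * exp (-h) * ((h * (2 * coprimeConst)) ^ h *
          exp (2 * h / ((z : ℝ) - 1) + 2 ^ k * (z : ℝ) ^ 2) *
          (geomMeanPrimeWeight z ^ h * geomMeanPrimeWeight z ^ h)) * (z : ℝ) ^ (2 * E + 4) := by
        gcongr
        exact mul_meanPrimeWeight_add_pow_le hh hz (by positivity)
    _ = (exp 1 * h) ^ (z ^ k + E) * (z : ℝ) ^ (2 * E + 4) *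
          exp (2 * h / ((z : ℝ) - 1) + 2 ^ k * (z : ℝ) ^ 2) *
          ((exp (-h) * h ^ h) * (2 * coprimeConst) ^ h) *
          (geomMeanPrimeWeight z ^ h * geomMeanPrimeWeight z ^ h) := by
        rw [mul_pow (h : ℝ)]
        ring
    _ ≤ _ := by gcongr

theorem coprimePermCount_le_of_matchingCount_le {n : ℕ} {X : ℝ} (i₀ : Fin ((n + 1) / 2))
    (hi₀ : (i₀ : ℕ) + 1 = (n + 1) / 2)
    (hX : (matchingCount fun i j : Fin ((n + 1) / 2) =>
      i = i₀ ∨ ((i : ℕ) + 1).Coprime (2 * (j : ℕ) + 1)) ≤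
        X * (((n + 1) / 2).factorial * (2 * coprimeConst) ^ ((n + 1) / 2))) :
    (coprimePermCount n : ℝ) ≤ n.factorial * coprimeConst ^ n * ((n + 1) * X) ^ 2 := by
  have hpow : coprimeConst ^ (2 * ((n + 1) / 2)) ≤ coprimeConst ^ n :=
    pow_le_pow_of_le_one coprimeConst_pos.le coprimeConst_le_one (by omega)
  have hfact : (4 : ℝ) ^ ((n + 1) / 2) * (((n + 1) / 2).factorial : ℝ) ^ 2 ≤
      (n + 1) ^ 2 * n.factorial := by
    exact_mod_cast four_pow_mul_factorial_sq_le (n := n) (by omega)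
  have hc := coprimeConst_pos
  calc (coprimePermCount n : ℝ)
    _ ≤ (matchingCount fun i j : Fin ((n + 1) / 2) =>
          i = i₀ ∨ ((i : ℕ) + 1).Coprime (2 * (j : ℕ) + 1) : ℝ) ^ 2 := by
        exact_mod_cast coprimePermCount_le_sq i₀ hi₀
    _ ≤ (X * (((n + 1) / 2).factorial * (2 * coprimeConst) ^ ((n + 1) / 2))) ^ 2 := by gcongr
    _ = (4 ^ ((n + 1) / 2) * (((n + 1) / 2).factorial : ℝ) ^ 2) *
          coprimeConst ^ (2 * ((n + 1) / 2)) * X ^ 2 := by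
        rw [show (4 : ℝ) = 2 ^ 2 by norm_num, ← pow_mul, pow_mul coprimeConst]
        ring
    _ ≤ ((n + 1) ^ 2 * n.factorial) * coprimeConst ^ n * X ^ 2 := by gcongr
    _ = _ := by ring

theorem coprimePermCount_le {n H z k E : ℕ} (hn : 1 ≤ n) (hH : H = (n + 1) / 2) (hz : 2 ≤ z)
    {y s : ℝ} (hy : 1 ≤ y) (hs : ∑ p ∈ oddPrimes z, 1 / (p : ℝ) ≤ s)
    (hE : 3 * H * exp (y * s) / y ^ k ≤ E) :
    (coprimePermCount n : ℝ) ≤ n.factorial * coprimeConst ^ n *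
      ((n + 1) * ((exp 1 * H) ^ (z ^ k + E) * (z : ℝ) ^ (2 * E + 4) *
        exp (2 * H / ((z : ℝ) - 1) + 2 ^ k * (z : ℝ) ^ 2))) ^ 2 := by
  subst hH
  have ha := oddEquidistributed_add_one ((n + 1) / 2)
  have hb := oddEquidistributed_two_mul_add (h := (n + 1) / 2) le_rfl (by norm_num : 1 ≤ 3)
  refine coprimePermCount_le_of_matchingCount_le ⟨(n + 1) / 2 - 1, by omega⟩
    (Nat.sub_add_cancel (by omega)) (ha.matchingCount_coprime_le hb _ hz ?_ ?_)
  · exact Nat.cast_le.1 ((ha.card_notMem_sparseTypes_le hy hs).trans hE)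
  · exact Nat.cast_le.1 ((hb.card_notMem_sparseTypes_le hy hs).trans hE)

theorem AdmissibleParameters.ne_zero {h z k R N : ℕ} {E s : ℝ}
    (hpar : AdmissibleParameters h z k R N E s) : h ≠ 0 := by
  have : 0 < (z : ℝ) := Nat.cast_pos.2 (two_pos.trans_le hpar.two_le_z)
  exact Nat.cast_pos.1 (lt_of_lt_of_le (by positivity) hpar.error_le) |>.ne'

theorem OddEquidistributed.factorial_mul_pow_le_matchingCount_coprime_mul {h z k R : ℕ}
    {a b : Fin h → ℕ} (ha : OddEquidistributed a) (hb : OddEquidistributed b)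
    (hodd : ∀ j, Odd (b j)) {P : Finset ℕ} {E s : ℝ} (hPa : IsLargePrimeSet a z P)
    (hPb : IsLargePrimeSet b z P) (hpar : AdmissibleParameters h z k R #P E s)
    (hEa : (#{i | smallOddFactors z (a i) ∉ sparseTypes z k} : ℝ) ≤ E)
    (hEb : (#{j | smallOddFactors z (b j) ∉ sparseTypes z k} : ℝ) ≤ E) :
    h.factorial * (2 * coprimeConst) ^ h ≤ matchingCount (fun i j => (a i).Coprime (b j)) *
      (exp 1 * h * (3 * h : ℝ) ^ (6 * R) * (z : ℝ) ^ 2) := by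
  have hz := hpar.two_le_z
  have hh := hpar.ne_zero
  have hω := geomMeanPrimeWeight_pos z
  have hc := coprimeConst_pos
  have hle : (h / exp 1 : ℝ) ^ h * (2 * coprimeConst) ^ h ≤
      matchingCount (fun i j => (a i).Coprime (b j)) * (3 * h : ℝ) ^ (6 * R) * (z : ℝ) ^ 2 := by
    refine le_of_mul_le_mul_right ?_
      (show 0 < geomMeanPrimeWeight z ^ h * geomMeanPrimeWeight z ^ h by positivity)
    calc _
      _ = (h * (2 * coprimeConst * geomMeanPrimeWeight z ^ 2) / exp 1) ^ h := by
          simp only [mul_pow, div_pow]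
          ring
      _ ≤ (h * meanPrimeWeight z / exp 1) ^ h := by
          gcongr
          exact two_mul_coprimeConst_mul_le_meanPrimeWeight hz
      _ ≤ _ := ha.le_matchingCount_coprime_mul hb hodd hPa hPb hpar hEa hEb
      _ = _ := by ring
  calc _
    _ ≤ (exp 1 * h * (h / exp 1 : ℝ) ^ h) * (2 * coprimeConst) ^ h := by
        gcongr
        exact factorial_le_exp_one_mul_div_exp_one_pow hh
    _ = exp 1 * h * ((h / exp 1 : ℝ) ^ h * (2 * coprimeConst) ^ h) := mul_assoc _ _ _
    _ ≤ exp 1 * h * (matchingCount (fun i j => (a i).Coprime (b j)) * (3 * h : ℝ) ^ (6 * R) *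
          (z : ℝ) ^ 2) := by gcongr
    _ = _ := by ring

theorem le_coprimePermCount_of_le_matchingCount {n : ℕ} (hn : 1 ≤ n) {X : ℝ}
    (hX : (n / 2).factorial * (2 * coprimeConst) ^ (n / 2) ≤
      matchingCount (fun i j : Fin (n / 2) =>
        ((i : ℕ) + 1).Coprime (2 * (j : ℕ) + (2 * (n % 2) + 1))) * X) :
    n.factorial * coprimeConst ^ n ≤ coprimePermCount n * (n * X ^ 2) := by
  have hfact : (n.factorial : ℝ) ≤ n * (4 ^ (n / 2) * ((n / 2).factorial : ℝ) ^ 2) := by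
    exact_mod_cast factorial_le_four_pow_mul_factorial_sq hn
  have hpow : coprimeConst ^ n ≤ coprimeConst ^ (2 * (n / 2)) :=
    pow_le_pow_of_le_one coprimeConst_pos.le coprimeConst_le_one (by omega)
  have hsq : (matchingCount (fun i j : Fin (n / 2) =>
      ((i : ℕ) + 1).Coprime (2 * (j : ℕ) + (2 * (n % 2) + 1))) : ℝ) ^ 2 ≤ coprimePermCount n := by
    exact_mod_cast sq_le_coprimePermCount n
  have hc := coprimeConst_pos
  set h := n / 2
  calc _
    _ ≤ n * (4 ^ h * (h.factorial : ℝ) ^ 2) * coprimeConst ^ (2 * h) := by gcongr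
    _ = n * (h.factorial * (2 * coprimeConst) ^ h) ^ 2 := by
        rw [show (4 : ℝ) = 2 ^ 2 by norm_num, ← pow_mul, pow_mul coprimeConst]
        ring
    _ ≤ n * (matchingCount (fun i j : Fin h =>
          ((i : ℕ) + 1).Coprime (2 * (j : ℕ) + (2 * (n % 2) + 1))) * X) ^ 2 := by gcongr
    _ = matchingCount (fun i j : Fin h =>
          ((i : ℕ) + 1).Coprime (2 * (j : ℕ) + (2 * (n % 2) + 1))) ^ 2 * (n * X ^ 2) := by ring
    _ ≤ _ := by gcongr

theorem le_coprimePermCount {n h z k R : ℕ} (hn : 1 ≤ n) (hh : h = n / 2) {E s y : ℝ}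
    (hpar : AdmissibleParameters h z k R #(reservedPrimes z h) E s) (hy : 1 ≤ y)
    (hE : 3 * h * exp (y * s) / y ^ k ≤ E) :
    n.factorial * coprimeConst ^ n ≤ coprimePermCount n *
      (n * (exp 1 * h * (3 * h : ℝ) ^ (6 * R) * (z : ℝ) ^ 2) ^ 2) := by
  subst hh
  have hs := hpar.sum_one_div_le
  have hc : Odd (2 * (n % 2) + 1) := odd_two_mul_add_one _
  have ha := oddEquidistributed_add_one (n / 2)
  have hb := oddEquidistributed_two_mul_add (h := n / 2) (c := 2 * (n % 2) + 1) (by omega)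
    (by omega)
  exact le_coprimePermCount_of_le_matchingCount hn <|
    ha.factorial_mul_pow_le_matchingCount_coprime_mul hb (fun _ => (even_two_mul _).add_odd hc)
      (isLargePrimeSet_reservedPrimes_add_one _ z)
      (isLargePrimeSet_reservedPrimes_two_mul_add hpar.two_le_z hc (by omega))
      hpar ((ha.card_notMem_sparseTypes_le hy hs).trans hE)
      ((hb.card_notMem_sparseTypes_le hy hs).trans hE)

end Bounds

section Parameters

/-- The reciprocal of the error term `exp (-δ * √(log n * log (log n)))` with `δ = 1 / 320`; all
losses turn out to be bounded by powers of it. -/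
noncomputable def errorScale (n : ℕ) : ℝ :=
  exp (√(log n * log (log n)) / 320)

theorem log_pos_of_log_log_pos {n : ℕ} (h : 0 < log (log n)) : 0 < log n :=
  (log_natCast_nonneg n).lt_of_ne fun h0 => by simp [← h0] at h

theorem add_one_le_exp_div_eight {m : ℝ} (hm : 1000 ≤ m) : m + 1 ≤ exp (m / 8) := by
  have := quadratic_le_exp_of_nonneg (x := m / 8) (by linarith)
  nlinarith

theorem exp_log_div_two_le_sqrt_mul_log {l : ℝ} (hl : 0 < l) (hm : 1000 ≤ log l) :
    exp (log l / 2) ≤ √(l * log l) := by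
  refine le_sqrt_of_sq_le ?_
  rw [← exp_nat_mul, Nat.cast_ofNat, mul_div_cancel₀ _ two_ne_zero, exp_log hl]
  nlinarith

theorem mul_log_add_one_le_sqrt_mul_log {l : ℝ} (hl : 0 < l) (hm : 1000 ≤ log l) :
    1000 ^ 3 * (log l + 1) ≤ √(l * log l) :=
  calc 1000 ^ 3 * (log l + 1)
    _ ≤ (log l + 1) ^ 3 * (log l + 1) := by
        gcongr
        linarith
    _ = (log l + 1) ^ 4 := (pow_succ _ 3).symm
    _ ≤ exp (log l / 8) ^ 4 :=
        pow_le_pow_left₀ (by linarith) (add_one_le_exp_div_eight hm) 4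
    _ = exp (log l / 2) := by
        rw [← exp_nat_mul]
        ring_nf
    _ ≤ √(l * log l) := exp_log_div_two_le_sqrt_mul_log hl hm

theorem sqrt_mul_log_le {l : ℝ} (hl : 0 < l) (hm : 1000 ≤ log l) : √(l * log l) ≤ l := by
  refine sqrt_le_iff.2 ⟨hl.le, ?_⟩
  have := log_le_sub_one_of_pos hl
  nlinarith

theorem exists_two_pow_between {x : ℝ} (hx : 1000 ≤ x) : ∃ L : ℕ, (L : ℝ) ≤ x ∧
    exp (x / 320) ^ 19 ≤ 2 ^ (L + 1) ∧ 2 ^ (L + 1) ≤ exp (x / 320) ^ 20 := by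
  have hexp : x / 320 + 1 ≤ exp (x / 320) := add_one_le_exp _
  obtain ⟨M, hM, hM'⟩ :=
    exists_nat_pow_near (one_le_pow₀ (show 1 ≤ exp (x / 320) by linarith) (n := 20)) one_lt_two
  have hpow : 2 * exp (x / 320) ^ 19 ≤ exp (x / 320) ^ 20 := by
    rw [pow_succ' _ 19]
    gcongr
    linarith
  obtain ⟨L, rfl⟩ : ∃ L, M = L + 1 := Nat.exists_eq_succ_of_ne_zero <| by
    rintro rfl
    have : 1 ≤ exp (x / 320) ^ 19 := one_le_pow₀ (by linarith)
    linarith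
  refine ⟨L, ?_, ?_, hM⟩
  · have hlog := log_le_log (by positivity) hM
    rw [log_pow, log_pow, log_exp] at hlog
    push_cast at hlog
    nlinarith [log_two_gt_d9]
  · rw [pow_succ (2 : ℝ)] at hM'
    linarith

theorem exists_nat_mul_between {l x : ℝ} (hx : 0 < x) (hxl : x ≤ l) :
    ∃ k : ℕ, 1 ≤ k ∧ k * x ≤ 4 * l ∧ 4 * l ≤ (k + 1) * x := by
  refine ⟨⌊4 * l / x⌋₊, Nat.le_floor ?_, ?_, ?_⟩
  · rw [Nat.cast_one, le_div_iff₀ hx]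
    linarith
  · rw [← le_div_iff₀ hx]
    exact Nat.floor_le (div_nonneg (by linarith) hx.le)
  · rw [← div_le_iff₀ hx]
    exact (Nat.lt_floor_add_one _).le

theorem exp_exp_mul_div_exp_pow_le {l m x s : ℝ} {k : ℕ} (hm : 1000 ≤ m) (hmx : exp (m / 2) ≤ x)
    (hsq : x * x = l * m) (hk : 4 * l ≤ (k + 1) * x) (hs : s ≤ 4 * (m + 1)) :
    exp (exp (m / 8) * s) / exp (m / 8) ^ k ≤ exp (-(x / 4)) := by
  have hx : 0 < x := (exp_pos _).trans_le hmx
  rw [← exp_nat_mul, ← exp_sub]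
  refine exp_le_exp.2 ?_
  have hgain : x / 2 - m / 8 ≤ k * (m / 8) := by
    have : 4 * x ≤ (k + 1) * m := by
      refine le_of_mul_le_mul_right ?_ hx
      nlinarith
    linarith
  have hv := add_one_le_exp_div_eight hm
  set v := exp (m / 8) with hvdef
  have hv4 : v ^ 4 ≤ x := by
    rw [hvdef, ← exp_nat_mul]
    convert hmx using 2
    push_cast
    ring
  have hcost : v * s + m / 8 ≤ x / 4 := by
    have : 1000 * 1000 * (v * v) ≤ v * v * (v * v) := by gcongr <;> linarith
    nlinarith
  linarith

/-- Parameters for which all losses in the bounds for `coprimePermCount n` are small, measured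
by a scale `u`: primes up to `z` are small, types with fewer than `k` primes are sparse, `s`
bounds the sum of the reciprocals of the small primes, `y` is the base of the exponential
moment, and `S = n / u ^ 80`. -/
structure ScaleParameters (n z k : ℕ) (s y u S : ℝ) : Prop where
  thousand_le : 1000 ≤ u
  log_le : log n ≤ u
  natCast_eq : (n : ℝ) = S * u ^ 80
  pow_le : u ^ 19 ≤ z
  le_pow : z ≤ u ^ 20
  one_le_k : 1 ≤ k
  pow_mul_le : (z : ℝ) ^ (2 * k) * u ^ 20 ≤ S
  sum_one_div_le : ∑ p ∈ oddPrimes z, 1 / (p : ℝ) ≤ s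
  exp_le : exp s ≤ u
  one_le_y : 1 ≤ y
  exp_mul_div_pow_le : exp (y * s) / y ^ k ≤ 1 / u ^ 80

theorem thousand_le_errorScale {n : ℕ} (hm : 1000 ≤ log (log n)) : 1000 ≤ errorScale n := by
  have := mul_log_add_one_le_sqrt_mul_log (log_pos_of_log_log_pos (by linarith)) hm
  have := add_one_le_exp (√(log n * log (log n)) / 320)
  unfold errorScale
  linarith

theorem log_log_div_le_errorScale {n : ℕ} (hm : 1000 ≤ log (log n)) :
    log (log n) / 320 ≤ errorScale n := by
  have := mul_log_add_one_le_sqrt_mul_log (log_pos_of_log_log_pos (by linarith)) hm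
  have := add_one_le_exp (√(log n * log (log n)) / 320)
  unfold errorScale
  linarith

theorem log_le_errorScale {n : ℕ} (hm : 1000 ≤ log (log n)) : log n ≤ errorScale n := by
  have hl := log_pos_of_log_log_pos (by linarith : 0 < log (log n))
  have := mul_log_add_one_le_sqrt_mul_log hl hm
  rw [errorScale, ← log_le_iff_le_exp hl]
  linarith

theorem pow_mul_errorScale_pow_le {n k : ℕ} {z : ℝ} (hm : 1000 ≤ log (log n)) (hz₀ : 0 ≤ z)
    (hz : z ≤ errorScale n ^ 20) (hk : k * √(log n * log (log n)) ≤ 4 * log n) :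
    z ^ (2 * k) * errorScale n ^ 100 ≤ n := by
  have hl := log_pos_of_log_log_pos (by linarith : 0 < log (log n))
  have hn : (0 : ℝ) < n := Nat.cast_pos.2 <| Nat.pos_of_ne_zero <| by
    rintro rfl
    simp at hl
  have hxl := sqrt_mul_log_le hl hm
  calc z ^ (2 * k) * errorScale n ^ 100
    _ ≤ (errorScale n ^ 20) ^ (2 * k) * errorScale n ^ 100 := by
        have : 0 ≤ errorScale n := (exp_pos _).le
        gcongr
    _ = exp (k * √(log n * log (log n)) / 8 + 5 / 16 * √(log n * log (log n))) := by
        rw [← pow_mul, ← pow_add, errorScale, ← exp_nat_mul]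
        push_cast
        ring_nf
    _ ≤ exp (log n) := exp_le_exp.2 (by linarith)
    _ = n := exp_log hn

theorem exists_scaleParameters {n : ℕ} (hm : 1000 ≤ log (log n)) :
    ∃ (z k : ℕ) (s y S : ℝ), ScaleParameters n z k s y (errorScale n) S := by
  have hl := log_pos_of_log_log_pos (by linarith : 0 < log (log n))
  have hx := mul_log_add_one_le_sqrt_mul_log hl hm
  have hxl := sqrt_mul_log_le hl hm
  have hu : 0 < errorScale n := exp_pos _
  obtain ⟨L, hL, hL₁, hL₂⟩ := exists_two_pow_between (x := √(log n * log (log n))) (by linarith)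
  obtain ⟨k, hk, hk₁, hk₂⟩ := exists_nat_mul_between (by linarith) hxl
  have hlogL : log L ≤ log (log n) := by
    rcases L.eq_zero_or_pos with rfl | hpos
    · rw [Nat.cast_zero, log_zero]
      linarith
    · exact log_le_log (Nat.cast_pos.2 hpos) (hL.trans hxl)
  refine ⟨2 ^ (L + 1), k, 4 * (1 + log L), exp (log (log n) / 8), n / errorScale n ^ 80,
    thousand_le_errorScale hm, log_le_errorScale hm, by field_simp, mod_cast hL₁, mod_cast hL₂, hk,
    ?_, sum_oddPrimes_two_pow_one_div_le L, exp_le_exp.2 (by linarith),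
    one_le_exp (by linarith), ?_⟩
  · rw [le_div_iff₀ (by positivity), mul_assoc, ← pow_add]
    exact pow_mul_errorScale_pow_le hm (by positivity) (mod_cast hL₂) hk₁
  · refine (exp_exp_mul_div_exp_pow_le hm (exp_log_div_two_le_sqrt_mul_log hl hm)
      (mul_self_sqrt (by nlinarith)) hk₂ (by linarith)).trans_eq ?_
    rw [errorScale, ← exp_nat_mul, one_div, ← exp_neg]
    push_cast
    ring_nf

end Parameters

theorem two_mul_natCast_half_le (n : ℕ) : 2 * ((n / 2 : ℕ) : ℝ) ≤ n :=
  mod_cast Nat.mul_div_le n 2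

namespace ScaleParameters

variable {n z k : ℕ} {s y u S : ℝ} (hp : ScaleParameters n z k s y u S)

include hp

theorem one_le_u : 1 ≤ u :=
  (by norm_num : (1 : ℝ) ≤ 1000).trans hp.thousand_le

theorem one_le_z : (1 : ℝ) ≤ z :=
  (one_le_pow₀ hp.one_le_u).trans hp.pow_le

theorem two_le_z : 2 ≤ z :=
  Nat.ofNat_le_cast.1 (((by norm_num : (2 : ℝ) ≤ 1000).trans hp.thousand_le).trans
    ((le_self_pow₀ hp.one_le_u (by norm_num)).trans hp.pow_le))

theorem u_pow_le_S : u ^ 20 ≤ S :=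
  have hu : 0 ≤ u ^ 20 := pow_nonneg (zero_le_one.trans hp.one_le_u) _
  (le_mul_of_one_le_left hu (one_le_pow₀ hp.one_le_z)).trans hp.pow_mul_le

theorem one_le_S : 1 ≤ S :=
  (one_le_pow₀ hp.one_le_u).trans hp.u_pow_le_S

theorem z_pow_le_S : (z : ℝ) ^ (2 * k) ≤ S :=
  (le_mul_of_one_le_right (by positivity) (one_le_pow₀ hp.one_le_u)).trans hp.pow_mul_le

theorem one_le_S_mul_u_pow (i : ℕ) : 1 ≤ S * u ^ i :=
  one_le_mul_of_one_le_of_one_le hp.one_le_S (one_le_pow₀ hp.one_le_u)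

theorem thousand_mul_le {i j : ℕ} (hij : i < j) : 1000 * (S * u ^ i) ≤ S * u ^ j := by
  have hu := hp.one_le_u
  have hS := hp.one_le_S
  calc 1000 * (S * u ^ i)
    _ ≤ u * (S * u ^ i) := by
        gcongr
        exact hp.thousand_le
    _ = S * u ^ (i + 1) := by ring
    _ ≤ S * u ^ j := by
        gcongr
        exact hij

theorem thousand_le_n : 1000 ≤ n := by
  have h1 := hp.thousand_mul_le (show 0 < 80 by norm_num)
  have h2 := hp.one_le_S_mul_u_pow 0
  have : (1000 : ℝ) ≤ n := by linarith [hp.natCast_eq]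
  exact_mod_cast this

theorem natCast_le_exp : (n : ℝ) ≤ exp u := by
  have : (0 : ℝ) < n := Nat.cast_pos.2 (by linarith [hp.thousand_le_n])
  rw [← log_le_iff_le_exp this]
  exact hp.log_le

theorem thousand_le_exp : 1000 ≤ exp u :=
  hp.thousand_le.trans (by linarith [add_one_le_exp u])

theorem z_le_exp : (z : ℝ) ≤ exp (20 * u) := by
  have hu := hp.one_le_u
  calc (z : ℝ)
    _ ≤ u ^ 20 := hp.le_pow
    _ ≤ exp u ^ 20 := by
        gcongr
        linarith [add_one_le_exp u]
    _ = exp (20 * u) := by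
        rw [← exp_nat_mul]
        norm_num

theorem two_pow_mul_z_sq_le : 2 ^ k * (z : ℝ) ^ 2 ≤ S * u ^ 20 := by
  have hz : (2 : ℝ) ≤ z := Nat.ofNat_le_cast.2 hp.two_le_z
  have hu := hp.one_le_u
  calc 2 ^ k * (z : ℝ) ^ 2
    _ ≤ z ^ k * (u ^ 20) ^ 2 := by
        gcongr
        exact hp.le_pow
    _ ≤ z ^ (2 * k) * (u ^ 20) ^ 2 := by
        gcongr
        exacts [hp.one_le_z, Nat.le_mul_of_pos_left k two_pos]
    _ = z ^ (2 * k) * u ^ 20 * u ^ 20 := by ring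
    _ ≤ S * u ^ 20 := by
        gcongr
        exact hp.pow_mul_le

theorem exceptional_le {h : ℕ} (hh : h ≤ n) : 3 * h * exp (y * s) / y ^ k ≤ 3 * S := by
  have hu : u ≠ 0 := (zero_lt_one.trans_le hp.one_le_u).ne'
  calc 3 * h * exp (y * s) / y ^ k
    _ = 3 * h * (exp (y * s) / y ^ k) := mul_div_assoc _ _ _
    _ ≤ 3 * n * (1 / u ^ 80) := by
        have := hp.one_le_y
        exact mul_le_mul (by gcongr) hp.exp_mul_div_pow_le (by positivity) (by positivity)
    _ = 3 * S := by
        rw [hp.natCast_eq]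
        field_simp

theorem div_le_of_le {x w c : ℝ} (hw : u ^ 19 ≤ c * w) (hw₀ : 0 < w) (hx : x ≤ n) :
    x / w ≤ c * (S * u ^ 61) := by
  rw [div_le_iff₀ hw₀]
  have hu := hp.one_le_u
  have hS := hp.one_le_S
  calc x
    _ ≤ S * u ^ 61 * u ^ 19 := by
        rw [mul_assoc, ← pow_add, ← hp.natCast_eq]
        exact hx
    _ ≤ S * u ^ 61 * (c * w) := by gcongr
    _ = _ := by ring

theorem two_mul_div_le {h : ℕ} (hh : h ≤ n) : 2 * h / ((z : ℝ) - 1) ≤ 4 * (S * u ^ 61) := by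
  have hz : (2 : ℝ) ≤ z := Nat.ofNat_le_cast.2 hp.two_le_z
  have := hp.div_le_of_le (c := 2) (w := z - 1) (by linarith [hp.pow_le]) (by linarith)
    (Nat.cast_le.2 hh)
  rw [mul_div_assoc]
  linarith

theorem exp_one_mul_le_exp {h : ℕ} (hh : h ≤ n) : exp 1 * h ≤ exp (2 * u) := by
  rw [two_mul, exp_add]
  gcongr
  exacts [hp.one_le_u, (Nat.cast_le.2 hh).trans hp.natCast_le_exp]

theorem upper_factor_le_exp {H E : ℕ} (hH : 2 * H ≤ n + 1) (hE : (E : ℝ) ≤ 4 * S) :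
    (n + 1) * ((exp 1 * H) ^ (z ^ k + E) * (z : ℝ) ^ (2 * E + 4) *
      exp (2 * H / ((z : ℝ) - 1) + 2 ^ k * (z : ℝ) ^ 2)) ≤ exp (S * u ^ 62) := by
  have hu := hp.one_le_u
  have hS := hp.one_le_S
  have hn := hp.natCast_le_exp
  have hexp := hp.thousand_le_exp
  have hH' : H ≤ n := by linarith [hp.thousand_le_n]
  have hn1 : (n : ℝ) + 1 ≤ exp (2 * u) := by
    rw [two_mul, exp_add]
    nlinarith
  have heH := hp.exp_one_mul_le_exp hH'
  have hzk : (z : ℝ) ^ k ≤ S :=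
    (pow_le_pow_right₀ hp.one_le_z (Nat.le_mul_of_pos_left k two_pos)).trans hp.z_pow_le_S
  have hzexp := hp.z_le_exp
  have herr := add_le_add (hp.two_mul_div_le hH') hp.two_pow_mul_z_sq_le
  calc _
    _ ≤ exp (2 * u) * (exp (2 * u) ^ (z ^ k + E) * exp (20 * u) ^ (2 * E + 4) *
          exp (4 * (S * u ^ 61) + S * u ^ 20)) := by
        gcongr
    _ = exp ((2 + 2 * (z ^ k + E) + 20 * (2 * E + 4)) * u + (4 * (S * u ^ 61) + S * u ^ 20)) := by
        simp only [← exp_nat_mul, ← exp_add]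
        push_cast
        ring_nf
    _ ≤ exp (252 * S * u + (4 * (S * u ^ 61) + S * u ^ 20)) := by
        gcongr
        linarith
    _ ≤ exp (S * u ^ 62) := exp_le_exp.2 <| by
        have := hp.one_le_S_mul_u_pow 61
        linarith [hp.thousand_mul_le (show 1 < 61 by norm_num),
          hp.thousand_mul_le (show 20 < 61 by norm_num),
          hp.thousand_mul_le (show 61 < 62 by norm_num)]

theorem coprimePermCount_le :
    (coprimePermCount n : ℝ) ≤ n.factorial * coprimeConst ^ n * exp (n / (2 * u)) := by
  have hu := hp.one_le_u
  have hS := hp.one_le_S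
  have hn := hp.thousand_le_n
  have hc := coprimeConst_pos
  have hceil : (⌈3 * S⌉₊ : ℝ) ≤ 4 * S :=
    (Nat.ceil_lt_add_one (by linarith)).le.trans (by linarith)
  refine (_root_.coprimePermCount_le (by omega) rfl hp.two_le_z hp.one_le_y hp.sum_one_div_le
    ((hp.exceptional_le (by omega)).trans (Nat.le_ceil _))).trans ?_
  gcongr
  calc _
    _ ≤ exp (S * u ^ 62) ^ 2 := by
        have := hp.one_le_z
        gcongr
        exact hp.upper_factor_le_exp (by omega) hceil
    _ = exp (2 * (S * u ^ 62)) := by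
        rw [← exp_nat_mul, Nat.cast_ofNat]
    _ ≤ exp (n / (2 * u)) := exp_le_exp.2 <| by
        rw [le_div_iff₀ (by positivity), hp.natCast_eq]
        linarith [hp.thousand_mul_le (show 63 < 80 by norm_num), hp.one_le_S_mul_u_pow 63]

theorem natCast_le_three_mul_half : (n : ℝ) ≤ 3 * (n / 2 : ℕ) := by
  have := hp.thousand_le_n
  exact_mod_cast (show n ≤ 3 * (n / 2) by omega)

theorem half_mul_log_two_sub_div_ge : S * u ^ 79 / 5 ≤
    ((n / 2 : ℕ) * log 2 - log ((n / 2 : ℕ) + 1)) / log (n / 2 : ℕ) := by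
  have hS := hp.one_le_S
  have hu := hp.one_le_u
  have hge := hp.natCast_le_three_mul_half
  have hle := two_mul_natCast_half_le n
  have hn : (1000 : ℝ) ≤ n := Nat.ofNat_le_cast.2 hp.thousand_le_n
  set h : ℝ := ((n / 2 : ℕ) : ℝ)
  have hlog : log h ≤ u := (log_le_log (by linarith) (by linarith)).trans hp.log_le
  have hlog' : log (h + 1) ≤ u := (log_le_log (by linarith) (by linarith)).trans hp.log_le
  have hun : 1000 * u ≤ n := by
    rw [hp.natCast_eq]
    calc 1000 * u
      _ ≤ 1000 * (S * u ^ 1) := by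
          rw [pow_one]
          gcongr
          exact le_mul_of_one_le_left (by linarith) hS
      _ ≤ S * u ^ 80 := hp.thousand_mul_le (by norm_num)
  rw [le_div_iff₀ (log_pos (by linarith))]
  calc S * u ^ 79 / 5 * log h
    _ ≤ S * u ^ 79 / 5 * u := by gcongr
    _ = n / 5 := by
        rw [hp.natCast_eq]
        ring
    _ ≤ _ := by nlinarith [log_two_gt_d9]

theorem le_card_reservedPrimes : S * u ^ 79 / 8 ≤ #(reservedPrimes z (n / 2)) := by
  have hS := hp.one_le_S
  have hu := hp.one_le_u
  refine le_trans ?_ (_root_.le_card_reservedPrimes z (n / 2))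
  have hsqrt : √(2 * (n / 2 : ℕ) + 1) ≤ S * u ^ 78 := by
    refine sqrt_le_iff.2 ⟨by positivity, ?_⟩
    calc 2 * ((n / 2 : ℕ) : ℝ) + 1
      _ ≤ 1 * (1000 * n) := by
          linarith [two_mul_natCast_half_le n, hp.one_le_S_mul_u_pow 80, hp.natCast_eq]
      _ ≤ S * (S * u ^ 156) := by
          rw [hp.natCast_eq]
          exact mul_le_mul hS (hp.thousand_mul_le (by norm_num)) (by positivity) (by positivity)
      _ = (S * u ^ 78) ^ 2 := by ring
  have hz : (z : ℝ) ≤ S * u ^ 78 :=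
    hp.le_pow.trans (hp.u_pow_le_S.trans (le_mul_of_one_le_right (by positivity) (one_le_pow₀ hu)))
  linarith [hp.half_mul_log_two_sub_div_ge, hp.thousand_mul_le (show 78 < 79 by norm_num),
    hp.one_le_S_mul_u_pow 78]

theorem natLog_le : (Nat.log 2 (2 * (n / 2) + 1) : ℝ) ≤ 4 * u := by
  have hn := hp.thousand_le_n
  have hlog : (Nat.log 2 (2 * (n / 2) + 1) : ℝ) * log 2 ≤ log (2 * n) := by
    rw [← log_pow]
    refine log_le_log (by positivity) ?_
    have := Nat.pow_log_le_self 2 (Nat.succ_ne_zero (2 * (n / 2)))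
    exact_mod_cast this.trans (by omega)
  rw [log_mul two_ne_zero (by positivity)] at hlog
  nlinarith [log_two_gt_d9, log_two_lt_d9, hp.one_le_u, hp.log_le]

theorem natLog_mul_le :
    Nat.log 2 (2 * (n / 2) + 1) * (3 * (n / 2 : ℕ) / (z : ℝ)) ≤ 12 * (S * u ^ 62) := by
  have hu := hp.one_le_u
  have hdiv : (n / 2 : ℕ) / (z : ℝ) ≤ 1 * (S * u ^ 61) :=
    hp.div_le_of_le (by linarith [hp.pow_le]) (by linarith [hp.one_le_z])
      (Nat.cast_le.2 (Nat.div_le_self n 2))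
  calc Nat.log 2 (2 * (n / 2) + 1) * (3 * (n / 2 : ℕ) / (z : ℝ))
    _ ≤ 4 * u * (3 * (S * u ^ 61)) := by
        gcongr
        · exact hp.natLog_le
        · rw [mul_div_assoc]
          linarith
    _ = 12 * (S * u ^ 62) := by ring

theorem reserve_mul_le {R : ℝ} (hR : R ≤ 2 * (S * u ^ 65)) :
    (R + 1) * (3 * (n / 2 : ℕ)) ≤ #(reservedPrimes z (n / 2)) * (#(reservedPrimes z (n / 2)) -
      Nat.log 2 (2 * (n / 2) + 1) * (3 * (n / 2 : ℕ) / (z : ℝ))) := by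
  have hu := hp.one_le_u
  have hS := hp.one_le_S
  have hcard := hp.le_card_reservedPrimes
  have hsub : S * u ^ 79 / 16 ≤ #(reservedPrimes z (n / 2)) -
      Nat.log 2 (2 * (n / 2) + 1) * (3 * (n / 2 : ℕ) / (z : ℝ)) := by
    linarith [hp.natLog_mul_le, hp.thousand_mul_le (show 62 < 79 by norm_num),
      hp.one_le_S_mul_u_pow 62]
  calc (R + 1) * (3 * (n / 2 : ℕ))
    _ ≤ 3 * (S * u ^ 65) * (2 * (S * u ^ 80)) := by
        rw [← hp.natCast_eq]
        exact mul_le_mul (by linarith [hp.one_le_S_mul_u_pow 65])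
          (by linarith [two_mul_natCast_half_le n]) (by positivity) (by positivity)
    _ = 6 * (S * u ^ 65) * (S * u ^ 80) := by ring
    _ ≤ S * u ^ 78 / 128 * (S * u ^ 80) := by
        gcongr
        linarith [hp.thousand_mul_le (show 65 < 78 by norm_num), hp.one_le_S_mul_u_pow 65]
    _ = S * u ^ 79 / 8 * (S * u ^ 79 / 16) := by ring
    _ ≤ _ := by gcongr

theorem loss_le : 2 * (2 ^ k * (z : ℝ) ^ 2) + (1 + (z : ℝ) ^ 2) * (3 * S) +
    Nat.log 2 (2 * (n / 2) + 1) * (3 * (n / 2 : ℕ) / (z : ℝ)) * exp s + (z : ℝ) ^ (2 * k) + 2 ≤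
      S * u ^ 65 := by
  have hu := hp.one_le_u
  have hS := hp.one_le_S
  have hexceptional : (1 + (z : ℝ) ^ 2) * (3 * S) ≤ 6 * (S * u ^ 40) :=
    calc (1 + (z : ℝ) ^ 2) * (3 * S)
      _ ≤ (u ^ 40 + (u ^ 20) ^ 2) * (3 * S) := by
          gcongr
          exacts [one_le_pow₀ hu, hp.le_pow]
      _ = _ := by ring
  have hmultiples : Nat.log 2 (2 * (n / 2) + 1) * (3 * (n / 2 : ℕ) / (z : ℝ)) * exp s ≤
      12 * (S * u ^ 63) :=
    calc _
      _ ≤ 12 * (S * u ^ 62) * u :=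
          mul_le_mul hp.natLog_mul_le hp.exp_le (exp_pos s).le (by positivity)
      _ = _ := by ring
  linarith [hp.two_pow_mul_z_sq_le, hp.z_pow_le_S, hp.thousand_mul_le (show 0 < 20 by norm_num),
    hp.thousand_mul_le (show 20 < 65 by norm_num), hp.thousand_mul_le (show 40 < 65 by norm_num),
    hp.thousand_mul_le (show 63 < 65 by norm_num), hp.one_le_S_mul_u_pow 0,
    hp.one_le_S_mul_u_pow 40, hp.one_le_S_mul_u_pow 63]

theorem exists_admissibleParameters : ∃ R : ℕ, (R : ℝ) ≤ 2 * (S * u ^ 65) ∧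
    AdmissibleParameters (n / 2) z k R #(reservedPrimes z (n / 2)) (3 * S) s := by
  have hR : (⌈S * u ^ 65⌉₊ : ℝ) ≤ 2 * (S * u ^ 65) := by
    have := hp.one_le_S_mul_u_pow 65
    linarith [Nat.ceil_lt_add_one (zero_le_one.trans this)]
  refine ⟨⌈S * u ^ 65⌉₊, hR, hp.two_le_z, hp.one_le_k, ?_, ?_, hp.sum_one_div_le,
    hp.reserve_mul_le hR, hp.loss_le.trans (Nat.le_ceil _)⟩
  · refine Nat.cast_le.1 (hR.trans (le_trans ?_ hp.le_card_reservedPrimes))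
    linarith [hp.thousand_mul_le (show 65 < 79 by norm_num), hp.one_le_S_mul_u_pow 65]
  · refine hp.two_pow_mul_z_sq_le.trans ?_
    linarith [hp.thousand_mul_le (show 20 < 80 by norm_num), hp.natCast_eq,
      hp.natCast_le_three_mul_half, hp.one_le_S_mul_u_pow 20]

theorem lower_factor_le_exp {R : ℕ} (hR : (R : ℝ) ≤ 2 * (S * u ^ 65)) :
    n * (exp 1 * (n / 2 : ℕ) * (3 * (n / 2 : ℕ) : ℝ) ^ (6 * R) * (z : ℝ) ^ 2) ^ 2 ≤
      exp (n / u) := by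
  have hu := hp.one_le_u
  have hn := hp.natCast_le_exp
  have hexp := hp.thousand_le_exp
  have hz := hp.z_le_exp
  have heh := hp.exp_one_mul_le_exp (Nat.div_le_self n 2)
  have hh : 3 * ((n / 2 : ℕ) : ℝ) ≤ exp (2 * u) := by
    rw [two_mul, exp_add]
    gcongr
    · linarith
    · linarith [two_mul_natCast_half_le n]
  calc _
    _ ≤ exp u * (exp (2 * u) * exp (2 * u) ^ (6 * R) * exp (20 * u) ^ 2) ^ 2 := by gcongr
    _ = exp (85 * u + 24 * R * u) := by
        simp only [← exp_nat_mul, ← exp_add]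
        push_cast
        ring_nf
    _ ≤ exp (85 * (S * u ^ 1) + 48 * (S * u ^ 66)) := exp_le_exp.2 <| by
        have hSu : u ≤ S * u ^ 1 := by
          rw [pow_one]
          exact le_mul_of_one_le_left (by linarith) hp.one_le_S
        have : R * u ≤ 2 * (S * u ^ 65) * u := by gcongr
        linarith
    _ ≤ exp (S * u ^ 79) := exp_le_exp.2 <| by
        linarith [hp.thousand_mul_le (show 1 < 79 by norm_num),
          hp.thousand_mul_le (show 66 < 79 by norm_num), hp.one_le_S_mul_u_pow 79]
    _ = exp (n / u) := by
        rw [hp.natCast_eq]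
        field_simp

theorem le_coprimePermCount :
    n.factorial * coprimeConst ^ n ≤ coprimePermCount n * exp (n / u) := by
  obtain ⟨R, hR, hpar⟩ := hp.exists_admissibleParameters
  refine (_root_.le_coprimePermCount (by linarith [hp.thousand_le_n]) rfl hpar hp.one_le_y
    (hp.exceptional_le (Nat.div_le_self n 2))).trans ?_
  gcongr
  exact hp.lower_factor_le_exp hR

end ScaleParameters

theorem le_log_log_of_exp_exp_le {x M : ℝ} (h : exp (exp M) ≤ x) : M ≤ log (log x) := by
  have hlog : exp M ≤ log x := (le_log_iff_exp_le ((exp_pos _).trans_le h)).2 h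
  exact (le_log_iff_exp_le ((exp_pos _).trans_le hlog)).2 hlog

theorem mul_sub_pow_le_of_le_mul_exp {a C c η : ℝ} {n : ℕ} (ha : 0 ≤ a) (hc : c ≤ 1) (hη : 0 ≤ η)
    (hηc : η ≤ c) (h : a * c ^ n ≤ C * exp (n * η)) : a * (c - η) ^ n ≤ C := by
  have hle : c - η ≤ c * exp (-η) := by nlinarith [add_one_le_exp (-η)]
  calc a * (c - η) ^ n
    _ ≤ a * (c * exp (-η)) ^ n := by gcongr
    _ = a * c ^ n * exp (-(n * η)) := by
        rw [mul_pow, ← exp_nat_mul, mul_neg, mul_assoc]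
    _ ≤ C * exp (n * η) * exp (-(n * η)) := by gcongr
    _ = C := by rw [mul_assoc, ← exp_add, add_neg_cancel, exp_zero, mul_one]

theorem le_mul_add_pow_of_le_mul_exp {a C c η : ℝ} {n : ℕ} (ha : 0 ≤ a) (hc₀ : 0 ≤ c) (hc : c ≤ 1)
    (hη : 0 ≤ η) (hη₁ : η ≤ 1) (h : C ≤ a * c ^ n * exp (n * (η / 2))) :
    C ≤ a * (c + η) ^ n := by
  have hexp : exp (η / 2) ≤ 1 + η := by
    have := abs_le.1 (abs_exp_sub_one_le (x := η / 2) (by rw [abs_of_nonneg] <;> linarith))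
    rw [abs_of_nonneg (by linarith)] at this
    linarith
  have hle : c * exp (η / 2) ≤ c + η := by nlinarith
  calc C
    _ ≤ a * c ^ n * exp (n * (η / 2)) := h
    _ = a * (c * exp (η / 2)) ^ n := by rw [mul_pow, ← exp_nat_mul, mul_assoc]
    _ ≤ a * (c + η) ^ n := by gcongr

theorem exp_neg_mul_sqrt_eq_inv_errorScale (n : ℕ) :
    exp (-(1 / 320) * √(log n * log (log n))) = (errorScale n)⁻¹ := by
  rw [errorScale, ← exp_neg]
  ring_nf

theorem coprimePermCount_le_mul_add_inv_errorScale_pow {n : ℕ} (hm : 1000 ≤ log (log n)) :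
    (coprimePermCount n : ℝ) ≤ n.factorial * (coprimeConst + (errorScale n)⁻¹) ^ n := by
  obtain ⟨z, k, s, y, S, hp⟩ := exists_scaleParameters hm
  have hu := hp.one_le_u
  refine le_mul_add_pow_of_le_mul_exp (by positivity) coprimeConst_pos.le coprimeConst_le_one
    (by positivity) (inv_le_one_of_one_le₀ hu) (hp.coprimePermCount_le.trans_eq ?_)
  ring_nf

theorem mul_sub_inv_errorScale_pow_le_coprimePermCount {n : ℕ} (hm : 1000 ≤ log (log n))
    (hc : (errorScale n)⁻¹ ≤ coprimeConst) :
    n.factorial * (coprimeConst - (errorScale n)⁻¹) ^ n ≤ coprimePermCount n := by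
  obtain ⟨z, k, s, y, S, hp⟩ := exists_scaleParameters hm
  have hu := hp.one_le_u
  exact mul_sub_pow_le_of_le_mul_exp (by positivity) coprimeConst_le_one (by positivity) hc
    hp.le_coprimePermCount

theorem inv_errorScale_le {n : ℕ} {c : ℝ} (hc : 0 < c)
    (hm : max 1000 (320 / c) ≤ log (log n)) : (errorScale n)⁻¹ ≤ c := by
  refine inv_le_of_inv_le₀ hc (le_trans ?_ (log_log_div_le_errorScale ((le_max_left _ _).trans hm)))
  rw [le_div_iff₀ (by norm_num), inv_mul_eq_div]
  exact (le_max_right _ _).trans hm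

end

/-- `C(n) = n! · (c + exp(-Ω((log n · log log n)^{1/2})))^n`: there are `δ > 0` and `N`
such that for all `n ≥ N`,
`n!·(c − exp(−δ√(log n log log n)))^n ≤ C(n) ≤ n!·(c + exp(−δ√(log n log log n)))^n`. -/
theorem coprimePermCount_asymptotic :
    ∃ δ : ℝ, 0 < δ ∧ ∃ N : ℕ, ∀ n : ℕ, N ≤ n →
      (n.factorial : ℝ) *
          (coprimeConst - Real.exp (-δ * Real.sqrt (Real.log n * Real.log (Real.log n)))) ^ n
        ≤ (coprimePermCount n : ℝ) ∧
      (coprimePermCount n : ℝ) ≤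
        (n.factorial : ℝ) *
          (coprimeConst + Real.exp (-δ * Real.sqrt (Real.log n * Real.log (Real.log n)))) ^ n := by
  obtain ⟨N, hN⟩ := exists_nat_ge (exp (exp (max 1000 (320 / coprimeConst))))
  refine ⟨1 / 320, by norm_num, N, fun n hn => ?_⟩
  have hM := le_log_log_of_exp_exp_le (hN.trans (Nat.cast_le.2 hn))
  have hlog := (le_max_left _ _).trans hM
  rw [exp_neg_mul_sqrt_eq_inv_errorScale]
  have herr := inv_errorScale_le coprimeConst_pos hM
  exact ⟨mul_sub_inv_errorScale_pow_le_coprimePermCount hlog herr,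
    coprimePermCount_le_mul_add_inv_errorScale_pow hlog⟩
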